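/- Let n ≥ 3 be an integer and set S_{n,1} = (n(n−2)/4) · ( 2π^{(n+1)/2} / Γ((n+1)/2) )^{2/n}. There exists a constant C > 0 such that for every smooth compactly supported function u : ℝⁿ → ℝ, ∫_{ℝⁿ} |∇u|² dx − S_{n,1} ( ∫_{ℝⁿ} |u|^{2n/(n−2)} dx )^{(n−2)/n} ≥ C · inf { ∫_{ℝⁿ} |∇u − ∇v|² dx : v(x) = c(1 + λ²|x−x₀|²)^{−(n−2)/2} with c ∈ ℝ, λ > 0, x₀ ∈ ℝⁿ }. -/

import Mathlib

open scoped Real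


namespace BE

open MeasureTheory Filter Topology

/-- The ambient space `ℝⁿ` with `n = m + 2`. -/
abbrev X (m : ℕ) := EuclideanSpace ℝ (Fin (m + 2))

/-- Partial derivative. -/
noncomputable def pd {m : ℕ} (i : Fin (m + 2)) (f : X m → ℝ) (x : X m) : ℝ :=
  fderiv ℝ f x (EuclideanSpace.single i 1)

/-- The conformal factor of the stereographic projection. -/
noncomputable def rho {m : ℕ} (x : X m) : ℝ := 2 / (1 + ‖x‖ ^ 2)

/-- Coordinates of the inverse stereographic projection. -/
noncomputable def om {m : ℕ} (a : Option (Fin (m + 2))) (x : X m) : ℝ :=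
  match a with
  | none => rho x - 1
  | some j => rho x * x j

variable {m : ℕ}

lemma rho_pos (x : X m) : 0 < rho x := by unfold rho; positivity

lemma rho_le_two (x : X m) : rho x ≤ 2 := by
  unfold rho
  rw [div_le_iff₀ (by positivity)]
  nlinarith [sq_nonneg ‖x‖]

lemma rho_mul (x : X m) : rho x * (1 + ‖x‖ ^ 2) = 2 := by
  unfold rho; field_simp

lemma rho_norm_sq (x : X m) : rho x * ‖x‖ ^ 2 = 2 - rho x := by
  have := rho_mul x; linarith

lemma rho_norm_le (x : X m) : rho x * ‖x‖ ≤ 1 := by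
  have := rho_mul x
  have h0 := rho_pos x
  nlinarith [mul_nonneg h0.le (sq_nonneg (‖x‖ - 1))]

lemma coord_le (x : X m) (i : Fin (m + 2)) : |x i| ≤ ‖x‖ := by
  simpa using PiLp.norm_apply_le x i

lemma rho_coord_le (x : X m) (i : Fin (m + 2)) : rho x * |x i| ≤ 1 :=
  (mul_le_mul_of_nonneg_left (coord_le x i) (rho_pos x).le).trans (rho_norm_le x)

lemma contDiff_rho {k : WithTop ℕ∞} : ContDiff ℝ k (rho : X m → ℝ) := by
  unfold rho
  refine contDiff_const.div (contDiff_const.add (contDiff_norm_sq ℝ)) ?_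
  intro x; positivity

lemma contDiff_coord {k : WithTop ℕ∞} (i : Fin (m + 2)) : ContDiff ℝ k (fun x : X m => x i) := by
  fun_prop

lemma contDiff_om {k : WithTop ℕ∞} (a : Option (Fin (m + 2))) : ContDiff ℝ k (om a : X m → ℝ) := by
  cases a with
  | none => exact contDiff_rho.sub contDiff_const
  | some j => exact contDiff_rho.mul (contDiff_coord j)

lemma hasFDerivAt_rho (x : X m) : HasFDerivAt (rho : X m → ℝ)
    ((-(rho x) ^ 2) • (innerSL ℝ x)) x := by
  have h1 : HasFDerivAt (fun y : X m => 1 + ‖y‖ ^ 2) (2 • (innerSL ℝ x)) x := by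
    have := (hasStrictFDerivAt_norm_sq x).hasFDerivAt
    simpa using this.const_add (1 : ℝ)
  have hne : (1 + ‖x‖ ^ 2 : ℝ) ≠ 0 := by positivity
  have h2 := (hasDerivAt_inv hne).comp_hasFDerivAt x h1
  have h3 := h2.const_mul (2 : ℝ)
  refine (h3.congr_fderiv ?_).congr_of_eventuallyEq ?_
  · ext y
    simp [rho]
    field_simp
  · filter_upwards with y
    simp [rho, div_eq_mul_inv]

lemma pd_rho (i : Fin (m + 2)) (x : X m) : pd i rho x = -(rho x) ^ 2 * x i := by
  unfold pd
  rw [(hasFDerivAt_rho x).fderiv]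
  simp [EuclideanSpace.inner_single_right]

lemma pd_coord (i j : Fin (m + 2)) (x : X m) :
    pd i (fun y : X m => y j) x = if j = i then 1 else 0 := by
  unfold pd
  have : HasFDerivAt (fun y : X m => y j) (EuclideanSpace.proj j : X m →L[ℝ] ℝ) x :=
    (EuclideanSpace.proj j : X m →L[ℝ] ℝ).hasFDerivAt
  rw [this.fderiv]
  simp

lemma pd_mul {f g : X m → ℝ} {x : X m} (i : Fin (m + 2)) (hf : DifferentiableAt ℝ f x)
    (hg : DifferentiableAt ℝ g x) :
    pd i (fun y => f y * g y) x = f x * pd i g x + g x * pd i f x := by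
  unfold pd
  rw [fderiv_fun_mul hf hg]; simp

lemma pd_add {f g : X m → ℝ} {x : X m} (i : Fin (m + 2)) (hf : DifferentiableAt ℝ f x)
    (hg : DifferentiableAt ℝ g x) :
    pd i (fun y => f y + g y) x = pd i f x + pd i g x := by
  unfold pd
  rw [fderiv_fun_add hf hg]; simp

lemma pd_sub {f g : X m → ℝ} {x : X m} (i : Fin (m + 2)) (hf : DifferentiableAt ℝ f x)
    (hg : DifferentiableAt ℝ g x) :
    pd i (fun y => f y - g y) x = pd i f x - pd i g x := by
  unfold pd
  rw [fderiv_fun_sub hf hg]; simp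

lemma pd_const (i : Fin (m + 2)) (c : ℝ) (x : X m) : pd i (fun _ => c) x = 0 := by
  unfold pd; simp

lemma pd_const_mul {f : X m → ℝ} {x : X m} (i : Fin (m + 2)) (c : ℝ)
    (hf : DifferentiableAt ℝ f x) : pd i (fun y => c * f y) x = c * pd i f x := by
  rw [pd_mul i (by fun_prop) hf, pd_const]; ring

lemma pd_pow {f : X m → ℝ} {x : X m} (i : Fin (m + 2)) (k : ℕ)
    (hf : DifferentiableAt ℝ f x) :
    pd i (fun y => f y ^ (k + 1)) x = (k + 1) * f x ^ k * pd i f x := by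
  unfold pd
  have := (hf.hasFDerivAt.pow (k + 1)).fderiv
  rw [this]; simp

lemma diff_rho (x : X m) : DifferentiableAt ℝ (rho : X m → ℝ) x := (hasFDerivAt_rho x).differentiableAt

lemma diff_coord (x : X m) (j : Fin (m + 2)) : DifferentiableAt ℝ (fun y : X m => y j) x :=
  ((contDiff_coord (k := 1) j).differentiable (by norm_num)) x

lemma diff_om (x : X m) (a) : DifferentiableAt ℝ (om a : X m → ℝ) x :=
  ((contDiff_om (k := 1) a).differentiable (by norm_num)) x

lemma pd_om_none (i : Fin (m + 2)) (x : X m) : pd i (om none) x = -(rho x) ^ 2 * x i := by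
  have : (om none : X m → ℝ) = fun y => rho y - 1 := rfl
  rw [this, pd_sub i (diff_rho x) (by fun_prop), pd_rho, pd_const]; ring

lemma pd_om_some (i j : Fin (m + 2)) (x : X m) :
    pd i (om (some j)) x = (if j = i then rho x else 0) - (rho x) ^ 2 * x i * x j := by
  have : (om (some j) : X m → ℝ) = fun y => rho y * y j := rfl
  rw [this, pd_mul i (diff_rho x) (diff_coord x j), pd_rho, pd_coord]
  split_ifs <;> ring

/-- Carré du champ of the round sphere. -/
noncomputable def Gam (f g : X m → ℝ) (x : X m) : ℝ := (∑ i, pd i f x * pd i g x) / (rho x) ^ 2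

lemma sum_sq (x : X m) : rho x * ∑ i, x i ^ 2 = 2 - rho x := by
  rw [← EuclideanSpace.real_norm_sq_eq, rho_norm_sq]

lemma sum_om_sq (x : X m) : ∑ a, om a x ^ 2 = 1 := by
  rw [Fintype.sum_option]
  simp only [om, mul_pow]
  rw [← Finset.mul_sum]
  have := sum_sq x
  linear_combination (rho x) * this

lemma Gam_om (a b : Option (Fin (m + 2))) (x : X m) :
    Gam (om a) (om b) x = (if a = b then 1 else 0) - om a x * om b x := by
  have h := sum_sq x
  have h0 := (rho_pos x).ne'
  unfold Gam
  rw [div_eq_iff (by positivity)]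
  rcases a with _ | a <;> rcases b with _ | b
  · simp only [pd_om_none, om, if_true]
    have : ∀ i, -rho x ^ 2 * x.ofLp i * (-rho x ^ 2 * x.ofLp i) = rho x ^ 4 * x i ^ 2 := by
      intro i; ring
    simp only [this, ← Finset.mul_sum]
    linear_combination (rho x) ^ 3 * h
  · simp only [pd_om_none, pd_om_some, om]
    have : ∀ i, -rho x ^ 2 * x.ofLp i * ((if b = i then rho x else 0) - rho x ^ 2 * x i * x b)
      = rho x ^ 4 * x b * x i ^ 2 - rho x ^ 3 * (if b = i then x i else 0) := by
      intro i; split_ifs <;> ring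
    simp only [this, Finset.sum_sub_distrib, ← Finset.mul_sum]
    simp
    linear_combination (rho x) ^ 3 * x b * h
  · simp only [pd_om_none, pd_om_some, om]
    have : ∀ i, ((if a = i then rho x else 0) - rho x ^ 2 * x i * x a) * (-rho x ^ 2 * x.ofLp i)
      = rho x ^ 4 * x a * x i ^ 2 - rho x ^ 3 * (if a = i then x i else 0) := by
      intro i; split_ifs <;> ring
    simp only [this, Finset.sum_sub_distrib, ← Finset.mul_sum]
    simp
    linear_combination (rho x) ^ 3 * x a * h
  · simp only [pd_om_some, om]
    have : ∀ i, ((if a = i then rho x else 0) - rho x ^ 2 * x i * x a) *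
        ((if b = i then rho x else 0) - rho x ^ 2 * x i * x b)
      = rho x ^ 2 * (if a = i then (if b = i then 1 else 0) else 0)
        - rho x ^ 3 * x b * (if a = i then x i else 0)
        - rho x ^ 3 * x a * (if b = i then x i else 0)
        + rho x ^ 4 * x a * x b * x i ^ 2 := by
      intro i; split_ifs <;> ring
    simp only [this, Finset.sum_sub_distrib, Finset.sum_add_distrib, ← Finset.mul_sum]
    simp only [Finset.sum_ite_eq, Finset.mem_univ, if_true, Option.some.injEq]
    simp only [eq_comm (a := b) (b := a)]
    linear_combination (rho x) ^ 3 * x a * x b * h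

/-- Admissible functions: those which are bounded with bounded gradient on the sphere. -/
structure Adm (f : X m → ℝ) : Prop where
  cd : ContDiff ℝ 1 f
  bd : ∃ C : ℝ, 0 ≤ C ∧ ∀ x, |f x| ≤ C ∧ ∀ i, |pd i f x| ≤ C * rho x

lemma Adm.diff {f : X m → ℝ} (hf : Adm f) (x : X m) : DifferentiableAt ℝ f x :=
  (hf.cd.differentiable (by norm_num)) x

lemma continuous_pd {f : X m → ℝ} (hf : ContDiff ℝ 1 f) (i : Fin (m + 2)) :
    Continuous (pd i f) := by
  unfold pd
  have := hf.continuous_fderiv (by norm_num)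
  fun_prop

lemma continuous_rho : Continuous (rho : X m → ℝ) := (contDiff_rho (k := 1)).continuous

lemma Adm.const (c : ℝ) : Adm (fun _ : X m => c) :=
  ⟨contDiff_const, |c|, abs_nonneg c, fun x => ⟨le_rfl, fun i => by
    rw [pd_const]; simpa using mul_nonneg (abs_nonneg c) (rho_pos x).le⟩⟩

lemma Adm.mul {f g : X m → ℝ} (hf : Adm f) (hg : Adm g) : Adm (fun x => f x * g x) := by
  obtain ⟨C, hC0, hC⟩ := hf.bd
  obtain ⟨K, hK0, hK⟩ := hg.bd
  refine ⟨hf.cd.mul hg.cd, 2 * (C * K), by positivity, fun x => ⟨?_, fun i => ?_⟩⟩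
  · rw [abs_mul]
    have := mul_le_mul (hC x).1 (hK x).1 (abs_nonneg _) hC0
    have : 0 ≤ C * K := by positivity
    linarith
  · rw [pd_mul i (hf.diff x) (hg.diff x)]
    have h1 := mul_le_mul (hC x).1 ((hK x).2 i) (abs_nonneg _) hC0
    have h2 := mul_le_mul (hK x).1 ((hC x).2 i) (abs_nonneg _) hK0
    refine (abs_add_le _ _).trans ?_
    rw [abs_mul, abs_mul]
    linarith

lemma Adm.add {f g : X m → ℝ} (hf : Adm f) (hg : Adm g) : Adm (fun x => f x + g x) := by
  obtain ⟨C, hC0, hC⟩ := hf.bd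
  obtain ⟨K, hK0, hK⟩ := hg.bd
  refine ⟨hf.cd.add hg.cd, C + K, by positivity, fun x => ⟨?_, fun i => ?_⟩⟩
  · exact (abs_add_le _ _).trans (add_le_add (hC x).1 (hK x).1)
  · rw [pd_add i (hf.diff x) (hg.diff x)]
    refine (abs_add_le _ _).trans ?_
    have := (hC x).2 i
    have := (hK x).2 i
    linarith

lemma Adm.const_mul {f : X m → ℝ} (c : ℝ) (hf : Adm f) : Adm (fun x => c * f x) :=
  (Adm.const c).mul hf

lemma Adm.sub {f g : X m → ℝ} (hf : Adm f) (hg : Adm g) : Adm (fun x => f x - g x) := by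
  have := hf.add (hg.const_mul (-1))
  convert this using 2; ring

lemma Adm.om (a : Option (Fin (m + 2))) : Adm (om a : X m → ℝ) := by
  refine ⟨contDiff_om a, 2, by norm_num, fun x => ?_⟩
  have h0 := rho_pos x
  have h2 := rho_le_two x
  have hc : ∀ i, |rho x * x i| ≤ 1 := fun i => by
    rw [abs_mul, abs_of_pos h0]; exact rho_coord_le x i
  rcases a with _ | a
  · refine ⟨?_, fun i => ?_⟩
    · simp only [BE.om]; rw [abs_le]; constructor <;> linarith
    · rw [pd_om_none]
      have : -rho x ^ 2 * x i = -(rho x * (rho x * x i)) := by ring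
      rw [this, abs_neg, abs_mul, abs_of_pos h0]
      nlinarith [hc i]
  · refine ⟨?_, fun i => ?_⟩
    · simp only [BE.om]; linarith [hc a]
    · rw [pd_om_some]
      have h3 : |rho x * (x i * (rho x * x a))| ≤ 1 * rho x ∨ True := Or.inr trivial
      have h4 : |x i| * |x a| * rho x ≤ 2 := by
        have := rho_norm_sq x
        have h5 := mul_le_mul (coord_le x i) (coord_le x a) (abs_nonneg _) (norm_nonneg _)
        nlinarith
      by_cases h : a = i
      · subst h
        simp only [if_true]
        have h6 : x a * x a * rho x ≤ 2 := by
          rw [← abs_mul, abs_of_nonneg (mul_self_nonneg _)] at h4; exact h4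
        have h7 : 0 ≤ x a * x a * rho x := mul_nonneg (mul_self_nonneg _) h0.le
        rw [abs_le]; constructor <;> nlinarith
      · simp only [if_neg h]
        rw [zero_sub, abs_neg]
        have : rho x ^ 2 * x i * x a = rho x * (x i * x a * rho x) := by ring
        rw [this, abs_mul, abs_of_pos h0, abs_mul, abs_mul, abs_of_pos h0]
        nlinarith

lemma Adm.of_compact {f : X m → ℝ} (hf : ContDiff ℝ 1 f) (hc : HasCompactSupport f) : Adm f := by
  obtain ⟨C, hC⟩ := hc.exists_bound_of_continuous hf.continuous
  have hc' : ∀ i, HasCompactSupport (fun x => pd i f x / rho x) := by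
    intro i
    have h1 : HasCompactSupport (pd i f) := hc.fderiv_apply (𝕜 := ℝ) (EuclideanSpace.single i 1)
    have := h1.mul_right (f' := fun x => (rho x)⁻¹)
    simp only [div_eq_mul_inv]
    exact this
  have hcont : ∀ i, Continuous (fun x => pd i f x / rho x) := fun i =>
    (continuous_pd hf i).div continuous_rho (fun x => (rho_pos x).ne')
  choose K hK using fun i => (hc' i).exists_bound_of_continuous (hcont i)
  refine ⟨hf, |C| + ∑ i, |K i|, by positivity, fun x => ⟨?_, fun i => ?_⟩⟩
  · have := hC x
    rw [Real.norm_eq_abs] at this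
    have h2 : 0 ≤ ∑ i, |K i| := by positivity
    linarith [le_abs_self C]
  · have := hK i x
    rw [Real.norm_eq_abs, abs_div, abs_of_pos (rho_pos x), div_le_iff₀ (rho_pos x)] at this
    refine this.trans (mul_le_mul_of_nonneg_right ?_ (rho_pos x).le)
    have := Finset.single_le_sum (f := fun i => |K i|) (fun j _ => abs_nonneg _) (Finset.mem_univ i)
    have h3 := le_abs_self (K i)
    have h4 := abs_nonneg C
    linarith

end BE

namespace BE

open MeasureTheory Filter Topology

variable {m : ℕ}

/-- The measure of the round sphere in stereographic coordinates. -/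
noncomputable def sig (m : ℕ) : Measure (X m) :=
  volume.withDensity (fun x => ENNReal.ofReal (rho x ^ (m + 2)))

lemma meas_dens : Measurable (fun x : X m => ENNReal.ofReal (rho x ^ (m + 2))) :=
  (continuous_rho.pow _).measurable.ennreal_ofReal

lemma integral_sig (f : X m → ℝ) : ∫ x, f x ∂(sig m) = ∫ x, rho x ^ (m + 2) * f x := by
  unfold sig
  rw [integral_withDensity_eq_integral_toReal_smul meas_dens (by simp)]
  refine integral_congr_ae (Eventually.of_forall fun x => ?_)
  simp only [smul_eq_mul]
  rw [ENNReal.toReal_ofReal (by have := rho_pos x; positivity)]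

lemma integrable_sig (f : X m → ℝ) :
    Integrable f (sig m) ↔ Integrable (fun x => rho x ^ (m + 2) * f x) := by
  unfold sig
  rw [integrable_withDensity_iff_integrable_smul' meas_dens (by simp)]
  refine integrable_congr (Eventually.of_forall fun x => ?_)
  simp only [smul_eq_mul]
  rw [ENNReal.toReal_ofReal (by have := rho_pos x; positivity)]

lemma integrable_rho_pow (k : ℕ) (hk : m + 2 < 2 * k) :
    Integrable (fun x : X m => rho x ^ k) := by
  have h := integrable_rpow_neg_one_add_norm_sq (E := X m) (μ := volume) (r := 2 * k) (by
    simp; exact_mod_cast hk)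
  have h2 := h.const_mul ((2 : ℝ) ^ k)
  refine h2.congr (Eventually.of_forall fun x => ?_)
  simp only [rho]
  rw [show (-(2 * (k : ℝ)) / 2) = -(k : ℝ) by ring, div_pow, div_eq_mul_inv]
  congr 1
  rw [ Real.rpow_neg (by positivity), Real.rpow_natCast]

instance : IsFiniteMeasure (sig m) := by
  have h : Integrable (fun _ : X m => (1 : ℝ)) (sig m) := by
    rw [integrable_sig]
    simpa using integrable_rho_pow (m := m) (m + 2) (by omega)
  exact (integrable_const_iff_isFiniteMeasure one_ne_zero).1 h

lemma sig_pos : 0 < (sig m).real Set.univ := by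
  have h : (sig m).real Set.univ = ∫ x : X m, rho x ^ (m + 2) := by
    have := integral_sig (m := m) (fun _ => 1)
    simpa using this
  rw [h]
  refine integral_pos_of_integrable_nonneg_nonzero (x := 0) (continuous_rho.pow _)
    (integrable_rho_pow _ (by omega)) (fun x => ?_) ?_
  · have := rho_pos x; show 0 ≤ rho x ^ (m + 2); positivity
  · have := rho_pos (0 : X m); positivity

lemma integrable_of_bdd {f : X m → ℝ} (hf : Continuous f) {C : ℝ} (hC : ∀ x, |f x| ≤ C) :
    Integrable f (sig m) :=
  Integrable.of_bound hf.aestronglyMeasurable C (Eventually.of_forall fun x => by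
    rw [Real.norm_eq_abs]; exact hC x)

lemma Adm.cont {f : X m → ℝ} (hf : Adm f) : Continuous f := hf.cd.continuous

lemma Adm.int {f : X m → ℝ} (hf : Adm f) : Integrable f (sig m) := by
  obtain ⟨C, -, hC⟩ := hf.bd
  exact integrable_of_bdd hf.cont (fun x => (hC x).1)

lemma Gam_cont {f g : X m → ℝ} (hf : Adm f) (hg : Adm g) : Continuous (Gam f g) := by
  unfold Gam
  refine (continuous_finsetSum _ fun i _ => ?_).div (continuous_rho.pow _) (fun x => by
    have := rho_pos x; positivity)
  exact (continuous_pd hf.cd i).mul (continuous_pd hg.cd i)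

lemma Gam_bdd {f g : X m → ℝ} (hf : Adm f) (hg : Adm g) : ∃ C, ∀ x, |Gam f g x| ≤ C := by
  obtain ⟨C, hC0, hC⟩ := hf.bd
  obtain ⟨K, hK0, hK⟩ := hg.bd
  refine ⟨(m + 2) * (C * K), fun x => ?_⟩
  unfold Gam
  have h0 := rho_pos x
  rw [abs_div, abs_of_pos (pow_pos h0 2), div_le_iff₀ (by positivity)]
  refine (Finset.abs_sum_le_sum_abs _ _).trans ?_
  calc ∑ i, |pd i f x * pd i g x| ≤ ∑ i : Fin (m + 2), (C * K) * rho x ^ 2 := by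
        refine Finset.sum_le_sum fun i _ => ?_
        rw [abs_mul]
        calc _ ≤ (C * rho x) * (K * rho x) :=
              mul_le_mul ((hC x).2 i) ((hK x).2 i) (abs_nonneg _) (by positivity)
          _ = _ := by ring
    _ = _ := by simp; ring

lemma Gam_int {f g : X m → ℝ} (hf : Adm f) (hg : Adm g) : Integrable (Gam f g) (sig m) := by
  obtain ⟨C, hC⟩ := Gam_bdd hf hg
  exact integrable_of_bdd (Gam_cont hf hg) hC

lemma Gam_comm (f g : X m → ℝ) (x : X m) : Gam f g x = Gam g f x := by
  unfold Gam; congr 1; exact Finset.sum_congr rfl fun i _ => mul_comm _ _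

lemma Gam_add_left {f g h : X m → ℝ} (hf : Adm f) (hg : Adm g) (x : X m) :
    Gam (fun y => f y + g y) h x = Gam f h x + Gam g h x := by
  unfold Gam
  rw [← add_div, ← Finset.sum_add_distrib]
  congr 1
  refine Finset.sum_congr rfl fun i _ => ?_
  rw [pd_add i (hf.diff x) (hg.diff x)]; ring

lemma Gam_mul_left {f g h : X m → ℝ} (hf : Adm f) (hg : Adm g) (x : X m) :
    Gam (fun y => f y * g y) h x = f x * Gam g h x + g x * Gam f h x := by
  unfold Gam
  rw [← mul_div_assoc, ← mul_div_assoc, ← add_div, Finset.mul_sum, Finset.mul_sum,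
    ← Finset.sum_add_distrib]
  congr 1
  refine Finset.sum_congr rfl fun i _ => ?_
  rw [pd_mul i (hf.diff x) (hg.diff x)]; ring

lemma Gam_const_left (c : ℝ) (h : X m → ℝ) (x : X m) : Gam (fun _ => c) h x = 0 := by
  unfold Gam; simp [pd_const]

lemma Gam_const_mul_left {f h : X m → ℝ} (c : ℝ) (hf : Adm f) (x : X m) :
    Gam (fun y => c * f y) h x = c * Gam f h x := by
  rw [Gam_mul_left (Adm.const c) hf, Gam_const_left]; ring

lemma Gam_self_nonneg (f : X m → ℝ) (x : X m) : 0 ≤ Gam f f x := by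
  unfold Gam
  exact div_nonneg (Finset.sum_nonneg fun i _ => mul_self_nonneg _) (by positivity)

/-- Dirichlet form on the sphere. -/
noncomputable def D (f g : X m → ℝ) : ℝ := ∫ x, Gam f g x ∂(sig m)

lemma D_comm (f g : X m → ℝ) : D f g = D g f := by
  unfold D; simp only [Gam_comm f g]

lemma D_add_left {f g h : X m → ℝ} (hf : Adm f) (hg : Adm g) (hh : Adm h) :
    D (fun y => f y + g y) h = D f h + D g h := by
  unfold D
  rw [← integral_add (Gam_int hf hh) (Gam_int hg hh)]
  simp only [Gam_add_left hf hg]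

lemma D_const_mul_left {f h : X m → ℝ} (c : ℝ) (hf : Adm f) :
    D (fun y => c * f y) h = c * D f h := by
  unfold D
  rw [← integral_const_mul]
  simp only [Gam_const_mul_left c hf]

lemma D_const_left (c : ℝ) (h : X m → ℝ) : D (fun _ => c) h = 0 := by
  unfold D; simp [Gam_const_left]

lemma D_self_nonneg (f : X m → ℝ) : 0 ≤ D f f := integral_nonneg (Gam_self_nonneg f)

lemma D_sub_left {f g h : X m → ℝ} (hf : Adm f) (hg : Adm g) (hh : Adm h) :
    D (fun y => f y - g y) h = D f h - D g h := by
  have := D_add_left (h := h) hf (hg.const_mul (-1)) hh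
  rw [D_const_mul_left _ hg] at this
  have e : (fun y => f y - g y) = (fun y => f y + -1 * g y) := by ext y; ring
  rw [e, this]; ring

lemma D_add_right {f g h : X m → ℝ} (hf : Adm f) (hg : Adm g) (hh : Adm h) :
    D h (fun y => f y + g y) = D h f + D h g := by
  rw [D_comm, D_add_left hf hg hh, D_comm f, D_comm g]

lemma D_sub_right {f g h : X m → ℝ} (hf : Adm f) (hg : Adm g) (hh : Adm h) :
    D h (fun y => f y - g y) = D h f - D h g := by
  rw [D_comm, D_sub_left hf hg hh, D_comm f, D_comm g]

lemma D_sq_add {f g : X m → ℝ} (hf : Adm f) (hg : Adm g) :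
    D (fun y => f y + g y) (fun y => f y + g y) = D f f + 2 * D f g + D g g := by
  rw [D_add_left hf hg (hf.add hg), D_add_right hf hg hf, D_add_right hf hg hg, D_comm g f]; ring

/-- Integration by parts against a decaying vector field. -/
lemma ibp (hm : 1 ≤ m) (i : Fin (m + 2)) {h W : X m → ℝ} (hh : ContDiff ℝ 1 h) (hW : Adm W) {C : ℝ}
    (h1 : ∀ x, |h x| ≤ C * rho x ^ (m + 1)) (h2 : ∀ x, |pd i h x| ≤ C * rho x ^ (m + 1)) :
    Integrable (fun x => h x * pd i W x) ∧ Integrable (fun x => pd i h x * W x) ∧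
    ∫ x, h x * pd i W x = - ∫ x, pd i h x * W x := by
  obtain ⟨K, hK0, hK⟩ := hW.bd
  have hr := integrable_rho_pow (m := m) (m + 1) (by omega)
  have key : ∀ (f g : X m → ℝ), Continuous f → Continuous g → (∀ x, |f x| ≤ C * rho x ^ (m + 1)) →
      (∀ x, |g x| ≤ K * 2) → Integrable (fun x => f x * g x) := by
    intro f g hf hg h3 h4
    refine (hr.const_mul (C * (K * 2))).mono' (hf.mul hg).aestronglyMeasurable
      (Eventually.of_forall fun x => ?_)
    rw [Real.norm_eq_abs, abs_mul]
    have := mul_le_mul (h3 x) (h4 x) (abs_nonneg _) ((abs_nonneg _).trans (h3 x))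
    linarith
  have a1 := key h (pd i W) hh.continuous (continuous_pd hW.cd i) h1 (fun x =>
    ((hK x).2 i).trans (mul_le_mul_of_nonneg_left (rho_le_two x) hK0))
  have a2 := key (pd i h) W (continuous_pd hh i) hW.cont h2 (fun x => by
    have := (hK x).1; linarith)
  have a3 := key h W hh.continuous hW.cont h1 (fun x => by
    have := (hK x).1; linarith)
  refine ⟨a1, a2, ?_⟩
  exact integral_mul_fderiv_eq_neg_fderiv_mul_of_integrable a2 a1 a3
    (fun x _ => hh.differentiable (by norm_num) x) (fun x _ => hW.diff x)

lemma D_eq (f g : X m → ℝ) : D f g = ∫ x, ∑ i, (rho x ^ m * pd i f x) * pd i g x := by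
  unfold D
  rw [integral_sig]
  refine integral_congr_ae (Eventually.of_forall fun x => ?_)
  have := (rho_pos x).ne'
  simp only [Gam]
  rw [pow_add]
  field_simp
  rw [Finset.mul_sum]
  refine Finset.sum_congr rfl fun i _ => ?_
  ring

lemma D_om (hm : 1 ≤ m) (a : Option (Fin (m + 2))) {W : X m → ℝ} (hW : Adm W) :
    D (om a) W = (m + 2) * ∫ x, om a x * W x ∂(sig m) := by
  -- the vector field
  have hdr : ∀ x : X m, DifferentiableAt ℝ (rho : X m → ℝ) x := diff_rho
  have hpow : ∀ (i : Fin (m + 2)) (k : ℕ) (x : X m),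
      pd i (fun y => rho y ^ (k + 1)) x = -(k + 1) * rho x ^ (k + 2) * x i := by
    intro i k x
    rw [pd_pow i k (hdr x), pd_rho]; ring
  obtain ⟨h, dh, hcd, heq, hdh, hb1, hb2, hsum⟩ : ∃ (h dh : Fin (m + 2) → X m → ℝ),
      (∀ i, ContDiff ℝ 1 (h i)) ∧ (∀ i x, h i x = rho x ^ m * pd i (om a) x) ∧
      (∀ i x, pd i (h i) x = dh i x) ∧ (∀ i x, |h i x| ≤ (4 * m + 20) * rho x ^ (m + 1)) ∧
      (∀ i x, |dh i x| ≤ (4 * m + 20) * rho x ^ (m + 1)) ∧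
      (∀ x, ∑ i, dh i x = -((m + 2) * (rho x ^ (m + 2) * om a x))) := by
    rcases a with _ | j
    · refine ⟨fun i x => -(rho x ^ (m + 2) * x i),
        fun i x => (m + 2) * rho x ^ (m + 3) * x i ^ 2 - rho x ^ (m + 2), ?_, ?_, ?_, ?_, ?_, ?_⟩
      · intro i
        exact ((contDiff_rho.pow _).mul (contDiff_coord i)).neg
      · intro i x; beta_reduce; rw [pd_om_none]; ring
      · intro i x
        beta_reduce
        have e : (fun x : X m => -(rho x ^ (m + 2) * x i)) = fun x => (-1) * (rho x ^ (m + 1 + 1) * x i) := by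
          ext x; ring
        rw [e, pd_const_mul (f := fun x => rho x ^ (m + 1 + 1) * x i) i _ (((hdr x).pow _).mul (diff_coord x i)),
          pd_mul (f := fun x => rho x ^ (m + 1 + 1)) i ((hdr x).pow _) (diff_coord x i), hpow, pd_coord]
        push_cast
        simp only [if_true]
        ring
      · intro i x
        beta_reduce
        have h0 := rho_pos x
        rw [abs_neg, abs_mul, abs_of_pos (pow_pos h0 _)]
        have h1 := rho_coord_le x i
        have hp := pow_pos h0 (m + 1)
        have e : rho x ^ (m + 2) * |x i| = rho x ^ (m + 1) * (rho x * |x i|) := by ring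
        rw [e]
        have : (0 : ℝ) ≤ m := Nat.cast_nonneg m
        nlinarith
      · intro i x
        beta_reduce
        have h0 := rho_pos x
        have h1 : rho x * x i ^ 2 ≤ 2 := by
          have := rho_norm_sq x
          have h5 := coord_le x i
          have : x i ^ 2 ≤ ‖x‖ ^ 2 := by rw [← sq_abs]; gcongr
          nlinarith
        have h3 : 0 ≤ rho x * x i ^ 2 := by positivity
        have h2 := rho_le_two x
        have hp := pow_pos h0 (m + 1)
        have e : (m + 2) * rho x ^ (m + 3) * x i ^ 2 - rho x ^ (m + 2) =
            rho x ^ (m + 1) * (rho x * ((m + 2) * (rho x * x i ^ 2) - 1)) := by ring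
        rw [e, abs_mul, abs_of_pos hp, mul_comm]
        refine mul_le_mul_of_nonneg_right ?_ hp.le
        rw [abs_mul, abs_of_pos h0]
        have hm0 : (0 : ℝ) ≤ m := Nat.cast_nonneg m
        have : |((m : ℝ) + 2) * (rho x * x i ^ 2) - 1| ≤ ((m : ℝ) + 2) * 2 := by
          rw [abs_le]; constructor <;> nlinarith
        nlinarith
      · intro x
        beta_reduce
        rw [Finset.sum_sub_distrib, ← Finset.mul_sum]
        simp only [om, Finset.sum_const, Finset.card_univ, Fintype.card_fin, nsmul_eq_mul]
        push_cast
        linear_combination (m + 2) * rho x ^ (m + 2) * sum_sq x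
    · refine ⟨fun i x => (if j = i then 1 else 0) * rho x ^ (m + 1) - rho x ^ (m + 2) * (x i * x j),
        fun i x => (if j = i then 1 else 0) * (-(m + 1) * rho x ^ (m + 2) * x i)
          - (-(m + 2) * rho x ^ (m + 3) * x i * (x i * x j) +
            rho x ^ (m + 2) * (x j + (if j = i then 1 else 0) * x i)), ?_, ?_, ?_, ?_, ?_, ?_⟩
      · intro i
        exact (contDiff_const.mul (contDiff_rho.pow _)).sub
          ((contDiff_rho.pow _).mul ((contDiff_coord i).mul (contDiff_coord j)))
      · intro i x; beta_reduce; rw [pd_om_some]; split_ifs <;> ring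
      · intro i x
        beta_reduce
        rw [pd_sub (f := fun x => (if j = i then 1 else 0) * rho x ^ (m + 1)) (g := fun x => rho x ^ (m + 2) * (x i * x j)) i (((hdr x).pow _).const_mul _)
            (((hdr x).pow _).mul ((diff_coord x i).mul (diff_coord x j))),
          pd_const_mul (f := fun x => rho x ^ (m + 1)) i _ ((hdr x).pow _), hpow,
          pd_mul (f := fun x => rho x ^ (m + 2)) (g := fun x => x i * x j) i ((hdr x).pow _) ((diff_coord x i).mul (diff_coord x j)),
          pd_mul i (diff_coord x i) (diff_coord x j), pd_coord, pd_coord, hpow i (m + 1)]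
        push_cast
        simp only [if_true]
        split_ifs <;> ring
      · intro i x
        beta_reduce
        have h0 := rho_pos x
        have hp := pow_pos h0 (m + 1)
        have hm0 : (0 : ℝ) ≤ m := Nat.cast_nonneg m
        have h4 : rho x * |x i * x j| ≤ 2 := by
          have := rho_norm_sq x
          have h5 := mul_le_mul (coord_le x i) (coord_le x j) (abs_nonneg _) (norm_nonneg _)
          rw [abs_mul]
          nlinarith
        have h6 : |(if j = i then (1 : ℝ) else 0)| ≤ 1 := by split_ifs <;> simp
        have e : (if j = i then (1 : ℝ) else 0) * rho x ^ (m + 1) - rho x ^ (m + 2) * (x i * x j) =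
          rho x ^ (m + 1) * ((if j = i then 1 else 0) - rho x * (x i * x j)) := by ring
        rw [e, abs_mul, abs_of_pos hp, mul_comm]
        refine mul_le_mul_of_nonneg_right ?_ hp.le
        refine (abs_sub _ _).trans ?_
        rw [abs_mul, abs_of_pos h0]; linarith
      · intro i x
        beta_reduce
        have h0 := rho_pos x
        have hp := pow_pos h0 (m + 1)
        have hm0 : (0 : ℝ) ≤ m := Nat.cast_nonneg m
        have h4 : |rho x * (x i * x j)| ≤ 2 := by
          have := rho_norm_sq x
          have h5 := mul_le_mul (coord_le x i) (coord_le x j) (abs_nonneg _) (norm_nonneg _)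
          rw [abs_mul, abs_mul, abs_of_pos h0]
          nlinarith
        have hc : ∀ i, |rho x * x i| ≤ 1 := fun i => by
          rw [abs_mul, abs_of_pos h0]; exact rho_coord_le x i
        have hci := hc i
        have hcj := hc j
        have h7 : |(rho x * x i) * (rho x * (x i * x j))| ≤ 2 := by
          rw [abs_mul]
          nlinarith [abs_nonneg (rho x * x i), abs_nonneg (rho x * (x i * x j))]
        have e : (if j = i then (1 : ℝ) else 0) * (-(m + 1) * rho x ^ (m + 2) * x i)
          - (-(m + 2) * rho x ^ (m + 3) * x i * (x i * x j) +
            rho x ^ (m + 2) * (x j + (if j = i then 1 else 0) * x i)) =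
          rho x ^ (m + 1) * ((if j = i then (1 : ℝ) else 0) * (-(m + 2)) * (rho x * x i)
            + (m + 2) * ((rho x * x i) * (rho x * (x i * x j))) - rho x * x j) := by ring
        rw [e, abs_mul, abs_of_pos hp, mul_comm]
        refine mul_le_mul_of_nonneg_right ?_ hp.le
        rw [abs_le] at hci hcj h7
        rw [abs_le]
        split_ifs <;> constructor <;> nlinarith
      · intro x
        beta_reduce
        have e : ∀ i, (if j = i then (1 : ℝ) else 0) * (-(m + 1) * rho x ^ (m + 2) * x i)
          - (-(m + 2) * rho x ^ (m + 3) * x i * (x i * x j) +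
            rho x ^ (m + 2) * (x j + (if j = i then 1 else 0) * x i)) =
          (-(m + 2) * rho x ^ (m + 2)) * (if j = i then x i else 0)
            + (m + 2) * rho x ^ (m + 3) * x j * x i ^ 2 - rho x ^ (m + 2) * x j := by
          intro i; split_ifs <;> ring
        simp only [e]
        rw [Finset.sum_sub_distrib, Finset.sum_add_distrib, ← Finset.mul_sum, ← Finset.mul_sum]
        simp only [om, Finset.sum_const, Finset.card_univ, Fintype.card_fin, nsmul_eq_mul,
          Finset.sum_ite_eq, Finset.mem_univ, if_true]
        push_cast
        linear_combination (m + 2) * rho x ^ (m + 2) * x j * sum_sq x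
  have hI := fun i => ibp hm i (hcd i) hW (hb1 i) (fun x => by rw [hdh]; exact hb2 i x)
  rw [D_eq, integral_sig]
  simp only [← heq]
  rw [integral_finsetSum _ (fun i _ => (hI i).1)]
  simp only [(hI _).2.2]
  rw [Finset.sum_neg_distrib, ← integral_finsetSum _ (fun i _ => (hI i).2.1), ← integral_neg,
    ← integral_const_mul]
  refine integral_congr_ae (Eventually.of_forall fun x => ?_)
  simp only [hdh]
  rw [← Finset.sum_mul, hsum]; ring

end BE

namespace BE

open MeasureTheory Filter Topology
open scoped BoundedContinuousFunction

variable {m : ℕ}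

/-- An admissible function as a bounded continuous function. -/
noncomputable def toB {f : X m → ℝ} (hf : Adm f) : X m →ᵇ ℝ :=
  BoundedContinuousFunction.ofNormedAddCommGroup f hf.cont hf.bd.choose
    (fun x => by rw [Real.norm_eq_abs]; exact (hf.bd.choose_spec.2 x).1)

@[simp] lemma toB_apply {f : X m → ℝ} (hf : Adm f) (x : X m) : toB hf x = f x := rfl

noncomputable def omB (a : Option (Fin (m + 2))) : X m →ᵇ ℝ := toB (Adm.om a)

@[simp] lemma omB_apply (a : Option (Fin (m + 2))) (x : X m) : omB a x = om a x := rfl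

/-- Polynomials of degree at most one in the sphere coordinates. -/
noncomputable def MM (m : ℕ) : Submodule ℝ (X m →ᵇ ℝ) :=
  Submodule.span ℝ (insert 1 (Set.range omB))

lemma one_mem_MM : (1 : X m →ᵇ ℝ) ∈ MM m := Submodule.subset_span (Set.mem_insert _ _)

lemma om_mem_MM (a) : (omB a : X m →ᵇ ℝ) ∈ MM m :=
  Submodule.subset_span (Set.mem_insert_of_mem _ ⟨a, rfl⟩)

/-- Polynomials of degree at most `k`. -/
noncomputable def MP (m : ℕ) : ℕ → Submodule ℝ (X m →ᵇ ℝ)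
  | 0 => 1
  | k + 1 => MP m k * MM m

lemma MP_zero : MP m 0 = 1 := rfl

lemma MP_succ (k : ℕ) : MP m (k + 1) = MP m k * MM m := rfl

lemma MM_mono {j k : ℕ} (h : j ≤ k) : MP m j ≤ MP m k := by
  induction h with
  | refl => exact le_rfl
  | step h ih =>
    refine ih.trans fun p hp => ?_
    rw [MP_succ, ← mul_one p]
    exact Submodule.mul_mem_mul hp one_mem_MM

lemma MP_one : MP m 1 = MM m := by
  rw [MP_succ, MP_zero, Submodule.one_mul]

lemma MP_mul (j k : ℕ) {p r : X m →ᵇ ℝ} (hp : p ∈ MP m j) (hr : r ∈ MP m k) :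
    p * r ∈ MP m (j + k) := by
  induction k generalizing r with
  | zero =>
    rw [MP_zero, Submodule.mem_one] at hr
    obtain ⟨c, rfl⟩ := hr
    rw [mul_comm, ← Algebra.smul_def]
    exact Submodule.smul_mem _ _ hp
  | succ k ih =>
    rw [MP_succ] at hr
    induction hr using Submodule.mul_induction_on' with
    | mem_mul_mem f hf g hg =>
      rw [← mul_assoc]
      exact Submodule.mul_mem_mul (ih hf) hg
    | add x _ y _ hx hy => rw [mul_add]; exact Submodule.add_mem _ hx hy

/-- Polynomials of degree less than `k`. -/
noncomputable def WW (m : ℕ) : ℕ → Submodule ℝ (X m →ᵇ ℝ)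
  | 0 => ⊥
  | k + 1 => MP m k

lemma WW_le {k N : ℕ} (h : k ≤ N + 1) : WW m k ≤ MP m N := by
  cases k with
  | zero => exact bot_le
  | succ k => exact MM_mono (by omega)

lemma om_mul_WW (a) (N : ℕ) {r : X m →ᵇ ℝ} (hr : r ∈ WW m N) : r * omB a ∈ MP m N := by
  cases N with
  | zero => rw [(Submodule.mem_bot ℝ).1 hr]; simp
  | succ k =>
    rw [MP_succ]
    exact Submodule.mul_mem_mul hr (om_mem_MM a)

lemma MM_adm {p : X m →ᵇ ℝ} (hp : p ∈ MM m) : Adm (p : X m → ℝ) := by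
  induction hp using Submodule.span_induction with
  | mem x h =>
    rcases h with rfl | ⟨a, rfl⟩
    · exact Adm.const 1
    · exact Adm.om a
  | zero => exact Adm.const 0
  | add x y _ _ hx hy => exact hx.add hy
  | smul a x _ hx => exact hx.const_mul a

lemma pow_adm (N : ℕ) {p : X m →ᵇ ℝ} (hp : p ∈ MP m N) : Adm (p : X m → ℝ) := by
  induction N generalizing p with
  | zero =>
    rw [MP_zero, Submodule.mem_one] at hp
    obtain ⟨c, rfl⟩ := hp
    exact Adm.const c
  | succ N ih =>
    rw [MP_succ] at hp
    induction hp using Submodule.mul_induction_on' with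
    | mem_mul_mem f hf g hg => exact (ih hf).mul (MM_adm hg)
    | add x _ y _ hx hy => exact hx.add hy

/-- Induction principle for polynomials. -/
lemma poly_ind {N : ℕ} {P : (X m →ᵇ ℝ) → Prop}
    (h1 : ∀ f ∈ MP m N, P f) (hom : ∀ f ∈ MP m N, ∀ a, P (f * omB a))
    (hadd : ∀ f ∈ MP m (N + 1), ∀ g ∈ MP m (N + 1), P f → P g → P (f + g))
    {p : X m →ᵇ ℝ} (hp : p ∈ MP m (N + 1)) : P p := by
  rw [MP_succ] at hp
  induction hp using Submodule.mul_induction_on' with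
  | add x hx y hy h1 h2 => rw [← MP_succ] at hx hy; exact hadd x hx y hy h1 h2
  | mem_mul_mem f hf g hg =>
    have key : ∀ f ∈ MP m N, P (f * g) := by
      induction hg using Submodule.span_induction with
      | mem x h =>
        rcases h with rfl | ⟨a, rfl⟩
        · intro f hf; rw [mul_one]; exact h1 f hf
        · intro f hf; exact hom f hf a
      | zero => intro f hf; rw [mul_zero]; exact h1 0 (Submodule.zero_mem _)
      | add x y hx hy ihx ihy =>
        intro f hf
        rw [mul_add]
        refine hadd _ ?_ _ ?_ (ihx f hf) (ihy f hf)
        · rw [MP_succ]; exact Submodule.mul_mem_mul hf hx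
        · rw [MP_succ]; exact Submodule.mul_mem_mul hf hy
      | smul a x hx ih =>
        intro f hf
        rw [mul_smul_comm, ← smul_mul_assoc]
        exact ih _ (Submodule.smul_mem _ _ hf)
    exact key f hf

lemma Gam_poly (N : ℕ) {p : X m →ᵇ ℝ} (hp : p ∈ MP m N) (a) :
    ∃ r ∈ MP m N, ∀ x, Gam p (om a) x = -N * (om a x * p x) + r x := by
  induction N generalizing p with
  | zero =>
    rw [MP_zero, Submodule.mem_one] at hp
    obtain ⟨c, rfl⟩ := hp
    refine ⟨0, Submodule.zero_mem _, fun x => ?_⟩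
    have : Gam (fun _ => c) (om a) x = 0 := Gam_const_left c (om a) x
    simp
    exact this
  | succ N ih =>
    refine poly_ind (N := N) (P := fun p => ∃ r ∈ MP m (N + 1), ∀ x, Gam p (om a) x
      = -(N + 1 : ℕ) * (om a x * p x) + r x) ?_ ?_ ?_ hp
    · intro f hf
      obtain ⟨r, hr, h⟩ := ih hf
      refine ⟨r + f * omB a, Submodule.add_mem _ (MM_mono (Nat.le_succ N) hr) ?_, fun x => ?_⟩
      · rw [MP_succ]; exact Submodule.mul_mem_mul hf (om_mem_MM a)
      · rw [h x]; simp; ring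
    · intro f hf b
      obtain ⟨r, hr, h⟩ := ih hf
      refine ⟨r * omB b + (if b = a then (1 : ℝ) else 0) • f, Submodule.add_mem _ ?_
        (Submodule.smul_mem _ _ (MM_mono (Nat.le_succ N) hf)), fun x => ?_⟩
      · rw [MP_succ]; exact Submodule.mul_mem_mul hr (om_mem_MM b)
      · have e : ((f * omB b : X m →ᵇ ℝ) : X m → ℝ) = fun y => f y * om b y := rfl
        rw [e, Gam_mul_left (pow_adm N hf) (Adm.om b), h x, Gam_om]
        split_ifs <;> simp <;> ring
    · rintro f hf g hg ⟨r, hr, h⟩ ⟨s, hs, k⟩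
      refine ⟨r + s, Submodule.add_mem _ hr hs, fun x => ?_⟩
      have e : ((f + g : X m →ᵇ ℝ) : X m → ℝ) = fun y => f y + g y := rfl
      rw [e, Gam_add_left (pow_adm _ hf) (pow_adm _ hg), h x, k x]
      simp; ring

lemma bint (f : X m →ᵇ ℝ) : Integrable (fun x => f x) (sig m) :=
  integrable_of_bdd f.continuous (C := ‖f‖) (fun x => f.norm_coe_le_norm x)

lemma D_poly (hm : 1 ≤ m) (N : ℕ) {p : X m →ᵇ ℝ} (hp : p ∈ MP m N) :
    ∃ r ∈ WW m N, ∀ Y : X m → ℝ, Adm Y →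
      D p Y = ∫ x, ((N * (N + m + 1) : ℝ) * p x + r x) * Y x ∂(sig m) := by
  induction N generalizing p with
  | zero =>
    rw [MP_zero, Submodule.mem_one] at hp
    obtain ⟨c, rfl⟩ := hp
    refine ⟨0, Submodule.zero_mem _, fun Y hY => ?_⟩
    have : D (fun _ => c) Y = 0 := D_const_left c Y
    simp
    exact this
  | succ N ih =>
    refine poly_ind (N := N) (P := fun p => ∃ r ∈ WW m (N + 1), ∀ Y : X m → ℝ, Adm Y →
      D p Y = ∫ x, (((N + 1 : ℕ) * ((N + 1 : ℕ) + m + 1) : ℝ) * p x + r x) * Y x ∂(sig m))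
      ?_ ?_ ?_ hp
    · intro f hf
      obtain ⟨r, hr, h⟩ := ih hf
      refine ⟨r + (-(2 * N + m + 2) : ℝ) • f,
        Submodule.add_mem _ (WW_le (Nat.le_succ N) hr) (Submodule.smul_mem _ _ hf), fun Y hY => ?_⟩
      rw [h Y hY]
      refine integral_congr_ae (Eventually.of_forall fun x => ?_)
      simp only [BoundedContinuousFunction.coe_add, BoundedContinuousFunction.coe_smul, Pi.add_apply, smul_eq_mul]
      push_cast; ring
    · intro f hf b
      obtain ⟨r, hr, h⟩ := ih hf
      obtain ⟨s, hs, k⟩ := Gam_poly N hf b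
      refine ⟨r * omB b + (-2 : ℝ) • s, Submodule.add_mem _ (om_mul_WW b N hr)
        (Submodule.smul_mem _ _ hs), fun Y hY => ?_⟩
      have e : ((f * omB b : X m →ᵇ ℝ) : X m → ℝ) = fun y => f y * om b y := rfl
      have hfA := pow_adm N hf
      have hbA := Adm.om (m := m) b
      rw [e]
      have h1 : D (fun y => f y * om b y) Y =
          D (om b) (fun y => f y * Y y) + D f (fun y => om b y * Y y)
            - ∫ x, 2 * (Gam f (om b) x * Y x) ∂(sig m) := by
        unfold D
        have i1 := Gam_int hbA (hfA.mul hY)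
        have i2 := Gam_int hfA (hbA.mul hY)
        have i3 : Integrable (fun x => 2 * (Gam f (om b) x * Y x)) (sig m) := by
          obtain ⟨C, hC⟩ := Gam_bdd hfA hbA
          obtain ⟨K, hK0, hK⟩ := hY.bd
          refine Integrable.const_mul (integrable_of_bdd ((Gam_cont hfA hbA).mul hY.cont)
            (C := C * K) fun x => ?_) 2
          show |Gam _ _ x * Y x| ≤ _
          rw [abs_mul]
          exact mul_le_mul (hC x) (hK x).1 (abs_nonneg _) ((abs_nonneg _).trans (hC x))
        rw [← integral_add i1 i2]
        have i12 : Integrable (fun x => Gam (om b) (fun y => f y * Y y) x + Gam f (fun y => om b y * Y y) x) (sig m) := i1.add i2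
        rw [← integral_sub i12 i3]
        refine integral_congr_ae (Eventually.of_forall fun x => ?_)
        have g1 : Gam (fun y => f y * om b y) Y x = _ := Gam_mul_left hfA hbA x
        have g2 : Gam (om b) (fun y => f y * Y y) x = f x * Gam Y (om b) x + Y x * Gam f (om b) x := by
          rw [Gam_comm]; exact Gam_mul_left hfA hY x
        have g3 : Gam f (fun y => om b y * Y y) x = om b x * Gam Y f x + Y x * Gam (om b) f x := by
          rw [Gam_comm]; exact Gam_mul_left hbA hY x
        simp only
        rw [g1, g2, g3, Gam_comm Y f, Gam_comm Y (om b), Gam_comm (om b) f]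
        ring
      rw [h1, D_om hm b (hfA.mul hY), h _ (hbA.mul hY), ← integral_const_mul,
        ← integral_add, ← integral_sub]
      · refine integral_congr_ae (Eventually.of_forall fun x => ?_)
        simp only [k x]
        simp; ring
      · refine Integrable.add ?_ ?_
        · exact (bint (omB b * (f * toB hY))).const_mul _
        · exact bint ((((N * (N + m + 1) : ℝ)) • f + r) * (omB b * toB hY))
      · have := bint ((2 : ℝ) • (((-(N : ℝ)) • (omB b * f) + s) * toB hY))
        refine this.congr (Eventually.of_forall fun x => ?_)
        simp only [k x]; simp
      · exact (bint (omB b * (f * toB hY))).const_mul _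
      · exact bint ((((N * (N + m + 1) : ℝ)) • f + r) * (omB b * toB hY))
    · rintro f hf g hg ⟨r, hr, h⟩ ⟨s, hs, k⟩
      refine ⟨r + s, Submodule.add_mem _ hr hs, fun Y hY => ?_⟩
      have e : ((f + g : X m →ᵇ ℝ) : X m → ℝ) = fun y => f y + g y := rfl
      rw [e, D_add_left (pow_adm _ hf) (pow_adm _ hg) hY, h Y hY, k Y hY, ← integral_add]
      · refine integral_congr_ae (Eventually.of_forall fun x => ?_)
        simp; ring
      · exact bint (((((N + 1 : ℕ) * ((N + 1 : ℕ) + m + 1) : ℝ)) • f + r) * toB hY)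
      · exact bint (((((N + 1 : ℕ) * ((N + 1 : ℕ) + m + 1) : ℝ)) • g + s) * toB hY)

lemma MM_fg : (MM m).FG := by
  refine Submodule.fg_span ?_
  exact (Set.finite_range _).insert _

lemma MP_fg (N : ℕ) : (MP m N).FG := by
  induction N with
  | zero => rw [MP_zero]; exact (Submodule.one_eq_span (R := ℝ) (A := X m →ᵇ ℝ)) ▸ Submodule.fg_span_singleton _
  | succ N ih => exact ih.mul MM_fg

lemma exists_proj (N : ℕ) (Y : X m →ᵇ ℝ) :
    ∃ g ∈ MP m N, ∀ w ∈ MP m N, ∫ x, (Y x - g x) * w x ∂(sig m) = 0 := by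
  let T := (BoundedContinuousFunction.toLp (α := X m) (E := ℝ) 2 (sig m) ℝ)
  let K : Submodule ℝ (Lp ℝ 2 (sig m)) := Submodule.map T.toLinearMap (MP m N)
  have hK : K.FG := (MP_fg N).map _
  haveI : FiniteDimensional ℝ K := Module.Finite.iff_fg.2 hK
  obtain ⟨g, hg, hgE⟩ := K.starProjection_apply_mem (T Y)
  refine ⟨g, hg, fun w hw => ?_⟩
  have h1 := Submodule.sub_starProjection_mem_orthogonal (K := K) (T Y)
  have h2 := (Submodule.mem_orthogonal _ _).1 h1 (T w) ⟨w, hw, rfl⟩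
  rw [← hgE] at h2
  have e : T Y - T.toLinearMap g = T (Y - g) := by rw [map_sub]; rfl
  rw [e, BoundedContinuousFunction.inner_toLp] at h2
  simpa using h2

lemma om_sep {x y : X m} (h : ∀ a, om a x = om a y) : x = y := by
  have h1 := h none
  simp only [om] at h1
  have h2 : rho x = rho y := by linarith
  ext i
  have h3 := h (some i)
  simp only [om] at h3
  rw [h2] at h3
  exact mul_left_cancel₀ (rho_pos y).ne' h3

/-- The algebra of polynomials. -/
noncomputable def AA (m : ℕ) : StarSubalgebra ℝ (X m →ᵇ ℝ) :=
  StarSubalgebra.mk (Algebra.adjoin ℝ (Set.range omB)) (fun {a} ha => by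
    have : star a = a := by ext x; simp
    rw [this]; exact ha)

lemma AA_mem {g : X m →ᵇ ℝ} (hg : g ∈ AA m) : ∃ N, g ∈ MP m N := by
  have hg' : g ∈ Algebra.adjoin ℝ (Set.range (omB (m := m))) := hg
  induction hg' using Algebra.adjoin_induction with
  | mem x hx =>
    obtain ⟨a, rfl⟩ := hx
    exact ⟨1, by rw [MP_one]; exact om_mem_MM a⟩
  | algebraMap r => exact ⟨0, by rw [MP_zero, Submodule.mem_one]; exact ⟨r, rfl⟩⟩
  | add x y hx hy h1 h2 =>
    obtain ⟨N, hN⟩ := h1 hx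
    obtain ⟨K, hK⟩ := h2 hy
    exact ⟨max N K, Submodule.add_mem _ (MM_mono (le_max_left _ _) hN)
      (MM_mono (le_max_right _ _) hK)⟩
  | mul x y hx hy h1 h2 =>
    obtain ⟨N, hN⟩ := h1 hx
    obtain ⟨K, hK⟩ := h2 hy
    exact ⟨N + K, MP_mul _ _ hN hK⟩

lemma dense_poly (Y : X m →ᵇ ℝ) {ε : ℝ} (hε : 0 < ε) :
    ∃ N, ∃ g ∈ MP m N, ∫ x, (Y x - g x) ^ 2 ∂(sig m) < ε := by
  let T := (BoundedContinuousFunction.toLp (α := X m) (E := ℝ) 2 (sig m) ℝ)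
  let K : Submodule ℝ (Lp ℝ 2 (sig m)) := Submodule.map T.toLinearMap (AA m).toSubalgebra.toSubmodule
  have hK : Kᗮ = ⊥ := by
    rw [Submodule.eq_bot_iff]
    intro f hf
    have horth : ∀ g ∈ AA m, ∫ x, g x * f x ∂(sig m) = 0 := by
      intro g hg
      have h2 := (Submodule.mem_orthogonal _ _).1 hf (T g) ⟨g, hg, rfl⟩
      rw [L2.inner_def] at h2
      rw [← h2]
      refine integral_congr_ae ?_
      filter_upwards [BoundedContinuousFunction.coeFn_toLp 2 (sig m) ℝ g] with x hx
      simp only [T]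
      rw [hx]
      simp [mul_comm]
    have hfi : Integrable f (sig m) := (Lp.memLp f).integrable (by norm_num)
    let P := (sig m).withDensity (fun x => ENNReal.ofReal (f x))
    let P' := (sig m).withDensity (fun x => ENNReal.ofReal (-f x))
    haveI : IsFiniteMeasure P := isFiniteMeasure_withDensity_ofReal hfi.2
    haveI : IsFiniteMeasure P' := isFiniteMeasure_withDensity_ofReal hfi.neg.2
    have hm1 : AEMeasurable (fun x => ENNReal.ofReal (f x)) (sig m) :=
      hfi.aestronglyMeasurable.aemeasurable.ennreal_ofReal
    have hm2 : AEMeasurable (fun x => ENNReal.ofReal (-f x)) (sig m) :=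
      hfi.aestronglyMeasurable.aemeasurable.neg.ennreal_ofReal
    have hPP : P = P' := by
      refine ext_of_forall_mem_subalgebra_integral_eq_of_polish (𝕜 := ℝ) (A := AA m) ?_ ?_
      · intro x y hxy
        by_contra hcon
        apply hxy
        apply om_sep
        intro a
        by_contra hne
        apply hcon
        refine ⟨om a, ⟨(BoundedContinuousFunction.toContinuousMapStarₐ ℝ) (omB a), ?_, rfl⟩, hne⟩
        exact ⟨omB a, Algebra.subset_adjoin ⟨a, rfl⟩, rfl⟩
      · intro g hg
        have hgi : Integrable (fun x => g x * f x) (sig m) :=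
          hfi.bdd_mul g.continuous.aestronglyMeasurable (Eventually.of_forall g.norm_coe_le_norm)
        have e1 : ∫ x, g x ∂P = ∫ x, (max (f x) 0) * g x ∂(sig m) := by
          simp only [P]
          rw [integral_withDensity_eq_integral_toReal_smul₀ hm1 (by simp)]
          rfl
        have e2 : ∫ x, g x ∂P' = ∫ x, (max (-f x) 0) * g x ∂(sig m) := by
          simp only [P']
          rw [integral_withDensity_eq_integral_toReal_smul₀ hm2 (by simp)]
          rfl
        rw [e1, e2, ← sub_eq_zero, ← integral_sub]
        refine Eq.trans ?_ (horth g hg)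
        · refine integral_congr_ae (Eventually.of_forall fun x => ?_)
          simp only
          rcases le_total 0 (f x) with h | h
          · rw [max_eq_left h, max_eq_right (by linarith)]; ring
          · rw [max_eq_right h, max_eq_left (by linarith)]; ring
        · have := hfi.pos_part.bdd_mul g.continuous.aestronglyMeasurable
            (Eventually.of_forall g.norm_coe_le_norm)
          simpa [mul_comm] using this
        · have := hfi.neg_part.bdd_mul g.continuous.aestronglyMeasurable
            (Eventually.of_forall g.norm_coe_le_norm)
          simpa [mul_comm] using this
    have hae := (withDensity_eq_iff hm1 hm2 (by
      have := hfi.lintegral_lt_top; exact this.ne)).1 hPP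
    rw [Lp.eq_zero_iff_ae_eq_zero]
    filter_upwards [hae] with x hx
    simp only [Pi.zero_apply]
    rcases le_total 0 (f x) with h | h
    · rw [ENNReal.ofReal_of_nonpos (p := -f x) (by linarith), ENNReal.ofReal_eq_zero] at hx
      linarith
    · rw [ENNReal.ofReal_of_nonpos h, eq_comm, ENNReal.ofReal_eq_zero] at hx
      linarith
  have hcl := Submodule.topologicalClosure_eq_top_iff.2 hK
  have hmem : T Y ∈ closure (K : Set (Lp ℝ 2 (sig m))) := by
    have : T Y ∈ K.topologicalClosure := by rw [hcl]; trivial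
    exact this
  obtain ⟨b, ⟨g, hg, rfl⟩, hb⟩ := Metric.mem_closure_iff.1 hmem (Real.sqrt ε) (Real.sqrt_pos.2 hε)
  obtain ⟨N, hN⟩ := AA_mem hg
  refine ⟨N, g, hN, ?_⟩
  rw [dist_eq_norm] at hb
  have e : T Y - T.toLinearMap g = T (Y - g) := by rw [map_sub]; rfl
  rw [e] at hb
  have h3 : ‖T (Y - g)‖ ^ 2 = ∫ x, (Y x - g x) ^ 2 ∂(sig m) := by
    rw [← real_inner_self_eq_norm_sq, BoundedContinuousFunction.inner_toLp]
    simp [sq]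
  rw [← h3]
  have := Real.sq_sqrt hε.le
  nlinarith [norm_nonneg (T (Y - g)), Real.sqrt_nonneg ε]

lemma lam_mono {k N : ℕ} (h : k ≤ N) : (k * (k + m + 1) : ℝ) ≤ N * (N + m + 1) := by
  have : (k : ℝ) ≤ N := by exact_mod_cast h
  gcongr

lemma sq_split (p g : X m →ᵇ ℝ) (h : ∫ x, (p x - g x) * g x ∂(sig m) = 0) :
    ∫ x, p x ^ 2 ∂(sig m) = ∫ x, g x ^ 2 ∂(sig m) + ∫ x, (p x - g x) ^ 2 ∂(sig m) := by
  have e : ∀ x, p x ^ 2 = g x ^ 2 + (p x - g x) ^ 2 + 2 * ((p x - g x) * g x) := fun x => by ring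
  have i1 : Integrable (fun x => g x ^ 2) (sig m) := by simpa [sq] using bint (g * g)
  have i2 : Integrable (fun x => (p x - g x) ^ 2) (sig m) := by
    simpa [sq] using bint ((p - g) * (p - g))
  have i3 : Integrable (fun x => 2 * ((p x - g x) * g x)) (sig m) := by
    simpa using (bint ((p - g) * g)).const_mul 2
  simp only [e]
  have i12 : Integrable (fun x => g x ^ 2 + (p x - g x) ^ 2) (sig m) := i1.add i2
  rw [integral_add i12 i3, integral_add i1 i2, integral_const_mul, h]; ring

lemma gap_poly (hm : 1 ≤ m) (k N : ℕ) {p : X m →ᵇ ℝ} (hp : p ∈ MP m N)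
    (ho : ∀ w ∈ WW m k, ∫ x, p x * w x ∂(sig m) = 0) :
    (k * (k + m + 1) : ℝ) * ∫ x, p x ^ 2 ∂(sig m) ≤ D p p := by
  have triv : p ∈ WW m k → (k * (k + m + 1) : ℝ) * ∫ x, p x ^ 2 ∂(sig m) ≤ D p p := by
    intro h
    have := ho p h
    simp only [sq]
    rw [this, mul_zero]
    exact D_self_nonneg _
  induction N generalizing p with
  | zero =>
    rcases Nat.eq_zero_or_pos k with rfl | hk
    · simpa using D_self_nonneg _
    · refine triv ?_
      obtain ⟨j, rfl⟩ := Nat.exists_eq_succ_of_ne_zero hk.ne'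
      exact MM_mono (Nat.zero_le j) hp
  | succ N ih =>
    rcases Nat.lt_or_ge (N + 1) k with hk | hk
    · refine triv ?_
      obtain ⟨j, rfl⟩ := Nat.exists_eq_succ_of_ne_zero (by omega : k ≠ 0)
      exact MM_mono (by omega) hp
    obtain ⟨g, hg, hgo⟩ := exists_proj N p
    have hh : p - g ∈ MP m (N + 1) := Submodule.sub_mem _ hp (MM_mono (Nat.le_succ N) hg)
    obtain ⟨r, hr, hD⟩ := D_poly hm (N + 1) hh
    obtain ⟨r', hr', hD'⟩ := D_poly hm N hg
    have hr1 : r ∈ MP m N := hr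
    have hr1' : r' ∈ MP m N := WW_le (Nat.le_succ N) hr'
    have hA := pow_adm _ hh
    have gA := pow_adm _ hg
    have hsplit := sq_split p g (hgo g hg)
    have ep : (p : X m → ℝ) = fun y => g y + (p - g : X m →ᵇ ℝ) y := by ext y; simp
    have c1 : D g (p - g : X m →ᵇ ℝ) = 0 := by
      rw [hD' _ hA]
      have := hgo (((N * (N + m + 1) : ℝ)) • g + r') (Submodule.add_mem _
        (Submodule.smul_mem _ _ hg) hr1')
      rw [← this]
      refine integral_congr_ae (Eventually.of_forall fun x => ?_)
      simp; ring
    have c2 : D (p - g : X m →ᵇ ℝ) (p - g : X m →ᵇ ℝ) =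
        ((N + 1 : ℕ) * ((N + 1 : ℕ) + m + 1) : ℝ) * ∫ x, (p x - g x) ^ 2 ∂(sig m) := by
      rw [hD _ hA]
      have := hgo r hr1
      have i1 := bint (((N + 1 : ℕ) * ((N + 1 : ℕ) + m + 1) : ℝ) • ((p - g) * (p - g)))
      have i2 := bint ((p - g) * r)
      rw [← integral_const_mul, ← add_zero (∫ x, _ * (p x - g x) ^ 2 ∂(sig m)), ← this,
        ← integral_add]
      · refine integral_congr_ae (Eventually.of_forall fun x => ?_)
        simp; ring
      · refine i1.congr (Eventually.of_forall fun x => ?_)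
        show (((N + 1 : ℕ) * ((N + 1 : ℕ) + m + 1) : ℝ)) • ((p x - g x) * (p x - g x)) = _
        rw [smul_eq_mul]; ring
      · exact i2
    have c3 := ih hg (fun w hw => by
      have h1 := ho w hw
      have h2 := hgo w (WW_le hk hw)
      have i1 : Integrable (fun x => p x * w x) (sig m) := bint (p * w)
      have i2 : Integrable (fun x => (p x - g x) * w x) (sig m) := bint ((p - g) * w)
      have : ∫ x, g x * w x ∂(sig m) = ∫ x, (p x * w x - (p x - g x) * w x) ∂(sig m) := by
        refine integral_congr_ae (Eventually.of_forall fun x => ?_)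
        simp only; ring
      rw [this, integral_sub i1 i2, h1, h2, sub_zero]) (fun h => by
      simp only [sq]
      have h1 := ho g h
      have h2 := hgo g hg
      have i1 : Integrable (fun x => p x * g x) (sig m) := bint (p * g)
      have i2 : Integrable (fun x => (p x - g x) * g x) (sig m) := bint ((p - g) * g)
      have : ∫ x, g x * g x ∂(sig m) = ∫ x, (p x * g x - (p x - g x) * g x) ∂(sig m) := by
        refine integral_congr_ae (Eventually.of_forall fun x => ?_)
        simp only; ring
      rw [this, integral_sub i1 i2, h1, h2, sub_zero, mul_zero]
      exact D_self_nonneg _)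
    have hDp : D p p = D g g + 2 * D g (p - g : X m →ᵇ ℝ) +
        D (p - g : X m →ᵇ ℝ) (p - g : X m →ᵇ ℝ) := by
      conv_lhs => rw [ep]
      exact D_sq_add gA hA
    rw [hDp, c1, c2, hsplit]
    have hmono := lam_mono (m := m) hk
    have : 0 ≤ ∫ x, (p x - g x) ^ 2 ∂(sig m) := integral_nonneg fun x => sq_nonneg _
    have := mul_le_mul_of_nonneg_right hmono this
    linarith

/-- Spectral gap: functions orthogonal to polynomials of degree `< k`. -/
lemma gap (hm : 1 ≤ m) (k : ℕ) {Y : X m → ℝ} (hY : Adm Y)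
    (ho : ∀ w ∈ WW m k, ∫ x, Y x * w x ∂(sig m) = 0) :
    (k * (k + m + 1) : ℝ) * ∫ x, Y x ^ 2 ∂(sig m) ≤ D Y Y := by
  refine le_of_forall_pos_le_add fun ε hε => ?_
  have hk0 : (0 : ℝ) ≤ k * (k + m + 1) := by positivity
  obtain ⟨N0, g0, hg0, h0⟩ := dense_poly (toB hY) (ε := ε / (k * (k + m + 1) + 1)) (by positivity)
  obtain ⟨N, hN0, hNk⟩ : ∃ N, N0 ≤ N ∧ k ≤ N + 1 := ⟨max N0 k, le_max_left _ _, by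
    have := le_max_right N0 k; omega⟩
  have hg0' := MM_mono (m := m) hN0 hg0
  obtain ⟨g, hg, hgo⟩ := exists_proj N (toB hY)
  have gA := pow_adm _ hg
  obtain ⟨r', hr', hD'⟩ := D_poly hm N hg
  have hr1' : r' ∈ MP m N := WW_le (Nat.le_succ N) hr'
  have hA := hY.sub gA
  have c1 : D g (fun x => Y x - g x) = 0 := by
    rw [hD' _ hA]
    have := hgo (((N * (N + m + 1) : ℝ)) • g + r') (Submodule.add_mem _
      (Submodule.smul_mem _ _ hg) hr1')
    rw [← this]
    refine integral_congr_ae (Eventually.of_forall fun x => ?_)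
    simp; ring
  have hDY : D Y Y = D g g + 2 * D g (fun x => Y x - g x) +
      D (fun x => Y x - g x) (fun x => Y x - g x) := by
    have ep : Y = fun y => g y + (Y y - g y) := by ext y; simp
    conv_lhs => rw [ep]
    exact D_sq_add gA hA
  have c3 := gap_poly hm k N hg (fun w hw => by
      have h1 := ho w hw
      have h2 := hgo w (WW_le hNk hw)
      have i1 : Integrable (fun x => Y x * w x) (sig m) := bint (toB hY * w)
      have i2 : Integrable (fun x => (Y x - g x) * w x) (sig m) := bint ((toB hY - g) * w)
      have : ∫ x, g x * w x ∂(sig m) = ∫ x, (Y x * w x - (Y x - g x) * w x) ∂(sig m) := by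
        refine integral_congr_ae (Eventually.of_forall fun x => ?_)
        simp only; ring
      rw [this, integral_sub i1 i2, h1]
      simp at h2
      rw [h2, sub_zero])
  have hsplit := sq_split (toB hY) g (hgo g hg)
  have hsplit2 : ∫ x, (Y x - g0 x) ^ 2 ∂(sig m) =
      ∫ x, (Y x - g x) ^ 2 ∂(sig m) + ∫ x, (g x - g0 x) ^ 2 ∂(sig m) := by
    have h2 := sq_split (toB hY - g0) (g - g0) (by
      have := hgo (g - g0) (Submodule.sub_mem _ hg hg0')
      rw [← this]
      refine integral_congr_ae (Eventually.of_forall fun x => ?_)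
      simp)
    simp at h2
    linarith
  simp only [toB_apply] at h0 hsplit
  have n1 : 0 ≤ ∫ x, (g x - g0 x) ^ 2 ∂(sig m) := integral_nonneg fun x => sq_nonneg _
  have n2 := D_self_nonneg (fun x => Y x - g x)
  rw [hDY, c1, hsplit]
  have h4 : ∫ x, (Y x - g x) ^ 2 ∂(sig m) ≤ ε / (k * (k + m + 1) + 1) := by linarith
  have h5 : (k * (k + m + 1) : ℝ) * ∫ x, (Y x - g x) ^ 2 ∂(sig m) ≤ ε := by
    calc _ ≤ (k * (k + m + 1) : ℝ) * (ε / (k * (k + m + 1) + 1)) :=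
          mul_le_mul_of_nonneg_left h4 hk0
      _ ≤ ε := by
        rw [← mul_div_assoc, div_le_iff₀ (by positivity)]
        nlinarith
  linarith

end BE

namespace BE

open MeasureTheory Filter Topology

variable {m : ℕ}

/-- The standard bubble. -/
noncomputable def phi (x : X m) : ℝ := rho x ^ ((m : ℝ) / 2)

/-- The Dirichlet energy. -/
noncomputable def GE (u : X m → ℝ) : ℝ := ∫ x, ∑ i, (pd i u x) ^ 2

noncomputable def kap (m : ℕ) : ℝ := m * (m + 2) / 4

noncomputable def qq (m : ℕ) : ℝ := 2 * (m + 2) / m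

/-- The conformal energy on the sphere. -/
noncomputable def En (U : X m → ℝ) : ℝ := D U U + kap m * ∫ x, U x ^ 2 ∂(sig m)

/-- The integral of `|U|^q`. -/
noncomputable def Iq (U : X m → ℝ) : ℝ := ∫ x, |U x| ^ (qq m) ∂(sig m)

lemma phi_pos (x : X m) : 0 < phi x := Real.rpow_pos_of_pos (rho_pos x) _

lemma phi_sq (x : X m) : phi x ^ 2 = rho x ^ m := by
  unfold phi
  rw [← Real.rpow_natCast, ← Real.rpow_mul (rho_pos x).le, ← Real.rpow_natCast]
  congr 1; push_cast; ring

lemma phi_qq (hm : 1 ≤ m) (x : X m) : phi x ^ (qq m) = rho x ^ (m + 2) := by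
  unfold phi
  have : (m : ℝ) ≠ 0 := by positivity
  rw [← Real.rpow_mul (rho_pos x).le, ← Real.rpow_natCast]
  congr 1; unfold qq; push_cast; field_simp

lemma contDiff_phi {k : WithTop ℕ∞} : ContDiff ℝ k (phi : X m → ℝ) :=
  contDiff_rho.rpow_const_of_ne (fun x => (rho_pos x).ne')

lemma diff_phi (x : X m) : DifferentiableAt ℝ (phi : X m → ℝ) x :=
  ((contDiff_phi (k := 1)).differentiable (by norm_num)) x

lemma pd_phi (i : Fin (m + 2)) (x : X m) :
    pd i phi x = -((m : ℝ) / 2) * phi x * (rho x * x i) := by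
  have h := (hasFDerivAt_rho x).rpow_const (p := (m : ℝ) / 2) (Or.inl (rho_pos x).ne')
  have h0 := rho_pos x
  unfold pd
  have e : (phi : X m → ℝ) = fun y => rho y ^ ((m : ℝ) / 2) := rfl
  rw [e, h.fderiv]
  simp [EuclideanSpace.inner_single_right]
  rw [Real.rpow_sub_one h0.ne']
  field_simp

lemma pd_phi_mul {U : X m → ℝ} {x : X m} (hU : DifferentiableAt ℝ U x) (i : Fin (m + 2)) :
    pd i (fun y => phi y * U y) x = phi x * (pd i U x - (m : ℝ) / 2 * (rho x * x i) * U x) := by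
  rw [pd_mul i (diff_phi x) hU, pd_phi]; ring

/-- A compactly supported continuous function decays. -/
lemma compact_decay {g : X m → ℝ} (hg : Continuous g) (hc : HasCompactSupport g) (k : ℕ) :
    ∃ C, ∀ x, |g x| ≤ C * rho x ^ k := by
  have h1 : HasCompactSupport (fun x => g x / rho x ^ k) := by
    have : (fun x => g x / rho x ^ k) = g * (fun x => (rho x ^ k)⁻¹) := by
      ext x; simp [div_eq_mul_inv]
    rw [this]; exact hc.mul_right
  have h2 : Continuous (fun x => g x / rho x ^ k) :=
    hg.div (continuous_rho.pow k) (fun x => (pow_pos (rho_pos x) k).ne')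
  obtain ⟨C, hC⟩ := h1.exists_bound_of_continuous h2
  refine ⟨C, fun x => ?_⟩
  have h3 := hC x
  have h4 := pow_pos (rho_pos x) k
  rwa [Real.norm_eq_abs, abs_div, abs_of_pos h4, div_le_iff₀ h4] at h3

lemma compact_pd {g : X m → ℝ} (hc : HasCompactSupport g) (i : Fin (m + 2)) :
    HasCompactSupport (pd i g) := by
  have := hc.fderiv (𝕜 := ℝ)
  unfold pd
  exact this.comp_left (g := fun L : X m →L[ℝ] ℝ => L (EuclideanSpace.single i 1)) (by simp)

lemma integral_pd_zero (hm : 1 ≤ m) {h : X m → ℝ} (hh : ContDiff ℝ 1 h) (hc : HasCompactSupport h)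
    (i : Fin (m + 2)) : Integrable (pd i h) ∧ ∫ x, pd i h x = 0 := by
  obtain ⟨C, hC⟩ := compact_decay hh.continuous hc (m + 1)
  obtain ⟨K, hK⟩ := compact_decay (continuous_pd hh i) (compact_pd hc i) (m + 1)
  have hp : ∀ x : X m, 0 ≤ rho x ^ (m + 1) := fun x => (pow_pos (rho_pos x) _).le
  have := ibp hm i hh (Adm.const 1) (C := max C K)
    (fun x => (hC x).trans (mul_le_mul_of_nonneg_right (le_max_left _ _) (hp x)))
    (fun x => (hK x).trans (mul_le_mul_of_nonneg_right (le_max_right _ _) (hp x)))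
  simp [pd_const] at this
  exact this

lemma div_field {U : X m → ℝ} (hU : ContDiff ℝ 1 U) (x : X m) (i : Fin (m + 2)) :
    pd i (fun y => (rho y ^ (m + 1) * y i) * (U y * U y)) x
      = rho x ^ (m + 1) * x i * (2 * U x * pd i U x)
        + U x * U x * (rho x ^ (m + 1) - (m + 1) * rho x ^ (m + 2) * x i ^ 2) := by
  have dU : DifferentiableAt ℝ U x := (hU.differentiable (by norm_num)) x
  have dr := diff_rho x
  have dc := diff_coord x i
  have dp : DifferentiableAt ℝ (fun y : X m => rho y ^ (m + 1)) x := dr.pow _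
  rw [pd_mul i (f := fun y => rho y ^ (m + 1) * y i) (g := fun y => U y * U y) (dp.mul dc)
    (dU.mul dU), pd_mul i dU dU, pd_mul i (f := fun y => rho y ^ (m + 1)) dp dc, pd_pow i m dr,
    pd_rho, pd_coord]
  simp
  ring

/-- Pointwise conformal identity. -/
lemma conf_pt {U : X m → ℝ} (hU : ContDiff ℝ 1 U) (x : X m) :
    ∑ i, (pd i (fun y => phi y * U y) x) ^ 2
      = rho x ^ (m + 2) * (Gam U U x + kap m * U x ^ 2)
        - (m : ℝ) / 2 * ∑ i, pd i (fun y => (rho y ^ (m + 1) * y i) * (U y * U y)) x := by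
  have dU : DifferentiableAt ℝ U x := (hU.differentiable (by norm_num)) x
  have h := sum_sq x
  have h0 := (rho_pos x).ne'
  have e1 : ∑ i, (pd i (fun y => phi y * U y) x) ^ 2 = rho x ^ m * ((∑ i, pd i U x * pd i U x)
      - m * rho x * U x * (∑ i, x i * pd i U x)
      + m ^ 2 / 4 * rho x ^ 2 * U x ^ 2 * ∑ i, x i ^ 2) := by
    rw [Finset.mul_sum, Finset.mul_sum, ← Finset.sum_sub_distrib, ← Finset.sum_add_distrib,
      Finset.mul_sum]
    refine Finset.sum_congr rfl fun i _ => ?_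
    rw [pd_phi_mul dU, mul_pow, phi_sq]; ring
  have e2 : ∑ i, pd i (fun y => (rho y ^ (m + 1) * y i) * (U y * U y)) x
      = 2 * rho x ^ (m + 1) * U x * (∑ i, x i * pd i U x) + U x * U x *
        ((m + 2) * rho x ^ (m + 1) - (m + 1) * rho x ^ (m + 2) * ∑ i, x i ^ 2) := by
    simp only [div_field hU]
    rw [Finset.sum_add_distrib, ← Finset.mul_sum, Finset.sum_sub_distrib, ← Finset.mul_sum]
    have e4 : ∑ i, rho x ^ (m + 1) * x i * (2 * U x * pd i U x)
        = ∑ i, 2 * rho x ^ (m + 1) * U x * (x i * pd i U x) :=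
      Finset.sum_congr rfl fun i _ => by ring
    rw [e4, ← Finset.mul_sum]
    simp
  rw [e1, e2]
  unfold Gam kap
  have e3 : ∑ i, x i ^ 2 = (2 - rho x) / rho x := by rw [← h]; field_simp
  rw [e3]
  field_simp
  ring

lemma Adm.sq_int {U : X m → ℝ} (hU : Adm U) : Integrable (fun x => U x ^ 2) (sig m) := by
  have := (hU.mul hU).int
  simpa [sq] using this

lemma En_eq {U : X m → ℝ} (hU : Adm U) :
    En U = ∫ x, rho x ^ (m + 2) * (Gam U U x + kap m * U x ^ 2) := by
  unfold En D
  rw [← integral_const_mul, ← integral_add (Gam_int hU hU) (hU.sq_int.const_mul _), integral_sig]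

lemma En_int {U : X m → ℝ} (hU : Adm U) :
    Integrable (fun x => rho x ^ (m + 2) * (Gam U U x + kap m * U x ^ 2)) := by
  rw [← integrable_sig (fun x => Gam U U x + kap m * U x ^ 2)]
  exact (Gam_int hU hU).add (hU.sq_int.const_mul _)

lemma conf_compact (hm : 1 ≤ m) {U : X m → ℝ} (hU : ContDiff ℝ 1 U) (hc : HasCompactSupport U) :
    GE (fun y => phi y * U y) = En U := by
  have hA := Adm.of_compact hU hc
  rw [En_eq hA]
  unfold GE
  simp only [conf_pt hU]
  have h1 : ∀ i : Fin (m + 2), Integrable (pd i (fun y => (rho y ^ (m + 1) * y i) * (U y * U y))) ∧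
      ∫ x, pd i (fun y => (rho y ^ (m + 1) * y i) * (U y * U y)) x = 0 := by
    intro i
    refine integral_pd_zero hm ?_ ?_ i
    · exact (((contDiff_rho).pow _).mul (contDiff_coord i)).mul (hU.mul hU)
    · exact HasCompactSupport.mul_left (f := fun y => rho y ^ (m + 1) * y i)
        (f' := fun y => U y * U y) (hc.mul_left (f := U))
  have h2 : Integrable (fun x => (m : ℝ) / 2 * ∑ i, pd i (fun y => (rho y ^ (m + 1) * y i) * (U y * U y)) x) :=
    (integrable_finsetSum _ fun i _ => (h1 i).1).const_mul _
  rw [integral_sub (En_int hA) h2, integral_const_mul, integral_finsetSum _ fun i _ => (h1 i).1]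
  simp [fun i => (h1 i).2]

lemma exists_cutoff : ∃ (χ : ℕ → X m → ℝ) (C : ℝ), 0 ≤ C ∧ (∀ k, ContDiff ℝ 1 (χ k)) ∧
    (∀ k, HasCompactSupport (χ k)) ∧ (∀ k x, |χ k x| ≤ 1) ∧
    (∀ k i x, (pd i (χ k) x) ^ 2 ≤ C * rho x) ∧
    (∀ x, ∀ᶠ k in atTop, χ k x = 1 ∧ ∀ i, pd i (χ k) x = 0) := by
  let f : ContDiffBump (0 : X m) := ⟨1, 2, by norm_num, by norm_num⟩
  have hfc : ContDiff ℝ 1 (f : X m → ℝ) := f.contDiff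
  have hfs : HasCompactSupport (f : X m → ℝ) := f.hasCompactSupport
  have hb : ∀ i, ∃ K, ∀ x, |pd i (f : X m → ℝ) x| ≤ K := by
    intro i
    obtain ⟨K, hK⟩ := (compact_pd hfs i).exists_bound_of_continuous (continuous_pd hfc i)
    exact ⟨K, hK⟩
  choose K hK using hb
  let KK := ∑ i, |K i|
  have hKK : ∀ i x, |pd i (f : X m → ℝ) x| ≤ KK := fun i x =>
    ((hK i x).trans (le_abs_self _)).trans
      (Finset.single_le_sum (f := fun i => |K i|) (fun _ _ => abs_nonneg _) (Finset.mem_univ i))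
  have hpd : ∀ (k : ℕ) i (x : X m), pd i (fun y => f (((k : ℝ) + 1)⁻¹ • y)) x
      = ((k : ℝ) + 1)⁻¹ * pd i (f : X m → ℝ) (((k : ℝ) + 1)⁻¹ • x) := by
    intro k i x
    unfold pd
    have h1 : HasFDerivAt (f : X m → ℝ) _ (((k : ℝ) + 1)⁻¹ • x) :=
      ((hfc.differentiable (by norm_num)) (((k : ℝ) + 1)⁻¹ • x)).hasFDerivAt
    have h2 : HasFDerivAt (fun y : X m => ((k : ℝ) + 1)⁻¹ • y) _ x :=
      (hasFDerivAt_id (𝕜 := ℝ) x).const_smul (((k : ℝ) + 1)⁻¹)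
    have h3 := h1.comp x h2
    have e : (fun y => f (((k : ℝ) + 1)⁻¹ • y)) = (f : X m → ℝ) ∘ (fun y : X m => ((k : ℝ) + 1)⁻¹ • y) := rfl
    rw [e, h3.fderiv]
    simp
  have hKK0 : 0 ≤ KK := Finset.sum_nonneg fun _ _ => abs_nonneg _
  refine ⟨fun k x => f (((k : ℝ) + 1)⁻¹ • x), KK ^ 2 * (5 / 2), by positivity, ?_, ?_, ?_, ?_, ?_⟩
  · intro k
    exact hfc.comp (contDiff_const_smul _)
  · intro k
    exact hfs.comp_smul (by positivity : ((k : ℝ) + 1)⁻¹ ≠ 0)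
  · intro k x
    rw [abs_of_nonneg f.nonneg]; exact f.le_one
  · intro k i x
    rw [hpd]
    by_cases hx : ‖((k : ℝ) + 1)⁻¹ • x‖ ≤ 2
    · have hk : (0 : ℝ) < k + 1 := by positivity
      rw [norm_smul, norm_inv, Real.norm_of_nonneg hk.le, inv_mul_le_iff₀ hk] at hx
      have h1 : (((k : ℝ) + 1)⁻¹) ^ 2 ≤ 5 / 2 * rho x := by
        unfold rho
        rw [inv_pow, inv_le_comm₀ (by positivity) (by positivity)]
        have : (5 / 2 * (2 / (1 + ‖x‖ ^ 2)))⁻¹ = (1 + ‖x‖ ^ 2) / 5 := by field_simp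
        rw [this]
        nlinarith [norm_nonneg x, (Nat.cast_nonneg k : (0 : ℝ) ≤ k)]
      rw [mul_pow]
      have h2 : (pd i (f : X m → ℝ) (((k : ℝ) + 1)⁻¹ • x)) ^ 2 ≤ KK ^ 2 := by
        rw [← sq_abs]; exact pow_le_pow_left₀ (abs_nonneg _) (hKK i _) 2
      calc _ ≤ (5 / 2 * rho x) * KK ^ 2 := mul_le_mul h1 h2 (sq_nonneg _)
            (by have := rho_pos x; positivity)
        _ = _ := by ring
    · have : pd i (f : X m → ℝ) (((k : ℝ) + 1)⁻¹ • x) = 0 := by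
        have h1 : (((k : ℝ) + 1)⁻¹ • x) ∉ tsupport (f : X m → ℝ) := by
          rw [f.tsupport_eq, mem_closedBall_zero_iff]
          exact hx
        unfold pd
        rw [fderiv_of_notMem_tsupport ℝ h1]; simp
      rw [this, mul_zero]
      have := rho_pos x
      norm_num
      positivity
  · intro x
    have ht : Tendsto (fun k : ℕ => ((k : ℝ) + 1)⁻¹ • x) atTop (𝓝 0) := by
      have := (tendsto_one_div_add_atTop_nhds_zero_nat (𝕜 := ℝ)).smul_const x
      simpa using this
    have hev := f.eventuallyEq_one
    have h1 := ht.eventually hev.eventuallyEq_nhds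
    filter_upwards [h1] with k hk
    refine ⟨hk.eq_of_nhds, fun i => ?_⟩
    rw [hpd]
    unfold pd
    rw [hk.fderiv_eq]
    simp

end BE

namespace BE

open MeasureTheory Filter Topology

variable {m : ℕ}

lemma qq_pos (hm : 1 ≤ m) : 0 < qq m := by
  have : (0 : ℝ) < m := by exact_mod_cast hm
  unfold qq; positivity

lemma two_lt_qq (hm : 1 ≤ m) : 2 < qq m := by
  have : (0 : ℝ) < m := by exact_mod_cast hm
  unfold qq; rw [lt_div_iff₀ this]; linarith

lemma kap_pos (hm : 1 ≤ m) : 0 < kap m := by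
  have : (0 : ℝ) < m := by exact_mod_cast hm
  unfold kap; positivity

lemma cont_rpow (hm : 1 ≤ m) {U : X m → ℝ} (hU : Continuous U) :
    Continuous (fun x => |U x| ^ (qq m)) :=
  hU.abs.rpow_const (fun _ => Or.inr (qq_pos hm).le)

lemma int_rpow (hm : 1 ≤ m) {U : X m → ℝ} (hU : Adm U) :
    Integrable (fun x => |U x| ^ (qq m)) (sig m) := by
  obtain ⟨C, hC0, hC⟩ := hU.bd
  refine integrable_of_bdd (cont_rpow hm hU.cont) (C := C ^ (qq m)) fun x => ?_
  rw [abs_of_nonneg (Real.rpow_nonneg (abs_nonneg _) _)]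
  exact Real.rpow_le_rpow (abs_nonneg _) (hC x).1 (qq_pos hm).le

lemma cutoff_seq (hm : 1 ≤ m) {U : X m → ℝ} (hU : Adm U) : ∃ V : ℕ → X m → ℝ,
    (∀ k, ContDiff ℝ 1 (V k)) ∧ (∀ k, HasCompactSupport (V k)) ∧
    Tendsto (fun k => En (V k)) atTop (𝓝 (En U)) ∧
    Tendsto (fun k => GE (fun y => phi y * V k y)) atTop (𝓝 (GE (fun y => phi y * U y))) ∧
    Tendsto (fun k => Iq (V k)) atTop (𝓝 (Iq U)) := by
  obtain ⟨χ, C₁, hC1, hχ1, hχ2, hχ3, hχ4, hχ5⟩ := exists_cutoff (m := m)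
  obtain ⟨C, hC0, hC⟩ := hU.bd
  let V : ℕ → X m → ℝ := fun k x => χ k x * U x
  have hV1 : ∀ k, ContDiff ℝ 1 (V k) := fun k => (hχ1 k).mul hU.cd
  have hV2 : ∀ k, HasCompactSupport (V k) := fun k => (hχ2 k).mul_right
  have hVA : ∀ k, Adm (V k) := fun k => Adm.of_compact (hV1 k) (hV2 k)
  have hpd : ∀ k i x, pd i (V k) x = χ k x * pd i U x + U x * pd i (χ k) x := fun k i x =>
    pd_mul i ((hχ1 k).differentiable (by norm_num) x) (hU.diff x)
  have hVb : ∀ k x, |V k x| ≤ C := by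
    intro k x
    show |χ k x * U x| ≤ C
    rw [abs_mul]
    calc _ ≤ 1 * C := mul_le_mul (hχ3 k x) (hC x).1 (abs_nonneg _) (by norm_num)
      _ = C := one_mul _
  have hVs : ∀ k x, V k x ^ 2 ≤ C ^ 2 := fun k x => by
    rw [← sq_abs]; exact pow_le_pow_left₀ (abs_nonneg _) (hVb k x) 2
  let K := 2 * C ^ 2 * (2 + C₁)
  have hK0 : 0 ≤ K := by positivity
  have hVp : ∀ k i x, (pd i (V k) x) ^ 2 ≤ K * rho x := by
    intro k i x
    rw [hpd]
    have h0 := rho_pos x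
    have h2 := rho_le_two x
    have a1 : (χ k x) ^ 2 ≤ 1 := by
      rw [← sq_abs]; exact pow_le_one₀ (abs_nonneg _) (hχ3 k x)
    have a2 : (pd i U x) ^ 2 ≤ (C * rho x) ^ 2 := by
      rw [← sq_abs]; exact pow_le_pow_left₀ (abs_nonneg _) ((hC x).2 i) 2
    have a3 : (U x) ^ 2 ≤ C ^ 2 := by
      rw [← sq_abs]; exact pow_le_pow_left₀ (abs_nonneg _) ((hC x).1) 2
    have a4 := hχ4 k i x
    have b1 : (χ k x) ^ 2 * (pd i U x) ^ 2 ≤ 1 * (C ^ 2 * (2 * rho x)) :=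
      mul_le_mul a1 (a2.trans (by nlinarith [sq_nonneg C, mul_nonneg (sq_nonneg C) h0.le]))
        (sq_nonneg _) (by norm_num)
    have b2 : (U x) ^ 2 * (pd i (χ k) x) ^ 2 ≤ C ^ 2 * (C₁ * rho x) :=
      mul_le_mul a3 a4 (sq_nonneg _) (sq_nonneg _)
    have : (χ k x * pd i U x + U x * pd i (χ k) x) ^ 2 ≤
        2 * ((χ k x) ^ 2 * (pd i U x) ^ 2) + 2 * ((U x) ^ 2 * (pd i (χ k) x) ^ 2) := by
      nlinarith [sq_nonneg (χ k x * pd i U x - U x * pd i (χ k) x)]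
    calc _ ≤ _ := this
      _ ≤ 2 * (1 * (C ^ 2 * (2 * rho x))) + 2 * (C ^ 2 * (C₁ * rho x)) := by linarith
      _ = K * rho x := by simp only [K]; ring
  have hlim : ∀ x, ∀ᶠ k in atTop, V k x = U x ∧ ∀ i, pd i (V k) x = pd i U x := by
    intro x
    filter_upwards [hχ5 x] with k hk
    refine ⟨?_, fun i => ?_⟩
    · show χ k x * U x = U x
      rw [hk.1, one_mul]
    · rw [hpd, hk.1, hk.2 i]; ring
  have hrho : Integrable (fun x : X m => rho x ^ (m + 1)) := integrable_rho_pow (m + 1) (by omega)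
  have hGc : ∀ k, Continuous (fun x => Gam (V k) (V k) x) := fun k => Gam_cont (hVA k) (hVA k)
  refine ⟨V, hV1, hV2, ?_, ?_, ?_⟩
  · simp only [fun k => En_eq (hVA k), En_eq hU]
    refine tendsto_integral_of_dominated_convergence
      (fun x => ((m + 2) * K + 2 * kap m * C ^ 2) * rho x ^ (m + 1)) ?_ (hrho.const_mul _) ?_ ?_
    · intro k
      exact ((continuous_rho.pow _).mul ((hGc k).add
        (continuous_const.mul ((hVA k).cont.pow 2)))).aestronglyMeasurable
    · intro k
      refine Eventually.of_forall fun x => ?_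
      have h0 := rho_pos x
      have h2 := rho_le_two x
      have hk := (kap_pos hm).le
      have g0 := Gam_self_nonneg (V k) x
      rw [Real.norm_of_nonneg (by positivity)]
      have g1 : rho x ^ (m + 2) * Gam (V k) (V k) x ≤ (m + 2) * K * rho x ^ (m + 1) := by
        have : rho x ^ (m + 2) * Gam (V k) (V k) x = rho x ^ m * ∑ i, (pd i (V k) x) ^ 2 := by
          unfold Gam
          rw [pow_add]; field_simp
        rw [this]
        calc _ ≤ rho x ^ m * ∑ i : Fin (m + 2), K * rho x := by
              gcongr with i; exact hVp k i x
          _ = _ := by simp; ring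
      have g2 : rho x ^ (m + 2) * (kap m * V k x ^ 2) ≤ 2 * kap m * C ^ 2 * rho x ^ (m + 1) := by
        calc _ = rho x * (rho x ^ (m + 1) * (kap m * V k x ^ 2)) := by ring
          _ ≤ 2 * (rho x ^ (m + 1) * (kap m * C ^ 2)) := by
            have := hVs k x
            gcongr ?_ * (_ * (_ * ?_))
          _ = _ := by ring
      linarith
    · refine Eventually.of_forall fun x => ?_
      refine tendsto_const_nhds.congr' ?_
      filter_upwards [hlim x] with k hk
      unfold Gam
      simp only [hk.1, hk.2]
  · unfold GE
    refine tendsto_integral_of_dominated_convergence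
      (fun x => ((m + 2) * (2 * (K + m ^ 2 / 2 * C ^ 2))) * rho x ^ (m + 1)) ?_ (hrho.const_mul _) ?_ ?_
    · intro k
      refine (continuous_finsetSum _ fun i _ => ?_).aestronglyMeasurable
      exact (continuous_pd (contDiff_phi.mul (hV1 k)) i).pow 2
    · intro k
      refine Eventually.of_forall fun x => ?_
      have h0 := rho_pos x
      rw [Real.norm_of_nonneg (Finset.sum_nonneg fun _ _ => sq_nonneg _)]
      calc _ ≤ ∑ i : Fin (m + 2), (2 * (K + m ^ 2 / 2 * C ^ 2)) * rho x ^ (m + 1) := by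
            gcongr with i
            rw [pd_phi_mul ((hVA k).diff x), mul_pow, phi_sq]
            have a1 := hVp k i x
            have a2 := hVs k x
            have a3 : (rho x * x i) ^ 2 ≤ 2 * rho x := by
              have b1 : x i ^ 2 ≤ ‖x‖ ^ 2 := by
                rw [← sq_abs]; exact pow_le_pow_left₀ (abs_nonneg _) (coord_le x i) 2
              have b2 := rho_norm_sq x
              calc (rho x * x i) ^ 2 = rho x * (rho x * x i ^ 2) := by ring
                _ ≤ rho x * (rho x * ‖x‖ ^ 2) := by gcongr
                _ = rho x * (2 - rho x) := by rw [b2]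
                _ ≤ 2 * rho x := by nlinarith
            have a4 : (rho x * x i) ^ 2 * (V k x) ^ 2 ≤ (2 * rho x) * C ^ 2 :=
              mul_le_mul a3 a2 (sq_nonneg _) (by positivity)
            have a5 : (pd i (V k) x - m / 2 * (rho x * x i) * V k x) ^ 2
                ≤ 2 * (pd i (V k) x) ^ 2 + 2 * ((m ^ 2 / 4) * ((rho x * x i) ^ 2 * (V k x) ^ 2)) := by
              nlinarith [sq_nonneg (pd i (V k) x + m / 2 * (rho x * x i) * V k x)]
            calc rho x ^ m * (pd i (V k) x - m / 2 * (rho x * x i) * V k x) ^ 2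
                ≤ rho x ^ m * (2 * (K * rho x) + 2 * ((m ^ 2 / 4) * ((2 * rho x) * C ^ 2))) := by
                  refine mul_le_mul_of_nonneg_left (a5.trans ?_) (by positivity)
                  gcongr
              _ = _ := by ring
        _ = _ := by simp; ring
    · refine Eventually.of_forall fun x => ?_
      refine tendsto_const_nhds.congr' ?_
      filter_upwards [hlim x] with k hk
      simp only [pd_phi_mul ((hVA k).diff x), pd_phi_mul (hU.diff x), hk.1, hk.2]
  · unfold Iq
    refine tendsto_integral_of_dominated_convergence (fun x => C ^ (qq m)) ?_
      (integrable_const _) ?_ ?_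
    · intro k
      exact (cont_rpow hm (hVA k).cont).aestronglyMeasurable
    · intro k
      refine Eventually.of_forall fun x => ?_
      rw [Real.norm_of_nonneg (Real.rpow_nonneg (abs_nonneg _) _)]
      exact Real.rpow_le_rpow (abs_nonneg _) (hVb k x) (qq_pos hm).le
    · refine Eventually.of_forall fun x => ?_
      refine tendsto_const_nhds.congr' ?_
      filter_upwards [hlim x] with k hk
      simp only [hk.1]

/-- The conformal identity. -/
lemma conf (hm : 1 ≤ m) {U : X m → ℝ} (hU : Adm U) : GE (fun y => phi y * U y) = En U := by
  obtain ⟨V, h1, h2, h3, h4, -⟩ := cutoff_seq hm hU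
  refine tendsto_nhds_unique h4 ?_
  simpa only [fun k => conf_compact hm (h1 k) (h2 k)] using h3

lemma Iq_eq (hm : 1 ≤ m) (U : X m → ℝ) : ∫ x, |phi x * U x| ^ (qq m) = Iq U := by
  unfold Iq
  rw [integral_sig]
  refine integral_congr_ae (Eventually.of_forall fun x => ?_)
  simp only
  rw [abs_mul, abs_of_pos (phi_pos x), Real.mul_rpow (phi_pos x).le (abs_nonneg _), phi_qq hm]

lemma Iq_nonneg (U : X m → ℝ) : 0 ≤ Iq U := integral_nonneg fun x => by positivity

/-- Passing an inequality from compactly supported functions to admissible ones. -/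
lemma sob_ext (hm : 1 ≤ m) {T : ℝ}
    (h : ∀ U : X m → ℝ, ContDiff ℝ 1 U → HasCompactSupport U → T * Iq U ^ (2 / qq m) ≤ En U)
    {U : X m → ℝ} (hU : Adm U) : T * Iq U ^ (2 / qq m) ≤ En U := by
  obtain ⟨V, h1, h2, h3, h4, h5⟩ := cutoff_seq hm hU
  refine le_of_tendsto_of_tendsto' ?_ h3 (fun k => h (V k) (h1 k) (h2 k))
  refine Tendsto.const_mul _ ?_
  exact ((Real.continuous_rpow_const (by have := qq_pos hm; positivity)).tendsto _).comp h5

lemma norm_fderiv_sq (u : X m → ℝ) (x : X m) : ‖fderiv ℝ u x‖ ^ 2 ≤ ∑ i, (pd i u x) ^ 2 := by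
  set L := fderiv ℝ u x with hL
  have h : ‖L‖ ≤ Real.sqrt (∑ i, (pd i u x) ^ 2) := by
    refine L.opNorm_le_bound (Real.sqrt_nonneg _) fun v => ?_
    have e : L v = ∑ i, v i * pd i u x := by
      conv_lhs => rw [← (EuclideanSpace.basisFun (Fin (m + 2)) ℝ).sum_repr v]
      simp [pd, hL]
    rw [e, Real.norm_eq_abs, EuclideanSpace.norm_eq, ← Real.sqrt_mul (Finset.sum_nonneg fun _ _ => sq_nonneg _),
      ← Real.sqrt_sq_eq_abs]
    apply Real.sqrt_le_sqrt
    simp only [Real.norm_eq_abs, sq_abs]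
    rw [mul_comm]
    exact Finset.sum_mul_sq_le_sq_mul_sq _ _ _
  calc _ ≤ (Real.sqrt (∑ i, (pd i u x) ^ 2)) ^ 2 := pow_le_pow_left₀ (norm_nonneg _) h 2
    _ = _ := Real.sq_sqrt (Finset.sum_nonneg fun _ _ => sq_nonneg _)

lemma int_norm_fderiv {u : X m → ℝ} (hu : ContDiff ℝ 1 u) (hc : HasCompactSupport u) :
    ∫ x, ‖fderiv ℝ u x‖ ^ 2 ≤ GE u := by
  have hcf : HasCompactSupport (fderiv ℝ u) := hc.fderiv (𝕜 := ℝ)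
  have c1 : Continuous (fun x => ‖fderiv ℝ u x‖ ^ 2) := (hu.continuous_fderiv (by norm_num)).norm.pow 2
  have c2 : HasCompactSupport (fun x => ‖fderiv ℝ u x‖ ^ 2) :=
    HasCompactSupport.comp_left (g := fun L : X m →L[ℝ] ℝ => ‖L‖ ^ 2) hcf (by simp)
  unfold GE
  refine integral_mono (c1.integrable_of_hasCompactSupport c2) ?_ (fun x => norm_fderiv_sq u x)
  refine integrable_finsetSum _ fun i _ => ?_
  have c3 : HasCompactSupport (fun x => pd i u x ^ 2) :=
    HasCompactSupport.comp_left (g := fun t : ℝ => t ^ 2) (compact_pd hc i) (by simp)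
  exact ((continuous_pd hu i).pow 2).integrable_of_hasCompactSupport c3

/-- Non-sharp Sobolev inequality on Euclidean space. -/
lemma sob_eucl (hm : 1 ≤ m) : ∃ K : ℝ, 0 < K ∧ ∀ u : X m → ℝ, ContDiff ℝ 1 u → HasCompactSupport u →
    (∫ x, |u x| ^ (qq m)) ^ (2 / qq m) ≤ K * GE u := by
  have hm0 : (0 : ℝ) < m := by exact_mod_cast hm
  let q : NNReal := ⟨qq m, (qq_pos hm).le⟩
  let c : NNReal := SNormLESNormFDerivOfEqConst ℝ (volume : Measure (X m)) ((2 : NNReal) : ℝ)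
  refine ⟨(c : ℝ) ^ 2 + 1, by positivity, fun u hu hc => ?_⟩
  have h := eLpNorm_le_eLpNorm_fderiv_of_eq (F := ℝ) (volume : Measure (X m)) hu hc (p := 2) (p' := q)
    (by norm_num) (by simp) (by
      show (qq m)⁻¹ = _
      simp only [finrank_euclideanSpace, Fintype.card_fin]
      unfold qq
      push_cast
      field_simp
      ring)
  have hq0 : (q : ENNReal) ≠ 0 := by
    have := qq_pos hm
    simp only [ne_eq, ENNReal.coe_eq_zero]
    intro h
    have h2 : (q : ℝ) = 0 := by rw [h]; rfl
    exact this.ne' h2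
  have hcf : HasCompactSupport (fderiv ℝ u) := hc.fderiv (𝕜 := ℝ)
  have mu : MemLp u q volume := hu.continuous.memLp_of_hasCompactSupport hc
  have mf : MemLp (fderiv ℝ u) 2 volume :=
    (hu.continuous_fderiv (by norm_num)).memLp_of_hasCompactSupport hcf
  have e2 : ((2 : NNReal) : ENNReal) = 2 := by norm_num
  rw [e2, mu.eLpNorm_eq_integral_rpow_norm hq0 (by simp),
    mf.eLpNorm_eq_integral_rpow_norm (by norm_num) (by norm_num),
    show (SNormLESNormFDerivOfEqConst ℝ (volume : Measure (X m)) ((2 : NNReal) : ℝ)) = c from rfl,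
    ← ENNReal.ofReal_coe_nnreal (p := c), ← ENNReal.ofReal_mul (by positivity),
    ENNReal.ofReal_le_ofReal_iff (by positivity)] at h
  have hqr : (q : ENNReal).toReal = qq m := rfl
  rw [hqr] at h
  simp only [Real.norm_eq_abs, ENNReal.toReal_ofNat, Real.rpow_ofNat] at h
  have hI : 0 ≤ ∫ x, |u x| ^ (qq m) := integral_nonneg fun x => by positivity
  have hJ : 0 ≤ ∫ x, ‖fderiv ℝ u x‖ ^ 2 := integral_nonneg fun x => by positivity
  have h3 : (∫ x, |u x| ^ (qq m)) ^ (2 / qq m) ≤ (c : ℝ) ^ 2 * ∫ x, ‖fderiv ℝ u x‖ ^ 2 := by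
    have h4 := pow_le_pow_left₀ (by positivity) h 2
    rw [mul_pow, ← Real.rpow_natCast, ← Real.rpow_mul hI,
      ← Real.rpow_natCast (_ ^ (2 : ℝ)⁻¹), ← Real.rpow_mul hJ] at h4
    have e5 : (qq m)⁻¹ * ((2 : ℕ) : ℝ) = 2 / qq m := by push_cast; rw [div_eq_mul_inv, mul_comm]
    have e6 : (2 : ℝ)⁻¹ * ((2 : ℕ) : ℝ) = 1 := by norm_num
    rw [e5, e6, Real.rpow_one] at h4
    exact h4
  have h5 := int_norm_fderiv hu hc
  calc _ ≤ _ := h3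
    _ ≤ ((c : ℝ) ^ 2 + 1) * ∫ x, ‖fderiv ℝ u x‖ ^ 2 := by gcongr; linarith
    _ ≤ _ := by gcongr

/-- Non-sharp Sobolev inequality on the sphere. -/
lemma sob_weak (hm : 1 ≤ m) : ∃ S₀ : ℝ, 0 < S₀ ∧ ∀ U : X m → ℝ, Adm U →
    S₀ * Iq U ^ (2 / qq m) ≤ En U := by
  obtain ⟨K, hK, h⟩ := sob_eucl hm
  refine ⟨K⁻¹, by positivity, fun U hU => sob_ext hm (fun V h1 h2 => ?_) hU⟩
  have h3 := h (fun y => phi y * V y) (contDiff_phi.mul h1) (h2.mul_left (f := phi))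
  rw [Iq_eq hm, conf_compact hm h1 h2] at h3
  rwa [inv_mul_le_iff₀ hK]

end BE

namespace BE

open MeasureTheory Filter Topology

variable {m : ℕ}

lemma taylor1 (p : ℝ) {η : ℝ} (hη : 0 < η) : ∃ s₀ : ℝ, 0 < s₀ ∧ s₀ ≤ 1 / 2 ∧
    ∀ s : ℝ, |s| ≤ s₀ → |(1 + s) ^ p - 1 - p * s| ≤ η * |s| := by
  have h : HasDerivAt (fun s : ℝ => (1 + s) ^ p) p 0 := by
    have h1 : HasDerivAt (fun s : ℝ => 1 + s) 1 0 := (hasDerivAt_id (0 : ℝ)).const_add 1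
    have := h1.rpow_const (p := p) (Or.inl (by norm_num))
    simpa using this
  have h2 := h.isLittleO.def hη
  obtain ⟨r, hr, hb⟩ := Metric.eventually_nhds_iff.1 h2
  refine ⟨min (r / 2) (1 / 2), by positivity, min_le_right _ _, fun s hs => ?_⟩
  have h3 := hb (y := s) (by
    rw [Real.dist_eq, sub_zero]
    have := hs.trans (min_le_left _ _); linarith)
  simp at h3
  rw [mul_comm p]
  convert h3 using 2

lemma taylor2 (p : ℝ) {η : ℝ} (hη : 0 < η) : ∃ s₀ : ℝ, 0 < s₀ ∧ s₀ ≤ 1 / 2 ∧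
    ∀ s : ℝ, |s| ≤ s₀ → |(1 + s) ^ p - 1 - p * s - p * (p - 1) / 2 * s ^ 2| ≤ η * s ^ 2 := by
  obtain ⟨s₀, h0, h1, h2⟩ := taylor1 (p - 1) (η := η / (|p| + 1)) (by positivity)
  refine ⟨s₀, h0, h1, fun s hs => ?_⟩
  have hd : ∀ x ∈ Set.Icc (-|s|) |s|, HasDerivWithinAt
      (fun x : ℝ => (1 + x) ^ p - 1 - p * x - p * (p - 1) / 2 * x ^ 2)
      (p * ((1 + x) ^ (p - 1) - 1 - (p - 1) * x)) (Set.Icc (-|s|) |s|) x := by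
    intro x hx
    have hx1 : 0 < 1 + x := by have := hx.1; linarith
    have e1 : HasDerivAt (fun s : ℝ => 1 + s) 1 x := (hasDerivAt_id x).const_add 1
    have e2 := e1.rpow_const (p := p) (Or.inl hx1.ne')
    have e3 := ((e2.sub_const 1).sub ((hasDerivAt_id x).const_mul p)).sub
      (((hasDerivAt_id x).pow 2).const_mul (p * (p - 1) / 2))
    refine (e3.congr_deriv ?_).hasDerivWithinAt
    simp
    ring
  have hb : ∀ x ∈ Set.Icc (-|s|) |s|, ‖p * ((1 + x) ^ (p - 1) - 1 - (p - 1) * x)‖ ≤ η * |s| := by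
    intro x hx
    have hx' : |x| ≤ |s| := abs_le.2 hx
    rw [norm_mul, Real.norm_eq_abs, Real.norm_eq_abs]
    calc _ ≤ |p| * (η / (|p| + 1) * |x|) := by gcongr; exact h2 x (hx'.trans hs)
      _ ≤ (|p| + 1) * (η / (|p| + 1) * |s|) := by gcongr; linarith
      _ = η * |s| := by field_simp
  have := (convex_Icc (-|s|) |s|).norm_image_sub_le_of_norm_hasDerivWithin_le hd hb
    (x := 0) (y := s) (by simp) ⟨neg_abs_le s, le_abs_self s⟩
  simp only [add_zero, Real.one_rpow, Real.norm_eq_abs] at this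
  have t2 : |(1 + s) ^ p - 1 - p * s - p * (p - 1) / 2 * s ^ 2| ≤ η * |s| * |s| := by
    simpa using this
  rwa [mul_assoc, abs_mul_abs_self, ← sq] at t2

lemma int_om_mul_rpow (hm : 1 ≤ m) {U : X m → ℝ} (hU : Adm U) {g : X m → ℝ} (hg : Adm g) :
    Integrable (fun x => g x * |U x| ^ (qq m)) (sig m) := by
  obtain ⟨C, hC0, hC⟩ := hg.bd
  exact (int_rpow hm hU).bdd_mul hg.cont.aestronglyMeasurable (c := C)
    (Eventually.of_forall fun x => (hC x).1)

lemma om_abs_le (a) (x : X m) : |om a x| ≤ 1 := by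
  have h := sum_om_sq x
  have h2 : om a x ^ 2 ≤ ∑ a, om a x ^ 2 :=
    Finset.single_le_sum (f := fun a => om a x ^ 2) (fun _ _ => sq_nonneg _) (Finset.mem_univ a)
  rw [h] at h2
  exact (sq_le_one_iff_abs_le_one _).1 h2

lemma sum_om_pd (i : Fin (m + 2)) (x : X m) : ∑ a, om a x * pd i (om a) x = 0 := by
  rw [Fintype.sum_option]
  simp only [pd_om_none, pd_om_some, om]
  have h := sum_sq x
  have e : ∑ j, rho x * x j * ((if j = i then rho x else 0) - rho x ^ 2 * x i * x j)
      = rho x ^ 2 * x i - rho x ^ 2 * x i * (rho x * ∑ j, x j ^ 2) := by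
    simp only [mul_sub, Finset.sum_sub_distrib]
    congr 1
    · simp; ring
    · rw [Finset.mul_sum, Finset.mul_sum]
      refine Finset.sum_congr rfl fun j _ => by ring
  rw [e, h]; ring

lemma Gam_om_mul {U : X m → ℝ} (hU : Adm U) (x : X m) :
    ∑ a, Gam (fun y => om a y * U y) (fun y => om a y * U y) x = Gam U U x + (m + 2) * U x ^ 2 := by
  have e : ∀ a, Gam (fun y => om a y * U y) (fun y => om a y * U y) x
      = om a x ^ 2 * Gam U U x + 2 * U x * (om a x * Gam (om a) U x)
        + U x ^ 2 * (1 - om a x ^ 2) := by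
    intro a
    rw [Gam_mul_left (Adm.om a) hU, Gam_comm U, Gam_comm (om a), Gam_mul_left (Adm.om a) hU,
      Gam_mul_left (Adm.om a) hU, Gam_om, Gam_comm U (om a)]
    simp; ring
  simp only [e]
  rw [Finset.sum_add_distrib, Finset.sum_add_distrib, ← Finset.sum_mul, ← Finset.mul_sum,
    ← Finset.mul_sum, Finset.sum_sub_distrib, sum_om_sq]
  have z : ∑ a, om a x * Gam (om a) U x = 0 := by
    unfold Gam
    simp only [← mul_div_assoc, Finset.mul_sum]
    rw [← Finset.sum_div, Finset.sum_comm]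
    have : ∀ i, ∑ a, om a x * (pd i (om a) x * pd i U x) = 0 := by
      intro i
      simp only [← mul_assoc]
      rw [← Finset.sum_mul, sum_om_pd, zero_mul]
    simp [this]
  rw [z]
  simp
  ring

lemma sum_En (hU : Adm U) : ∑ a, En (fun y : X m => om a y * U y)
    = En U + (m + 2) * ∫ x, U x ^ 2 ∂(sig m) := by
  unfold En D
  rw [Finset.sum_add_distrib, ← integral_finsetSum _ fun a _ =>
    Gam_int ((Adm.om a).mul hU) ((Adm.om a).mul hU), ← Finset.mul_sum,
    ← integral_finsetSum _ fun a _ => ((Adm.om a).mul hU).sq_int]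
  have e1 : ∀ x, ∑ a, (om a x * U x) ^ 2 = U x ^ 2 := by
    intro x
    simp only [mul_pow]
    rw [← Finset.sum_mul, sum_om_sq, one_mul]
  simp only [Gam_om_mul hU, e1]
  rw [integral_add (Gam_int hU hU) (hU.sq_int.const_mul _), integral_const_mul]
  ring

/-- Parallelogram law for the energy. -/
lemma En_par {f g : X m → ℝ} (hf : Adm f) (hg : Adm g) :
    En (fun y => f y + g y) + En (fun y => f y - g y) = 2 * En f + 2 * En g := by
  have h1 := D_sq_add hf hg
  have h2 := D_sq_add hf (hg.const_mul (-1))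
  have e : (fun y => f y - g y) = (fun y => f y + -1 * g y) := by ext y; ring
  have a1 : D f (fun x => -1 * g x) = -1 * D f g := by
    rw [D_comm, D_const_mul_left _ hg, D_comm]
  have a2 : D (fun x => -1 * g x) (fun x => -1 * g x) = D g g := by
    rw [D_const_mul_left _ hg, D_comm, D_const_mul_left _ hg]; ring
  rw [a1, a2, ← e] at h2
  have h3 : ∫ x, (f x + g x) ^ 2 ∂(sig m) + ∫ x, (f x - g x) ^ 2 ∂(sig m)
      = 2 * ∫ x, f x ^ 2 ∂(sig m) + 2 * ∫ x, g x ^ 2 ∂(sig m) := by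
    rw [← integral_add (hf.add hg).sq_int (hf.sub hg).sq_int, ← integral_const_mul,
      ← integral_const_mul, ← integral_add (hf.sq_int.const_mul _) (hg.sq_int.const_mul _)]
    refine integral_congr_ae (Eventually.of_forall fun x => ?_)
    simp only; ring
  unfold En
  rw [h1, h2]
  linear_combination kap m * h3

lemma En_const_mul {f : X m → ℝ} (hf : Adm f) (c : ℝ) : En (fun y => c * f y) = c ^ 2 * En f := by
  unfold En
  rw [D_const_mul_left _ hf, D_comm, D_const_mul_left _ hf]
  simp only [mul_pow]
  rw [integral_const_mul]; ring

lemma Iq_const_mul (f : X m → ℝ) (c : ℝ) : Iq (fun y => c * f y) = |c| ^ qq m * Iq f := by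
  unfold Iq
  simp only [abs_mul, Real.mul_rpow (abs_nonneg _) (abs_nonneg _)]
  rw [integral_const_mul]

lemma core_t (hm : 1 ≤ m) {ε : ℝ} (hε : 0 < ε) : ∃ t : ℝ, 0 < t ∧ ∀ (T : ℝ) (U : X m → ℝ), 0 < T → Adm U →
    (∀ V : X m → ℝ, Adm V → T * Iq V ^ (2 / qq m) ≤ En V) → Iq U = 1 →
    (∀ a, ∫ x, om a x * |U x| ^ (qq m) ∂(sig m) = 0) → ∀ a,
    T * (1 + (qq m - 1 - ε) * t ^ 2 * ∫ x, om a x ^ 2 * |U x| ^ (qq m) ∂(sig m))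
      ≤ En U + t ^ 2 * En (fun y => om a y * U y) := by
  have hq := two_lt_qq hm
  set q := qq m with hqdef
  have hq0 : 0 < q := by linarith
  obtain ⟨η, hη, hη1, hη2⟩ : ∃ η : ℝ, 0 < η ∧ 0 < q * (q - 1) / 2 - η ∧
      q - 1 - ε ≤ (2 / q - η) * (q * (q - 1) / 2 - η) := by
    refine ⟨min (q * (q - 1) / 4) (ε / (2 / q + q * (q - 1) / 2)), ?_, ?_, ?_⟩
    · have : 0 < q - 1 := by linarith
      positivity
    · have h1 := min_le_left (q * (q - 1) / 4) (ε / (2 / q + q * (q - 1) / 2))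
      have : 0 < q * (q - 1) := mul_pos hq0 (by linarith)
      linarith
    · set η := min (q * (q - 1) / 4) (ε / (2 / q + q * (q - 1) / 2))
      have hp : 0 < 2 / q + q * (q - 1) / 2 := by
        have : 0 < q - 1 := by linarith
        positivity
      have h2 : η ≤ ε / (2 / q + q * (q - 1) / 2) := min_le_right _ _
      rw [le_div_iff₀ hp] at h2
      have e : 2 / q * (q * (q - 1) / 2) = q - 1 := by field_simp
      nlinarith [sq_nonneg η]
  obtain ⟨s₀, hs0, hs1, hs⟩ := taylor2 q hη
  obtain ⟨y₀, hy0, hy1, hy⟩ := taylor1 (2 / q) hη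
  set β := q * (q - 1) / 2 - η with hβ
  obtain ⟨t, ht, ht1, ht2⟩ : ∃ t : ℝ, 0 < t ∧ t ≤ s₀ ∧ β * t ^ 2 ≤ y₀ := by
    refine ⟨min s₀ (min 1 (y₀ / β)), by positivity, min_le_left _ _, ?_⟩
    set t := min s₀ (min 1 (y₀ / β))
    have h1 : t ≤ 1 := (min_le_right _ _).trans (min_le_left _ _)
    have h2 : t ≤ y₀ / β := (min_le_right _ _).trans (min_le_right _ _)
    have h3 : 0 < t := by positivity
    rw [le_div_iff₀ hη1] at h2
    nlinarith [mul_pos h3 hη1]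
  refine ⟨t, ht, fun T U hT hU hsob hI hcen a => ?_⟩
  set μ := ∫ x, om a x ^ 2 * |U x| ^ q ∂(sig m) with hμ
  have hoa := Adm.om (m := m) a
  have hi2 : Integrable (fun x => om a x ^ 2 * |U x| ^ q) (sig m) := by
    have := int_om_mul_rpow hm hU (hoa.mul hoa)
    simpa [sq] using this
  have hi1 := int_om_mul_rpow hm hU hoa
  have hi0 := int_rpow hm hU
  have hμ0 : 0 ≤ μ := integral_nonneg fun x => by positivity
  have hμ1 : μ ≤ 1 := by
    rw [← hI]
    refine integral_mono hi2 hi0 fun x => ?_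
    have : om a x ^ 2 ≤ 1 := (sq_le_one_iff_abs_le_one _).2 (om_abs_le a x)
    have h3 : 0 ≤ |U x| ^ q := by positivity
    simp only
    nlinarith
  have key : ∀ σ : ℝ, |σ| = 1 → 1 + (q - 1 - ε) * t ^ 2 * μ
      ≤ Iq (fun y => U y + (σ * t) * (om a y * U y)) ^ (2 / q) := by
    intro σ hσ
    have hσ2 : σ ^ 2 = 1 := by rw [← sq_abs, hσ]; norm_num
    have hI2 : 1 + β * t ^ 2 * μ ≤ Iq (fun y => U y + (σ * t) * (om a y * U y)) := by
      have e : 1 + β * t ^ 2 * μ = ∫ x, (|U x| ^ q + (q * σ * t) * (om a x * |U x| ^ q)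
          + (β * t ^ 2) * (om a x ^ 2 * |U x| ^ q)) ∂(sig m) := by
        have i01 : Integrable (fun x => |U x| ^ q + (q * σ * t) * (om a x * |U x| ^ q)) (sig m) :=
          hi0.add (hi1.const_mul _)
        rw [integral_add i01 (hi2.const_mul _),
          integral_add hi0 (hi1.const_mul _), integral_const_mul, integral_const_mul, hcen a]
        have : ∫ x, |U x| ^ q ∂(sig m) = 1 := hI
        rw [this]; ring
      rw [e]
      unfold Iq
      refine integral_mono ((hi0.add (hi1.const_mul _)).add (hi2.const_mul _))
        (int_rpow hm (hU.add ((hoa.mul hU).const_mul _))) fun x => ?_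
      simp only
      have hos : |σ * t * om a x| ≤ s₀ := by
        rw [abs_mul, abs_mul, hσ, abs_of_pos ht]
        have := om_abs_le a x
        nlinarith [abs_nonneg (om a x)]
      have h1 := (abs_le.1 (hs _ hos)).1
      have h2 : 0 < 1 + σ * t * om a x := by
        have := (abs_le.1 hos).1; linarith
      have e2 : U x + σ * t * (om a x * U x) = (1 + σ * t * om a x) * U x := by ring
      rw [e2, abs_mul, abs_of_pos h2, Real.mul_rpow h2.le (abs_nonneg _)]
      have h3 : 0 ≤ |U x| ^ q := by positivity
      have h4 : (σ * t * om a x) ^ 2 = t ^ 2 * om a x ^ 2 := by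
        rw [mul_pow, mul_pow, hσ2]; ring
      rw [h4] at h1
      calc _ = (1 + q * (σ * t * om a x) + β * (t ^ 2 * om a x ^ 2)) * |U x| ^ q := by ring
        _ ≤ _ := by
          refine mul_le_mul_of_nonneg_right ?_ h3
          simp only [hβ]
          linarith
    have hyy : |β * t ^ 2 * μ| ≤ y₀ := by
      rw [abs_of_nonneg (by positivity)]
      have : 0 ≤ β * t ^ 2 := by positivity
      nlinarith
    have h1 := (abs_le.1 (hy _ hyy)).1
    rw [abs_of_nonneg (by positivity : 0 ≤ β * t ^ 2 * μ)] at h1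
    have h2 : (q - 1 - ε) * (t ^ 2 * μ) ≤ (2 / q - η) * β * (t ^ 2 * μ) :=
      mul_le_mul_of_nonneg_right hη2 (by positivity)
    calc _ ≤ (1 + β * t ^ 2 * μ) ^ (2 / q) := by linarith
      _ ≤ _ := Real.rpow_le_rpow (by positivity) hI2 (by positivity)
  have hp := En_par hU ((hoa.mul hU).const_mul t)
  rw [En_const_mul (hoa.mul hU)] at hp
  have k1 := key 1 (by simp)
  have k2 := key (-1) (by simp)
  have s1 := hsob _ (hU.add ((hoa.mul hU).const_mul t))
  have s2 := hsob _ (hU.sub ((hoa.mul hU).const_mul t))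
  have e1 : (fun y => U y + (1 * t) * (om a y * U y)) = fun y => U y + t * (om a y * U y) := by
    ext y; ring
  have e2 : (fun y => U y + (-1 * t) * (om a y * U y)) = fun y => U y - t * (om a y * U y) := by
    ext y; ring
  rw [e1] at k1
  rw [e2] at k2
  have l1 := mul_le_mul_of_nonneg_left k1 hT.le
  have l2 := mul_le_mul_of_nonneg_left k2 hT.le
  linarith

lemma kap_qq (hm : 1 ≤ m) : (qq m - 2) * kap m = m + 2 := by
  have : (m : ℝ) ≠ 0 := by positivity
  unfold qq kap; field_simp; ring

/-- Core lemma: near-optimal centered functions have small Dirichlet form. -/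
lemma core (hm : 1 ≤ m) {T : ℝ} (hT : 0 < T)
    (hsob : ∀ V : X m → ℝ, Adm V → T * Iq V ^ (2 / qq m) ≤ En V) {ε : ℝ} (hε : 0 < ε) :
    ∃ δ : ℝ, 0 < δ ∧ ∀ U : X m → ℝ, Adm U → Iq U = 1 →
    (∀ a, ∫ x, om a x * |U x| ^ (qq m) ∂(sig m) = 0) → En U - T ≤ δ → D U U ≤ ε := by
  have hq := two_lt_qq hm
  have hkq := kap_qq hm
  set q := qq m with hqdef
  have hε' : 0 < ε * (q - 2) / (2 * T) := by
    have : 0 < q - 2 := by linarith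
    positivity
  obtain ⟨t, ht, h⟩ := core_t hm hε'
  have hden : 0 < (m + 3) + (q - 1) * t ^ 2 := by
    have : 0 < q - 1 := by linarith
    positivity
  refine ⟨(q - 2) * t ^ 2 * (ε / 2) / ((m + 3) + (q - 1) * t ^ 2), ?_, fun U hU hI hc hd => ?_⟩
  · have : 0 < q - 2 := by linarith
    positivity
  · rw [le_div_iff₀ hden] at hd
    have hs := Finset.sum_le_sum fun a (_ : a ∈ Finset.univ) => h T U hT hU hsob hI hc a
    rw [Finset.sum_add_distrib, ← Finset.mul_sum, ← Finset.mul_sum, sum_En hU,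
      Finset.sum_add_distrib, ← Finset.mul_sum, ← integral_finsetSum] at hs
    · have e : ∀ x, ∑ a, om a x ^ 2 * |U x| ^ (qq m) = |U x| ^ (qq m) := by
        intro x; rw [← Finset.sum_mul, sum_om_sq, one_mul]
      simp only [e] at hs
      have hI' : ∫ x, |U x| ^ (qq m) ∂(sig m) = 1 := hI
      rw [hI'] at hs
      simp only [Finset.sum_const, Finset.card_univ, Fintype.card_option, Fintype.card_fin,
        nsmul_eq_mul] at hs
      push_cast at hs
      have hEn : En U = D U U + kap m * ∫ x, U x ^ 2 ∂(sig m) := rfl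
      set B := ∫ x, U x ^ 2 ∂(sig m)
      have hB : (m + 2) * B = (q - 2) * (En U - D U U) := by rw [hEn, ← hkq]; ring
      rw [hB] at hs
      have hT2 : T * (ε * (q - 2) / (2 * T)) = (q - 2) * (ε / 2) := by field_simp
      have fin : (q - 2) * t ^ 2 * D U U ≤ (q - 2) * t ^ 2 * ε := by
        have e3 : T * ((m + 2 + 1) * 1 + (q - 1 - ε * (q - 2) / (2 * T)) * t ^ 2 * 1)
          = T * (m + 3) + T * (q - 1) * t ^ 2 - (q - 2) * (ε / 2) * t ^ 2 := by
          rw [← hT2]; ring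
        have e4 : T * ((↑m + 2 + 1) * 1 + (q - 1 - ε * (q - 2) / (2 * T)) * t ^ 2 * 1) ≤
          (m + 2 + 1) * En U + t ^ 2 * (En U + (q - 2) * (En U - D U U)) := by
          simpa using hs
        rw [e3] at e4
        nlinarith
      exact le_of_mul_le_mul_left fin (by
        have : 0 < q - 2 := by linarith
        positivity)
    · intro a _
      have := int_om_mul_rpow hm hU ((Adm.om a).mul (Adm.om a))
      simpa [sq] using this

end BE

namespace BE

open MeasureTheory Filter Topology

variable {m : ℕ}

lemma poincare (hm : 1 ≤ m) {W : X m → ℝ} (hW : Adm W) (h0 : ∫ x, W x ∂(sig m) = 0) :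
    ((m : ℝ) + 2) * ∫ x, W x ^ 2 ∂(sig m) ≤ D W W := by
  have h := gap hm 1 hW (by
    intro w hw
    have hw' : w ∈ (1 : Submodule ℝ (BoundedContinuousFunction (X m) ℝ)) := hw
    obtain ⟨r, rfl⟩ := Submodule.mem_one.1 hw'
    have : ∀ x, W x * (algebraMap ℝ (BoundedContinuousFunction (X m) ℝ) r) x = W x * r := by
      intro x; rfl
    simp only [this]
    rw [integral_mul_const, h0, zero_mul])
  have e : (((1 : ℕ) : ℝ) * ((1 : ℕ) + m + 1)) = (m : ℝ) + 2 := by push_cast; ring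
  rwa [e] at h

lemma int_om (hm : 1 ≤ m) (a) : ∫ x, om a x ∂(sig m) = 0 := by
  have h := D_om hm a (Adm.const (m := m) 1)
  rw [D_comm, D_const_left] at h
  have h2 : ((m : ℝ) + 2) ≠ 0 := by positivity
  simp only [mul_one] at h
  rcases mul_eq_zero.1 h.symm with h | h
  · exact absurd h h2
  · exact h

lemma int_om_om (hm : 1 ≤ m) (a b : Option (Fin (m + 2))) :
    ((m : ℝ) + 3) * ∫ x, om a x * om b x ∂(sig m) = if a = b then (sig m).real Set.univ else 0 := by
  have h := D_om hm a (Adm.om (m := m) b)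
  unfold D at h
  simp only [Gam_om] at h
  rw [integral_sub (integrable_const _) ((Adm.om a).mul (Adm.om b)).int, integral_const] at h
  have : ((m : ℝ) + 3) * ∫ x, om a x * om b x ∂(sig m)
    = (sig m).real Set.univ • (if a = b then (1 : ℝ) else 0) := by linarith
  rw [this]
  split_ifs <;> simp

lemma Adm.sum {ι : Type*} (s : Finset ι) {f : ι → X m → ℝ} (hf : ∀ i, Adm (f i)) :
    Adm (fun x => ∑ i ∈ s, f i x) := by
  classical
  induction s using Finset.induction_on with
  | empty => simpa using Adm.const (m := m) 0
  | insert i s hi ih =>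
    simp only [Finset.sum_insert hi]
    exact (hf i).add ih

lemma D_sum_left {ι : Type*} (s : Finset ι) {f : ι → X m → ℝ} (hf : ∀ i, Adm (f i)) {g : X m → ℝ}
    (hg : Adm g) : D (fun x => ∑ i ∈ s, f i x) g = ∑ i ∈ s, D (f i) g := by
  classical
  induction s using Finset.induction_on with
  | empty => simpa using D_const_left (m := m) 0 g
  | insert i s hi ih =>
    simp only [Finset.sum_insert hi]
    rw [D_add_left (hf i) (Adm.sum s hf) hg, ih]

lemma spectral (hm : 1 ≤ m) {W : X m → ℝ} (hW : Adm W) (h0 : ∫ x, W x ∂(sig m) = 0) :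
    1 / 2 * D W W - ((m : ℝ) + 2) * (m + 3) / (2 * (sig m).real Set.univ)
        * ∑ a, (∫ x, om a x * W x ∂(sig m)) ^ 2
      ≤ D W W - ((m : ℝ) + 2) * ∫ x, W x ^ 2 ∂(sig m) := by
  have hA : 0 < (sig m).real Set.univ := sig_pos
  set A := (sig m).real Set.univ with hAdef
  set b : Option (Fin (m + 2)) → ℝ := fun a => ∫ x, om a x * W x ∂(sig m) with hb
  set N : ℝ := (m : ℝ) + 3 with hN
  set P : X m → ℝ := fun x => ∑ a, (N / A * b a) * om a x with hP
  have hPa : Adm P := Adm.sum _ fun a => (Adm.om a).const_mul _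
  set β : ℝ := N / A * ∑ a, b a ^ 2 with hβ
  have hoP : ∀ a, ∫ x, om a x * P x ∂(sig m) = b a := by
    intro a
    have e : ∀ x, om a x * P x = ∑ c, (N / A * b c) * (om a x * om c x) := by
      intro x; simp only [hP, Finset.mul_sum]; exact Finset.sum_congr rfl fun _ _ => by ring
    simp only [e]
    rw [integral_finsetSum _ fun c _ => ((Adm.om a).mul (Adm.om c)).int.const_mul _]
    simp only [integral_const_mul]
    have : ∀ c, N / A * b c * ∫ x, om a x * om c x ∂(sig m) = if a = c then b c else 0 := by
      intro c
      have := int_om_om hm a c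
      calc _ = b c / A * (N * ∫ x, om a x * om c x ∂(sig m)) := by ring
        _ = _ := by
          rw [this, ← hAdef]
          split_ifs
          · field_simp
          · simp
    simp [this]
  have hPint : ∀ V : X m → ℝ, Adm V → (∀ a, ∫ x, om a x * V x ∂(sig m) = b a) →
      ∫ x, P x * V x ∂(sig m) = β ∧ D P V = ((m : ℝ) + 2) * β := by
    intro V hV hVb
    constructor
    · have e : ∀ x, P x * V x = ∑ c, (N / A * b c) * (om c x * V x) := by
        intro x; simp only [hP, Finset.sum_mul]; exact Finset.sum_congr rfl fun _ _ => by ring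
      simp only [e]
      rw [integral_finsetSum _ fun c _ => ((Adm.om c).mul hV).int.const_mul _]
      simp only [integral_const_mul, hVb, hβ, Finset.mul_sum]
      exact Finset.sum_congr rfl fun _ _ => by ring
    · rw [hP, D_sum_left _ (fun a => (Adm.om a).const_mul _) hV, hβ, Finset.mul_sum, Finset.mul_sum]
      refine Finset.sum_congr rfl fun a _ => ?_
      rw [D_const_mul_left _ (Adm.om a), D_om hm a hV, hVb]; ring
  obtain ⟨i1, d1⟩ := hPint W hW fun a => rfl
  obtain ⟨i2, d2⟩ := hPint P hPa hoP
  have hY := hW.sub hPa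
  have hYo : ∀ w ∈ WW m 2, ∫ x, (W x - P x) * w x ∂(sig m) = 0 := by
    intro w hw
    have hw' : w ∈ MM m := by
      have : WW m 2 = MP m 1 := rfl
      rwa [this, MP_one] at hw
    have hPz : ∫ x, P x ∂(sig m) = 0 := by
      rw [integral_finsetSum _ fun c _ => (Adm.om c).int.const_mul _]
      simp [integral_const_mul, int_om hm]
    have base : ∀ g : BoundedContinuousFunction (X m) ℝ, g ∈ MM m →
        Adm (g : X m → ℝ) := fun g hg => MM_adm hg
    unfold MM at hw'
    induction hw' using Submodule.span_induction with
    | mem x h =>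
      rcases h with rfl | ⟨a, rfl⟩
      · simp only [BoundedContinuousFunction.coe_one, Pi.one_apply, mul_one]
        rw [integral_sub hW.int hPa.int, h0, hPz, sub_zero]
      · have e : ∀ x, (W x - P x) * omB a x = om a x * W x - om a x * P x := by
          intro x; rw [omB_apply]; ring
        simp only [e]
        rw [integral_sub ((Adm.om a).mul hW).int ((Adm.om a).mul hPa).int, hoP]
        simp [hb]
    | zero => simp
    | add f g hf hg h1 h2 =>
      have hfa := base f hf
      have hga := base g hg
      have e : ∀ x, (W x - P x) * (f + g) x = (W x - P x) * f x + (W x - P x) * g x := by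
        intro x; simp only [BoundedContinuousFunction.coe_add, Pi.add_apply]; ring
      simp only [e]
      rw [integral_add (hY.mul hfa).int (hY.mul hga).int, h1, h2, add_zero]
      · have : WW m 2 = MP m 1 := rfl
        rwa [this, MP_one]
      · have : WW m 2 = MP m 1 := rfl
        rwa [this, MP_one]
    | smul c f hf h1 =>
      have e : ∀ x, (W x - P x) * (c • f) x = c * ((W x - P x) * f x) := by
        intro x; simp; ring
      simp only [e]
      rw [integral_const_mul, h1, mul_zero]
      · have : WW m 2 = MP m 1 := rfl
        rwa [this, MP_one]
  have hg := gap hm 2 hY hYo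
  have eD : D (fun x => W x - P x) (fun x => W x - P x) = D W W - (m + 2) * β := by
    rw [D_sub_left hW hPa hY, D_sub_right hW hPa hW, D_sub_right hW hPa hPa, D_comm W P, d1, d2]
    ring
  have eI : ∫ x, (W x - P x) ^ 2 ∂(sig m) = ∫ x, W x ^ 2 ∂(sig m) - β := by
    have e : ∀ x, (W x - P x) ^ 2 = W x ^ 2 - 2 * (P x * W x) + P x * P x := by intro x; ring
    simp only [e]
    have j1 : Integrable (fun x => W x ^ 2 - 2 * (P x * W x)) (sig m) :=
      hW.sq_int.sub ((hPa.mul hW).int.const_mul 2)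
    rw [integral_add j1 (hPa.mul hPa).int, integral_sub hW.sq_int ((hPa.mul hW).int.const_mul 2),
      integral_const_mul, i1, i2]
    ring
  have hYn := D_self_nonneg (fun x => W x - P x)
  rw [eI, eD] at hg
  rw [eD] at hYn
  push_cast at hg
  have e3 : ((m : ℝ) + 2) * N / (2 * A) * ∑ a, b a ^ 2 = ((m : ℝ) + 2) / 2 * β := by
    rw [hβ]; field_simp
  rw [e3]
  have hm0 : (0 : ℝ) ≤ m := by positivity
  have e5 : ((m : ℝ) + 2) * (∫ x, W x ^ 2 ∂(sig m) - β) ≤ 1 / 2 * (D W W - (m + 2) * β) := by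
    have hn : 0 ≤ ∫ x, W x ^ 2 ∂(sig m) - β := by
      rw [← eI]; exact integral_nonneg fun x => sq_nonneg _
    nlinarith
  linarith

lemma pt1 {q : ℝ} (hq : 2 < q) {η : ℝ} (hη : 0 < η) : ∃ C : ℝ, 0 ≤ C ∧ ∀ s : ℝ,
    |1 + s| ^ q ≤ 1 + q * s + (q * (q - 1) / 2 + η) * s ^ 2 + C * |s| ^ q := by
  obtain ⟨s₀, h0, h1, h⟩ := taylor2 q hη
  refine ⟨(1 / s₀ + 1) ^ q + q * (1 / s₀) ^ q, by positivity, fun s => ?_⟩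
  have hsq : 0 ≤ |s| ^ q := by positivity
  rcases le_or_gt |s| s₀ with hs | hs
  · have h2 := (abs_le.1 (h s hs)).2
    have h3 : 0 < 1 + s := by have := (abs_le.1 hs).1; linarith
    rw [abs_of_pos h3]
    have : 0 ≤ ((1 / s₀ + 1) ^ q + q * (1 / s₀) ^ q) * |s| ^ q := by positivity
    linarith
  · have h2 : |1 + s| ≤ (1 / s₀ + 1) * |s| := by
      have : 1 ≤ 1 / s₀ * |s| := by
        rw [div_mul_eq_mul_div, one_mul, le_div_iff₀ h0]; linarith
      calc |1 + s| ≤ |1| + |s| := abs_add_le _ _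
        _ ≤ _ := by rw [abs_one]; linarith
    have h3 : |1 + s| ^ q ≤ (1 / s₀ + 1) ^ q * |s| ^ q := by
      rw [← Real.mul_rpow (by positivity) (abs_nonneg _)]
      exact Real.rpow_le_rpow (abs_nonneg _) h2 (by linarith)
    have h4 : |s| ≤ (1 / s₀) ^ q * |s| ^ q := by
      rw [← Real.mul_rpow (by positivity) (abs_nonneg _)]
      have a1 : 1 ≤ 1 / s₀ * |s| := by
        rw [div_mul_eq_mul_div, one_mul, le_div_iff₀ h0]; linarith
      have a2 : |s| ≤ 1 / s₀ * |s| := by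
        have : 1 ≤ 1 / s₀ := by rw [le_div_iff₀ h0]; linarith
        nlinarith [abs_nonneg s]
      calc |s| ≤ (1 / s₀ * |s|) ^ (1 : ℝ) := by rwa [Real.rpow_one]
        _ ≤ _ := Real.rpow_le_rpow_of_exponent_le a1 (by linarith)
    have h5 : -|s| ≤ s := neg_abs_le s
    have h6 : 0 ≤ (q * (q - 1) / 2 + η) * s ^ 2 := by
      have : 0 < q * (q - 1) := mul_pos (by linarith) (by linarith)
      positivity
    have h7 : q * (|s| + s) ≥ 0 := mul_nonneg (by linarith) (by linarith)
    have h8 : q * |s| ≤ q * ((1 / s₀) ^ q * |s| ^ q) := by gcongr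
    nlinarith

lemma pt0 {q : ℝ} (hq : 2 < q) (s : ℝ) : 1 + q * s ≤ |1 + s| ^ q := by
  rcases le_or_gt (-1) s with h | h
  · rw [abs_of_nonneg (by linarith)]
    exact one_add_mul_self_le_rpow_one_add h (by linarith)
  · have : 0 ≤ |1 + s| ^ q := by positivity
    nlinarith

lemma En_one_add (hm : 1 ≤ m) {W : X m → ℝ} (hW : Adm W) (h0 : ∫ x, W x ∂(sig m) = 0) (c : ℝ) :
    En (fun x => c + W x) = kap m * c ^ 2 * (sig m).real Set.univ + En W := by
  unfold En
  rw [D_sq_add (Adm.const c) hW, D_const_left, D_const_left]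
  have e : ∀ x, (c + W x) ^ 2 = (c ^ 2 + 2 * c * W x) + W x ^ 2 := by intro x; ring
  simp only [e]
  have j : Integrable (fun x => c ^ 2 + 2 * c * W x) (sig m) :=
    (integrable_const _).add (hW.int.const_mul _)
  rw [integral_add j hW.sq_int, integral_add (integrable_const _) (hW.int.const_mul _),
    integral_const_mul, h0, integral_const, smul_eq_mul]
  ring

noncomputable def SS (m : ℕ) : ℝ := kap m * (sig m).real Set.univ ^ (1 - 2 / qq m)

set_option maxHeartbeats 1600000 in
lemma local_lem (hm : 1 ≤ m) : ∃ ε₀ δ : ℝ, 0 < ε₀ ∧ 0 < δ ∧ ∀ W : X m → ℝ, Adm W →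
    ∫ x, W x ∂(sig m) = 0 → (∀ a, ∫ x, om a x * |1 + W x| ^ (qq m) ∂(sig m) = 0) →
    En W ≤ ε₀ →
    δ * En W ≤ En (fun x => 1 + W x) - SS m * Iq (fun x => 1 + W x) ^ (2 / qq m) := by
  have hq := two_lt_qq hm
  have hkq := kap_qq hm
  have hk := kap_pos hm
  have hA : 0 < (sig m).real Set.univ := sig_pos
  obtain ⟨S₀, hS0, hsob⟩ := sob_weak hm
  have hSS : SS m = kap m * (sig m).real Set.univ ^ (1 - 2 / qq m) := rfl
  set A := (sig m).real Set.univ with hAdef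
  set q := qq m with hqdef
  set κ := kap m with hκ
  have hq0 : 0 < q := by linarith
  set c1 : ℝ := (m + 2) / (m + 2 + κ) with hc1
  have hc1p : 0 < c1 := by positivity
  obtain ⟨C, hC0, hC⟩ := pt1 hq (η := q * c1 / 16) (by positivity)
  obtain ⟨C', hC0', hC'⟩ := pt1 hq (η := 1) one_pos
  set K : ℝ := q * (q - 1) / 2 + 1 + C' with hK
  have hqq : 0 < q * (q - 1) := mul_pos hq0 (by linarith)
  have hKp : 0 < K := by positivity
  set K1 : ℝ := (1 / S₀) ^ (q / 2) with hK1
  have hK1p : 0 < K1 := by positivity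
  set K2 : ℝ := K / q * (1 / κ + K1) with hK2
  set K3 : ℝ := ((m : ℝ) + 2) * (m + 3) / (2 * A) * ((m + 3) * K2 ^ 2) with hK3
  set K4 : ℝ := 2 * κ / q * C * K1 with hK4
  have hK3n : 0 ≤ K3 := by positivity
  have hK4n : 0 ≤ K4 := by positivity
  obtain ⟨ε₀, he0, he1, he3, he4⟩ : ∃ ε₀ : ℝ, 0 < ε₀ ∧ ε₀ ≤ 1 ∧ K3 * ε₀ ≤ c1 / 8 ∧
      K4 * ε₀ ^ (q / 2 - 1) ≤ c1 / 8 := by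
    have t1 : Tendsto (fun ε : ℝ => K3 * ε) (𝓝[>] 0) (𝓝 0) := by
      have : Tendsto (fun ε : ℝ => K3 * ε) (𝓝 0) (𝓝 (K3 * 0)) :=
        (continuous_const.mul continuous_id).tendsto 0
      rw [mul_zero] at this
      exact this.mono_left nhdsWithin_le_nhds
    have t2 : Tendsto (fun ε : ℝ => K4 * ε ^ (q / 2 - 1)) (𝓝[>] 0) (𝓝 0) := by
      have h : Continuous (fun ε : ℝ => K4 * ε ^ (q / 2 - 1)) :=
        continuous_const.mul (Real.continuous_rpow_const (by linarith))
      have := h.tendsto 0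
      rw [Real.zero_rpow (by linarith), mul_zero] at this
      exact this.mono_left nhdsWithin_le_nhds
    have t3 : ∀ᶠ ε : ℝ in 𝓝[>] 0, ε < 1 :=
      (eventually_lt_nhds one_pos).filter_mono nhdsWithin_le_nhds
    have := ((t1.eventually_lt_const (by positivity : (0 : ℝ) < c1 / 8)).and
      ((t2.eventually_lt_const (by positivity : (0 : ℝ) < c1 / 8)).and
      (t3.and self_mem_nhdsWithin))).exists
    obtain ⟨ε, a, b, c, d⟩ := this
    exact ⟨ε, d, c.le, a.le, b.le⟩
  refine ⟨ε₀, c1 / 8, he0, by positivity, fun W hW h0 hcen hE => ?_⟩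
  have hV : Adm (fun x => 1 + W x) := (Adm.const 1).add hW
  have hEn : En W = D W W + κ * ∫ x, W x ^ 2 ∂(sig m) := rfl
  have hDn := D_self_nonneg W
  have hpo := poincare hm hW h0
  have hsp := spectral hm hW h0
  set B := ∫ x, W x ^ 2 ∂(sig m) with hB
  have hBn : 0 ≤ B := integral_nonneg fun x => sq_nonneg _
  set θ := En W with hθ
  have hθ0 : 0 ≤ θ := by rw [hEn]; positivity
  have hDθ : c1 * θ ≤ D W W := by
    rw [hc1, div_mul_eq_mul_div, div_le_iff₀ (by positivity), hEn]
    nlinarith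
  have hBθ : B ≤ 1 / κ * θ := by
    rw [one_div, ← div_eq_inv_mul, le_div_iff₀ hk]; linarith
  have hJn := Iq_nonneg W
  set J := Iq W with hJ
  have hJ1 : J ≤ K1 * θ ^ (q / 2) := by
    have h1 := hsob W hW
    have h2 : J ^ (2 / q) ≤ 1 / S₀ * θ := by
      rw [one_div, ← div_eq_inv_mul, le_div_iff₀ hS0]; linarith
    have h3 := Real.rpow_le_rpow (by positivity) h2 (by positivity : 0 ≤ q / 2)
    rwa [← Real.rpow_mul hJn, div_mul_div_cancel₀ hq0.ne', div_self two_ne_zero, Real.rpow_one,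
      Real.mul_rpow (by positivity) hθ0] at h3
  have hθq : θ ^ (q / 2) ≤ θ * ε₀ ^ (q / 2 - 1) := by
    have : θ ^ (q / 2) = θ * θ ^ (q / 2 - 1) := by
      rcases hθ0.eq_or_lt with h | h
      · rw [← h, Real.zero_rpow (by positivity)]; simp
      · nth_rewrite 2 [← Real.rpow_one θ]
        rw [← Real.rpow_add h]; congr 1; ring
    rw [this]
    gcongr
    linarith
  have hJ2 : J ≤ K1 * θ := by
    refine hJ1.trans ?_
    have : ε₀ ^ (q / 2 - 1) ≤ 1 := Real.rpow_le_one he0.le he1 (by linarith)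
    have : θ ^ (q / 2) ≤ θ := hθq.trans (by nlinarith)
    gcongr
  -- moments
  have hiV : Integrable (fun x => |1 + W x| ^ q) (sig m) := int_rpow hm hV
  have hiW : Integrable (fun x => |W x| ^ q) (sig m) := int_rpow hm hW
  have hb : ∀ a, |∫ x, om a x * W x ∂(sig m)| ≤ K2 * θ := by
    intro a
    set R : X m → ℝ := fun x => |1 + W x| ^ q - 1 - q * W x with hR
    have hiR : Integrable R (sig m) := (hiV.sub (integrable_const _)).sub (hW.int.const_mul _)
    have hioV : Integrable (fun x => om a x * |1 + W x| ^ q) (sig m) :=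
      int_om_mul_rpow hm hV (Adm.om a)
    have e : ∫ x, om a x * R x ∂(sig m) = - (q * ∫ x, om a x * W x ∂(sig m)) := by
      have e1 : ∀ x, om a x * R x
          = (om a x * |1 + W x| ^ q - om a x) - q * (om a x * W x) := by
        intro x; simp only [hR]; ring
      simp only [e1]
      have j : Integrable (fun x => om a x * |1 + W x| ^ q - om a x) (sig m) :=
        hioV.sub (Adm.om a).int
      rw [integral_sub j (((Adm.om a).mul hW).int.const_mul _), integral_sub hioV (Adm.om a).int,
        hcen a, int_om hm, integral_const_mul]
      ring
    have hRb : ∀ x, |om a x * R x| ≤ K * W x ^ 2 + K * |W x| ^ q := by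
      intro x
      have h1 := hC' (W x)
      have h2 := pt0 hq (W x)
      have h3 : |R x| ≤ K * W x ^ 2 + K * |W x| ^ q := by
        have h5 : 0 ≤ |W x| ^ q := by positivity
        have h6 := sq_nonneg (W x)
        rw [abs_of_nonneg (by simp only [hR]; linarith)]
        simp only [hR, hK]
        nlinarith [mul_nonneg hC0' h6, mul_nonneg hqq.le h5]
      rw [abs_mul]
      have := om_abs_le a x
      nlinarith [abs_nonneg (R x), abs_nonneg (om a x)]
    have h4 : |∫ x, om a x * R x ∂(sig m)| ≤ K * B + K * J := by
      have j1 : Integrable (fun x => K * W x ^ 2 + K * |W x| ^ q) (sig m) :=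
        (hW.sq_int.const_mul K).add (hiW.const_mul K)
      have hst : |∫ x, om a x * R x ∂(sig m)| ≤ ∫ x, (K * W x ^ 2 + K * |W x| ^ q) ∂(sig m) := by
        rw [← Real.norm_eq_abs]
        exact norm_integral_le_of_norm_le j1 (Eventually.of_forall hRb)
      rwa [integral_add (hW.sq_int.const_mul K) (hiW.const_mul K), integral_const_mul,
            integral_const_mul] at hst
    rw [e, abs_neg, abs_mul, abs_of_pos hq0] at h4
    have h5 : q * |∫ x, om a x * W x ∂(sig m)| ≤ q * (K2 * θ) := by
      have : q * (K2 * θ) = K * (1 / κ * θ) + K * (K1 * θ) := by rw [hK2]; field_simp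
      rw [this]
      have := mul_le_mul_of_nonneg_left hBθ hKp.le
      have := mul_le_mul_of_nonneg_left hJ2 hKp.le
      linarith
    exact le_of_mul_le_mul_left h5 hq0
  have hbs : ∑ a, (∫ x, om a x * W x ∂(sig m)) ^ 2 ≤ (m + 3) * K2 ^ 2 * θ ^ 2 := by
    calc _ ≤ ∑ a : Option (Fin (m + 2)), K2 ^ 2 * θ ^ 2 := by
          refine Finset.sum_le_sum fun a _ => ?_
          rw [← mul_pow, ← sq_abs]
          exact pow_le_pow_left₀ (abs_nonneg _) (hb a) 2
      _ = _ := by simp; ring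
  have hspec2 : ((m : ℝ) + 2) * (m + 3) / (2 * A) * ∑ a, (∫ x, om a x * W x ∂(sig m)) ^ 2
      ≤ c1 / 8 * θ := by
    calc _ ≤ ((m : ℝ) + 2) * (m + 3) / (2 * A) * ((m + 3) * K2 ^ 2 * θ ^ 2) := by gcongr
      _ = K3 * θ * θ := by rw [hK3]; ring
      _ ≤ _ := by
        have : K3 * θ ≤ c1 / 8 := (mul_le_mul_of_nonneg_left hE hK3n).trans he3
        gcongr
  -- the Lq norm
  set y : ℝ := (q * (q - 1) / 2 + q * c1 / 16) * B + C * J with hy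
  have hyn : 0 ≤ y := by positivity
  have hI : Iq (fun x => 1 + W x) ≤ A + y := by
    have j1 : Integrable (fun x => 1 + q * W x) (sig m) :=
      (integrable_const _).add (hW.int.const_mul _)
    have j2 : Integrable (fun x => (1 + q * W x) + (q * (q - 1) / 2 + q * c1 / 16) * W x ^ 2)
      (sig m) := j1.add (hW.sq_int.const_mul _)
    have j3 : Integrable (fun x => ((1 + q * W x) + (q * (q - 1) / 2 + q * c1 / 16) * W x ^ 2)
      + C * |W x| ^ q) (sig m) := j2.add (hiW.const_mul _)
    calc _ ≤ ∫ x, (((1 + q * W x) + (q * (q - 1) / 2 + q * c1 / 16) * W x ^ 2)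
        + C * |W x| ^ q) ∂(sig m) := integral_mono hiV j3 fun x => hC (W x)
      _ = _ := by
        rw [integral_add j2 (hiW.const_mul _), integral_add j1 (hW.sq_int.const_mul _),
          integral_add (integrable_const _) (hW.int.const_mul _), integral_const_mul,
          integral_const_mul, integral_const_mul, h0, integral_const, smul_eq_mul]
        have : ∫ x, |W x| ^ q ∂(sig m) = J := rfl
        rw [this, hy]; ring
  have hSI : SS m * Iq (fun x => 1 + W x) ^ (2 / q) ≤ κ * A + 2 * κ / q * y := by
    have h1 : Iq (fun x => 1 + W x) ^ (2 / q) ≤ A ^ (2 / q) * (1 + 2 / q * (y / A)) := by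
      calc _ ≤ (A + y) ^ (2 / q) := Real.rpow_le_rpow (Iq_nonneg _) hI (by positivity)
        _ = A ^ (2 / q) * (1 + y / A) ^ (2 / q) := by
          rw [← Real.mul_rpow hA.le (by positivity)]; congr 1; field_simp
        _ ≤ _ := by
          gcongr
          refine rpow_one_add_le_one_add_mul_self ?_ (by positivity) ?_
          · have : 0 ≤ y / A := by positivity
            linarith
          · rw [div_le_one hq0]; linarith
    have h2 : A ^ (1 - 2 / q) * A ^ (2 / q) = A := by
      rw [← Real.rpow_add hA]; simp
    calc _ ≤ SS m * (A ^ (2 / q) * (1 + 2 / q * (y / A))) := by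
          gcongr
          rw [hSS]; positivity
      _ = κ * (A ^ (1 - 2 / q) * A ^ (2 / q)) * (1 + 2 / q * (y / A)) := by rw [hSS]; ring
      _ = _ := by rw [h2]; field_simp
  have hEV := En_one_add hm hW h0 1
  rw [hEV]
  have e6 : 2 * κ / q * y = κ * (q - 1) * B + c1 / 8 * (κ * B) + 2 * κ / q * C * J := by
    rw [hy]; field_simp; ring
  have e7 : 2 * κ / q * C * J ≤ c1 / 8 * θ := by
    calc _ ≤ 2 * κ / q * C * (K1 * (θ * ε₀ ^ (q / 2 - 1))) := by
          gcongr
          exact hJ1.trans (by gcongr)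
      _ = K4 * ε₀ ^ (q / 2 - 1) * θ := by rw [hK4]; ring
      _ ≤ _ := by gcongr
  have e8 : κ * B ≤ θ := by rw [hEn]; linarith
  have e9 : c1 / 8 * (κ * B) ≤ c1 / 8 * θ := by gcongr
  have e10 : κ * (q - 1) * B = κ * B + (m + 2) * B := by rw [← hkq]; ring
  rw [one_pow, mul_one]
  rw [e6, e10] at hSI
  have : θ = D W W + κ * B := hEn
  linarith

end BE

namespace BE

open MeasureTheory Filter Topology

variable {m : ℕ}

lemma Qlem (hm : 1 ≤ m) {T : ℝ} (hT : 0 < T)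
    (hsob : ∀ V : X m → ℝ, Adm V → T * Iq V ^ (2 / qq m) ≤ En V) :
    ∃ ε₁ δ : ℝ, 0 < ε₁ ∧ 0 < δ ∧ ∀ U : X m → ℝ, Adm U → Iq U = 1 →
    (∀ a, ∫ x, om a x * |U x| ^ (qq m) ∂(sig m) = 0) → En U - T ≤ ε₁ →
    ∃ c : ℝ, δ * En (fun x => U x - c) ≤ En U - SS m := by
  obtain ⟨ε₀, δ, he0, hδ, hloc⟩ := local_lem hm
  have hk := kap_pos hm
  have hq := two_lt_qq hm
  have hA : 0 < (sig m).real Set.univ := sig_pos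
  set A := (sig m).real Set.univ with hAdef
  set κ := kap m with hκ
  set ε : ℝ := min (T / 2) (ε₀ * (T / (2 * κ * A))) / (1 + κ / (m + 2)) with hε
  have hεp : 0 < ε := by positivity
  obtain ⟨ε₁, h1, hcore⟩ := core hm hT hsob hεp
  refine ⟨ε₁, δ, h1, hδ, fun U hU hI hcen hE => ⟨(∫ x, U x ∂(sig m)) / A, ?_⟩⟩
  have hD := hcore U hU hI hcen hE
  set c := (∫ x, U x ∂(sig m)) / A with hc
  set W0 : X m → ℝ := fun x => U x - c with hW0
  have hW0a : Adm W0 := hU.sub (Adm.const c)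
  have hz : ∫ x, W0 x ∂(sig m) = 0 := by
    rw [hW0, integral_sub hU.int (integrable_const _), integral_const, smul_eq_mul, ← hAdef, hc]
    field_simp; ring
  have hDW : D W0 W0 = D U U := by
    rw [hW0, D_sub_left hU (Adm.const c) hW0a, D_const_left, D_sub_right hU (Adm.const c) hU,
      D_comm U (fun _ => c), D_const_left]; ring
  have hpo := poincare hm hW0a hz
  have hEW : En W0 ≤ (1 + κ / (m + 2)) * D U U := by
    unfold En
    rw [hDW] at hpo ⊢
    have : ∫ x, W0 x ^ 2 ∂(sig m) ≤ D U U / (m + 2) := by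
      rw [le_div_iff₀ (by positivity)]; linarith
    have := mul_le_mul_of_nonneg_left this hk.le
    have e : (1 + κ / (m + 2)) * D U U = D U U + κ * (D U U / (m + 2)) := by ring
    rw [e]; linarith
  have hEW2 : En W0 ≤ min (T / 2) (ε₀ * (T / (2 * κ * A))) := by
    calc _ ≤ (1 + κ / (m + 2)) * ε := hEW.trans (by gcongr)
      _ = _ := by rw [hε]; field_simp
  have hEWa := hEW2.trans (min_le_left _ _)
  have hEWb := hEW2.trans (min_le_right _ _)
  have hEU := En_one_add hm hW0a hz c
  have eU : (fun x => c + W0 x) = U := by ext x; simp [hW0]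
  rw [eU] at hEU
  have hTU : T ≤ En U := by simpa [hI] using hsob U hU
  have hc2 : T / (2 * κ * A) ≤ c ^ 2 := by
    rw [div_le_iff₀ (by positivity)]
    have : kap m * c ^ 2 * (sig m).real Set.univ = κ * c ^ 2 * A := rfl
    linarith
  have hc2p : 0 < c ^ 2 := lt_of_lt_of_le (by positivity) hc2
  have hc0 : c ≠ 0 := by rintro h; simp [h] at hc2p
  have hWa := hW0a.const_mul c⁻¹
  have e1 : ∀ x, 1 + c⁻¹ * W0 x = c⁻¹ * U x := by
    intro x; simp only [hW0]; field_simp; ring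
  have hL := hloc (fun x => c⁻¹ * W0 x) hWa (by rw [integral_const_mul, hz, mul_zero]) (by
    intro a
    simp only [e1, abs_mul, Real.mul_rpow (abs_nonneg _) (abs_nonneg _)]
    have : ∀ x, om a x * (|c⁻¹| ^ qq m * |U x| ^ qq m) = |c⁻¹| ^ qq m * (om a x * |U x| ^ qq m) := by
      intro x; ring
    simp only [this]
    rw [integral_const_mul, hcen a, mul_zero]) (by
    rw [En_const_mul hW0a, inv_pow, ← div_eq_inv_mul, div_le_iff₀ hc2p]
    exact hEWb.trans (by gcongr))
  simp only [e1] at hL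
  rw [En_const_mul hW0a, En_const_mul hU, Iq_const_mul, hI, mul_one, ← Real.rpow_mul (abs_nonneg _),
    mul_div_cancel₀ _ (by linarith : qq m ≠ 0), Real.rpow_two, sq_abs] at hL
  have hp : 0 < c⁻¹ ^ 2 := by positivity
  nlinarith

end BE

namespace BE

open MeasureTheory Filter Topology

variable {m : ℕ}

lemma quad_zero {P Q : ℝ} (h : ∀ s : ℝ, |s| ≤ 1 → 0 ≤ -(s * P) + s ^ 2 * Q) : P = 0 := by
  by_contra hP
  set d := |P| + |Q| + 1 with hd
  have hdp : 0 < d := by positivity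
  have h1 : |P / d| ≤ 1 := by
    rw [abs_div, abs_of_pos hdp, div_le_one hdp]
    have := abs_nonneg Q; linarith
  have h2 := h _ h1
  have e : -(P / d * P) + (P / d) ^ 2 * Q = (P ^ 2 / d ^ 2) * (Q - d) := by field_simp; ring
  rw [e] at h2
  have h3 : 0 < P ^ 2 / d ^ 2 := by positivity
  have h4 : Q - d < 0 := by
    have := le_abs_self Q; have := abs_nonneg P; linarith
  nlinarith

noncomputable def LL (p : ℝ × X m) (x : X m) : ℝ := Real.exp (-p.1) + Real.exp p.1 * ‖x - p.2‖ ^ 2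

lemma LL_pos (p : ℝ × X m) (x : X m) : 0 < LL p x := by unfold LL; positivity

lemma LL_cont : Continuous (fun z : (ℝ × X m) × X m => LL z.1 z.2) := by
  unfold LL; fun_prop

lemma logLL_cont : Continuous (fun z : (ℝ × X m) × X m => Real.log (LL z.1 z.2)) :=
  LL_cont.log fun z => (LL_pos z.1 z.2).ne'

noncomputable def JJ (f : X m → ℝ) (p : ℝ × X m) : ℝ := ∫ x, f x * Real.log (LL p x)

lemma cs_int {f g : X m → ℝ} (hf : Continuous f) (hc : HasCompactSupport f) (hg : Continuous g) :
    Integrable (fun x => f x * g x) :=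
  (hf.mul hg).integrable_of_hasCompactSupport hc.mul_right

lemma cont_log (p : ℝ × X m) : Continuous (fun x => Real.log (LL p x)) :=
  logLL_cont.comp (by fun_prop : Continuous fun x => (p, x))

lemma JJ_cont {f : X m → ℝ} (hf : Continuous f) (hc : HasCompactSupport f) :
    Continuous (JJ f) := by
  have h := continuous_parametric_integral_of_continuous (μ := (volume : Measure (X m)))
    (f := fun (p : ℝ × X m) x => f x * Real.log (LL p x)) (s := tsupport f) ?_ hc
  · have e : JJ f = fun p => ∫ x in tsupport f, f x * Real.log (LL p x) := by
      ext p
      unfold JJ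
      rw [setIntegral_eq_integral_of_forall_compl_eq_zero]
      intro x hx
      rw [image_eq_zero_of_notMem_tsupport hx, zero_mul]
    rw [e]; exact h
  · have : Continuous (fun z : (ℝ × X m) × X m => f z.2 * Real.log (LL z.1 z.2)) :=
      (hf.comp continuous_snd).mul logLL_cont
    exact this

lemma small_ball {f : X m → ℝ} (hf : Continuous f) (hc : HasCompactSupport f) (h0 : ∀ x, 0 ≤ f x)
    {ε : ℝ} (hε : 0 < ε) : ∃ r : ℝ, 0 < r ∧ ∀ z : X m, ∫ x in Metric.ball z r, f x ≤ ε := by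
  obtain ⟨C, hC⟩ := hc.exists_bound_of_continuous hf
  have hC0 : 0 ≤ C := (norm_nonneg _).trans (hC 0)
  set v := (volume : Measure (X m)).real (Metric.ball 0 1) with hv
  have hv0 : 0 ≤ v := measureReal_nonneg
  set r := min 1 (ε / (C * v + 1)) with hr
  have hrp : 0 < r := by positivity
  refine ⟨r, hrp, fun z => ?_⟩
  have h1 := norm_setIntegral_le_of_norm_le_const (μ := (volume : Measure (X m)))
    (s := Metric.ball z r) (f := f) (C := C) measure_ball_lt_top (fun x _ => hC x)
  have h2 : (volume : Measure (X m)).real (Metric.ball z r) = r ^ (m + 2) * v := by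
    rw [measureReal_def, Measure.addHaar_ball _ _ hrp.le, ENNReal.toReal_mul,
      ENNReal.toReal_ofReal (by positivity), hv, measureReal_def]
    simp
  rw [h2] at h1
  have h3 : r ^ (m + 2) ≤ r := by
    calc r ^ (m + 2) ≤ r ^ 1 := pow_le_pow_of_le_one hrp.le (min_le_left _ _) (by omega)
      _ = r := pow_one r
  have h4 : r ≤ ε / (C * v + 1) := min_le_right _ _
  rw [le_div_iff₀ (by positivity)] at h4
  calc _ ≤ _ := (le_abs_self _).trans h1
    _ ≤ C * (r * v) := by gcongr
    _ ≤ _ := by nlinarith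

lemma JJ_min {f : X m → ℝ} (hf : Continuous f) (hc : HasCompactSupport f) (h0 : ∀ x, 0 ≤ f x)
    (hF : 0 < ∫ x, f x) : ∃ p : ℝ × X m, ∀ p', JJ f p ≤ JJ f p' := by
  set F := ∫ x, f x with hFdef
  have hfi : Integrable f := hf.integrable_of_hasCompactSupport hc
  set j0 := JJ f (0, 0) with hj0
  obtain ⟨R, hR⟩ : ∃ R : ℝ, ∀ x, f x ≠ 0 → ‖x‖ ≤ R := by
    obtain ⟨R, hR⟩ := hc.isBounded.exists_norm_le
    exact ⟨R, fun x hx => hR x (subset_tsupport _ hx)⟩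
  obtain ⟨r, hr, hball⟩ := small_ball hf hc h0 (by positivity : 0 < F / 4)
  have b1 : ∀ p : ℝ × X m, j0 / F ≤ -p.1 → j0 ≤ JJ f p := by
    intro p hp
    rw [div_le_iff₀ hF] at hp
    refine hp.trans ?_
    rw [hFdef, ← integral_const_mul]
    refine integral_mono (hfi.const_mul _) (cs_int hf hc (cont_log p)) fun x => ?_
    simp only
    rw [mul_comm]
    refine mul_le_mul_of_nonneg_left ?_ (h0 x)
    rw [Real.le_log_iff_exp_le (LL_pos _ _)]
    unfold LL
    have : 0 ≤ Real.exp p.1 * ‖x - p.2‖ ^ 2 := by positivity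
    linarith
  have b2 : ∀ p : ℝ × X m, R + Real.exp (j0 / F) ≤ ‖p.2‖ → j0 ≤ JJ f p := by
    intro p hp
    have : j0 = j0 / F * F := by field_simp
    rw [this]
    nth_rewrite 2 [hFdef]
    rw [← integral_const_mul]
    refine integral_mono (hfi.const_mul _) (cs_int hf hc (cont_log p)) fun x => ?_
    simp only
    by_cases hx : f x = 0
    · simp [hx]
    rw [mul_comm]
    refine mul_le_mul_of_nonneg_left ?_ (h0 x)
    rw [Real.le_log_iff_exp_le (LL_pos _ _)]
    have h1 : Real.exp (j0 / F) ≤ ‖x - p.2‖ := by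
      have h2 := norm_sub_norm_le p.2 x
      rw [norm_sub_rev] at h2
      have := hR x hx
      linarith
    refine h1.trans ?_
    unfold LL
    set d := ‖x - p.2‖
    have hd : 0 ≤ d := norm_nonneg _
    have e1 : Real.exp (-p.1) * Real.exp p.1 = 1 := by rw [← Real.exp_add]; simp
    have p1 := Real.exp_pos p.1
    have p2 := Real.exp_pos (-p.1)
    have h5 : (2 * d) ^ 2 ≤ (Real.exp (-p.1) + Real.exp p.1 * d ^ 2) ^ 2 := by
      have : (Real.exp (-p.1) + Real.exp p.1 * d ^ 2) ^ 2
        = (Real.exp (-p.1) - Real.exp p.1 * d ^ 2) ^ 2 + 4 * (Real.exp (-p.1) * Real.exp p.1) * d ^ 2 := by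
        ring
      rw [this, e1]
      nlinarith [sq_nonneg (Real.exp (-p.1) - Real.exp p.1 * d ^ 2)]
    have := abs_le_of_sq_le_sq' h5 (by positivity)
    linarith [this.2]
  have b3 : ∀ p : ℝ × X m, max (2 * (j0 / F) - 3 * Real.log r) (-Real.log r) ≤ p.1 →
      j0 ≤ JJ f p := by
    intro p hp
    have hp1 := (le_max_left _ _).trans hp
    have hp2 := (le_max_right _ _).trans hp
    set c := 2 * p.1 + 2 * Real.log r with hcd
    have hc0 : 0 ≤ c := by rw [hcd]; linarith
    have hind : Integrable (fun x => (Metric.ball p.2 r).indicator f x) :=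
      hfi.indicator measurableSet_ball
    have h1 : (p.1 + 2 * Real.log r) * F - c * ∫ x in Metric.ball p.2 r, f x ≤ JJ f p := by
      rw [← integral_indicator measurableSet_ball, hFdef, ← integral_const_mul,
        ← integral_const_mul, ← integral_sub (hfi.const_mul _) (hind.const_mul _)]
      refine integral_mono ((hfi.const_mul _).sub (hind.const_mul _))
        (cs_int hf hc (cont_log p)) fun x => ?_
      simp only
      by_cases hx : x ∈ Metric.ball p.2 r
      · rw [Set.indicator_of_mem hx]
        have : (p.1 + 2 * Real.log r) * f x - c * f x = f x * (-p.1) := by rw [hcd]; ring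
        rw [this]
        refine mul_le_mul_of_nonneg_left ?_ (h0 x)
        rw [Real.le_log_iff_exp_le (LL_pos _ _)]
        unfold LL
        have : 0 ≤ Real.exp p.1 * ‖x - p.2‖ ^ 2 := by positivity
        linarith
      · rw [Set.indicator_of_notMem hx, mul_zero, sub_zero, mul_comm]
        refine mul_le_mul_of_nonneg_left ?_ (h0 x)
        rw [Real.le_log_iff_exp_le (LL_pos _ _)]
        have hx' : r ≤ ‖x - p.2‖ := by
          rw [Metric.mem_ball, dist_eq_norm, not_lt] at hx; exact hx
        have e : Real.exp (p.1 + 2 * Real.log r) = Real.exp p.1 * r ^ 2 := by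
          rw [Real.exp_add, two_mul, Real.exp_add, Real.exp_log hr, sq]
        rw [e]
        unfold LL
        have : Real.exp p.1 * r ^ 2 ≤ Real.exp p.1 * ‖x - p.2‖ ^ 2 := by gcongr
        have := Real.exp_pos (-p.1)
        linarith
    refine le_trans ?_ h1
    have h2 := mul_le_mul_of_nonneg_left (hball p.2) hc0
    have h3 : j0 = j0 / F * F := by field_simp
    have h4 : (2 * (j0 / F) - 3 * Real.log r) * F ≤ p.1 * F := by gcongr
    rw [hcd] at h2
    nlinarith
  obtain ⟨p, hp⟩ := (JJ_cont hf hc).exists_forall_le' (x₀ := (0, 0)) (by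
    rw [← Metric.cobounded_eq_cocompact]
    set M := max (max (j0 / F) (R + Real.exp (j0 / F)))
      (max (2 * (j0 / F) - 3 * Real.log r) (-Real.log r)) with hM
    have : ∀ᶠ p : ℝ × X m in Bornology.cobounded _, M < ‖p‖ :=
      (tendsto_norm_cobounded_atTop).eventually_gt_atTop M
    filter_upwards [this] with p hp
    rw [Prod.norm_def, lt_max_iff] at hp
    have m1 : j0 / F ≤ M := (le_max_left _ _).trans (le_max_left _ _)
    have m2 : R + Real.exp (j0 / F) ≤ M := (le_max_right _ _).trans (le_max_left _ _)
    have m3 : max (2 * (j0 / F) - 3 * Real.log r) (-Real.log r) ≤ M := le_max_right _ _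
    rcases hp with hp | hp
    · rw [Real.norm_eq_abs, lt_abs] at hp
      rcases hp with hp | hp
      · exact b3 p (m3.trans hp.le)
      · exact b1 p (m1.trans hp.le)
    · exact b2 p (m2.trans hp.le))
  exact ⟨p, hp⟩

lemma om_LL_none (p : ℝ × X m) (x : X m) :
    om none (Real.exp p.1 • (x - p.2))
      = (Real.exp (-p.1) - Real.exp p.1 * ‖x - p.2‖ ^ 2) / LL p x := by
  unfold om rho LL
  rw [norm_smul, Real.norm_eq_abs, abs_of_pos (Real.exp_pos _), Real.exp_neg]
  have := Real.exp_pos p.1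
  field_simp
  ring

lemma om_LL_some (p : ℝ × X m) (x : X m) (j : Fin (m + 2)) :
    om (some j) (Real.exp p.1 • (x - p.2)) = 2 * (x - p.2) j / LL p x := by
  unfold om rho LL
  rw [norm_smul, Real.norm_eq_abs, abs_of_pos (Real.exp_pos _), Real.exp_neg]
  have := Real.exp_pos p.1
  simp only [PiLp.smul_apply, smul_eq_mul]
  field_simp

lemma log_diff {a b : ℝ} (ha : 0 < a) (hb : 0 < b) : Real.log b - Real.log a ≤ (b - a) / a := by
  rw [← Real.log_div hb.ne' ha.ne']
  have := Real.log_le_sub_one_of_pos (div_pos hb ha)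
  have e : (b - a) / a = b / a - 1 := by field_simp
  rw [e]; exact this

lemma om_comp_cont (p : ℝ × X m) (a) : Continuous (fun x => om a (Real.exp p.1 • (x - p.2))) :=
  ((contDiff_om (k := 1) a).continuous).comp (by fun_prop)

lemma centering {f : X m → ℝ} (hf : Continuous f) (hc : HasCompactSupport f) (h0 : ∀ x, 0 ≤ f x)
    (hF : 0 < ∫ x, f x) : ∃ (lam : ℝ) (z : X m), 0 < lam ∧
    ∀ a, ∫ x, f x * om a (lam • (x - z)) = 0 := by
  obtain ⟨p, hp⟩ := JJ_min hf hc h0 hF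
  refine ⟨Real.exp p.1, p.2, Real.exp_pos _, ?_⟩
  have hfi : Integrable f := hf.integrable_of_hasCompactSupport hc
  have hLc : Continuous (LL p) := LL_cont.comp (by fun_prop : Continuous fun x => (p, x))
  -- general first variation
  have key : ∀ (p' : ℝ × X m) (g k : X m → ℝ) (s : ℝ), Continuous g → Continuous k →
      (∀ x, (LL p' x - LL p x) / LL p x ≤ -(s * g x) + s ^ 2 * k x) →
      0 ≤ -(s * ∫ x, f x * g x) + s ^ 2 * ∫ x, f x * k x := by
    intro p' g k s hg hk hle
    have h1 : 0 ≤ JJ f p' - JJ f p := sub_nonneg.2 (hp p')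
    unfold JJ at h1
    rw [← integral_sub (cs_int hf hc (cont_log _)) (cs_int hf hc (cont_log _))] at h1
    refine h1.trans ?_
    have ing : Integrable (fun x => -(s * (f x * g x))) := ((cs_int hf hc hg).const_mul s).neg
    rw [← integral_const_mul, ← integral_const_mul, ← integral_neg,
      ← integral_add ing ((cs_int hf hc hk).const_mul _)]
    refine integral_mono ((cs_int hf hc (cont_log _)).sub (cs_int hf hc (cont_log _)))
      (ing.add ((cs_int hf hc hk).const_mul _)) fun x => ?_
    simp only [Pi.neg_apply, Pi.add_apply]
    have h2 := (log_diff (LL_pos p x) (LL_pos p' x)).trans (hle x)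
    have h3 := mul_le_mul_of_nonneg_left h2 (h0 x)
    linarith
  intro a
  rcases a with _ | j
  · refine quad_zero (Q := ∫ x, f x * 1) fun s hs => ?_
    refine key (p.1 + s, p.2) _ _ s (om_comp_cont p none) continuous_const fun x => ?_
    rw [om_LL_none, div_le_iff₀ (LL_pos p x)]
    have e : (-(s * ((Real.exp (-p.1) - Real.exp p.1 * ‖x - p.2‖ ^ 2) / LL p x)) + s ^ 2 * 1) * LL p x
      = -(s * (Real.exp (-p.1) - Real.exp p.1 * ‖x - p.2‖ ^ 2)) + s ^ 2 * LL p x := by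
      have := (LL_pos p x).ne'
      field_simp
    rw [e]
    unfold LL
    simp only [neg_add, Real.exp_add]
    have a1 := (abs_le.1 (Real.abs_exp_sub_one_sub_id_le hs)).2
    have a2 := (abs_le.1 (Real.abs_exp_sub_one_sub_id_le (x := -s) (by rwa [abs_neg]))).2
    have p1 : 0 ≤ Real.exp p.1 * ‖x - p.2‖ ^ 2 := by positivity
    have p2 := (Real.exp_pos (-p.1)).le
    have m1 := mul_le_mul_of_nonneg_left a1 p1
    have m2 := mul_le_mul_of_nonneg_left a2 p2
    nlinarith
  · have hpos := Real.exp_pos p.1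
    have hz : Real.exp p.1 * ∫ x, f x * om (some j) (Real.exp p.1 • (x - p.2)) = 0 := by
      rw [← integral_const_mul]
      have e0 : ∀ x, Real.exp p.1 * (f x * om (some j) (Real.exp p.1 • (x - p.2)))
        = f x * (Real.exp p.1 * om (some j) (Real.exp p.1 • (x - p.2))) := by intro x; ring
      simp only [e0]
      refine quad_zero (Q := ∫ x, f x * (Real.exp p.1 / LL p x)) fun s hs => ?_
      refine key (p.1, p.2 + s • EuclideanSpace.single j (1 : ℝ)) _ _ s
        (continuous_const.mul (om_comp_cont p (some j)))
        (continuous_const.div hLc fun x => (LL_pos p x).ne') fun x => ?_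
      rw [om_LL_some]
      have e : -(s * (Real.exp p.1 * (2 * (x - p.2) j / LL p x))) + s ^ 2 * (Real.exp p.1 / LL p x)
        = (-(s * (Real.exp p.1 * (2 * (x - p.2) j))) + s ^ 2 * Real.exp p.1) / LL p x := by ring
      rw [e]
      refine le_of_eq ?_
      congr 1
      unfold LL
      simp only
      have e2 : ‖x - (p.2 + s • EuclideanSpace.single j (1 : ℝ))‖ ^ 2
          = ‖x - p.2‖ ^ 2 - 2 * s * (x - p.2) j + s ^ 2 := by
        rw [← sub_sub, norm_sub_sq_real, norm_smul, inner_smul_right]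
        rw [real_inner_comm, EuclideanSpace.inner_single_left]
        simp
        ring
      rw [e2]; ring
    rcases mul_eq_zero.1 hz with h | h
    · exact absurd h hpos.ne'
    · exact h

end BE

namespace BE

open MeasureTheory Filter Topology

variable {m : ℕ}

/-- Conformal rescaling. -/
noncomputable def TT (lam : ℝ) (z : X m) (v : X m → ℝ) (x : X m) : ℝ :=
  lam ^ ((m : ℝ) / 2) * v (lam • (x - z))

lemma cov {lam : ℝ} (hl : 0 < lam) (z : X m) (g : X m → ℝ) :
    lam ^ (m + 2) * ∫ x, g (lam • (x - z)) = ∫ x, g x := by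
  rw [integral_sub_right_eq_self (fun x => g (lam • x)) z, Measure.integral_comp_smul]
  have : Module.finrank ℝ (X m) = m + 2 := by simp
  rw [this, abs_of_pos (by positivity), smul_eq_mul, ← mul_assoc, mul_inv_cancel₀ (by positivity),
    one_mul]

lemma pd_TT {lam : ℝ} (z : X m) {v : X m → ℝ} (hv : Differentiable ℝ v) (i : Fin (m + 2))
    (x : X m) : pd i (TT lam z v) x = lam ^ ((m : ℝ) / 2) * (lam * pd i v (lam • (x - z))) := by
  have h1 : HasFDerivAt (fun x : X m => lam • (x - z)) (lam • ContinuousLinearMap.id ℝ (X m)) x :=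
    ((hasFDerivAt_id x).sub_const z).const_smul lam
  have h2 := ((hv (lam • (x - z))).hasFDerivAt.comp x h1).const_mul (lam ^ ((m : ℝ) / 2))
  have h3 : fderiv ℝ (TT lam z v) x = _ := h2.fderiv
  unfold pd
  rw [h3]
  simp

lemma lam_sq {lam : ℝ} (hl : 0 < lam) : (lam ^ ((m : ℝ) / 2)) ^ 2 = lam ^ m := by
  rw [← Real.rpow_natCast, ← Real.rpow_mul hl.le, ← Real.rpow_natCast]
  congr 1; push_cast; ring

lemma lam_qq (hm : 1 ≤ m) {lam : ℝ} (hl : 0 < lam) :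
    (lam ^ ((m : ℝ) / 2)) ^ (qq m) = lam ^ (m + 2) := by
  rw [← Real.rpow_mul hl.le, ← Real.rpow_natCast]
  congr 1
  have : (m : ℝ) ≠ 0 := by positivity
  unfold qq; push_cast; field_simp

lemma GE_TT {lam : ℝ} (hl : 0 < lam) (z : X m) {v : X m → ℝ} (hv : Differentiable ℝ v) :
    GE (TT lam z v) = GE v := by
  unfold GE
  simp only [pd_TT z hv, mul_pow, lam_sq hl, ← Finset.mul_sum]
  have e : ∀ x, lam ^ m * (lam ^ 2 * ∑ i, pd i v (lam • (x - z)) ^ 2)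
    = lam ^ (m + 2) * ∑ i, pd i v (lam • (x - z)) ^ 2 := by intro x; ring
  simp only [e]
  rw [integral_const_mul]
  exact cov hl z (fun y => ∑ i, pd i v y ^ 2)

lemma GE_const_mul {v : X m → ℝ} (hv : Differentiable ℝ v) (s : ℝ) :
    GE (fun x => s * v x) = s ^ 2 * GE v := by
  unfold GE
  simp only [fun i x => pd_const_mul i s (hv x), mul_pow, ← Finset.mul_sum]
  rw [integral_const_mul]

lemma TT_inv {lam : ℝ} (hl : 0 < lam) (z : X m) (u : X m → ℝ) :
    TT lam z (TT lam⁻¹ (-(lam • z)) u) = u := by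
  ext x
  unfold TT
  rw [← mul_assoc, ← Real.mul_rpow hl.le (by positivity), mul_inv_cancel₀ hl.ne', Real.one_rpow,
    one_mul]
  congr 1
  rw [sub_neg_eq_add, ← smul_add, sub_add_cancel, smul_smul, inv_mul_cancel₀ hl.ne', one_smul]

lemma TT_contDiff {lam : ℝ} (z : X m) {v : X m → ℝ} (hv : ContDiff ℝ 1 v) :
    ContDiff ℝ 1 (TT lam z v) := by
  have h : ContDiff ℝ 1 (fun x : X m => lam • (x - z)) := by fun_prop
  exact contDiff_const.mul (hv.comp h)

lemma TT_compact {lam : ℝ} (hl : 0 < lam) (z : X m) {v : X m → ℝ} (hv : HasCompactSupport v) :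
    HasCompactSupport (TT lam z v) := by
  have h : HasCompactSupport (fun x => v (lam • (x - z))) :=
    hv.comp_homeomorph ((Homeomorph.subRight z).trans (Homeomorph.smulOfNeZero lam hl.ne'))
  exact h.mul_left

lemma center_lem (hm : 1 ≤ m) {u : X m → ℝ} (hu : ContDiff ℝ 1 u) (hc : HasCompactSupport u)
    (hN : 0 < ∫ x, |u x| ^ (qq m)) :
    ∃ (s lam : ℝ) (z : X m) (U : X m → ℝ), 0 < s ∧ 0 < lam ∧
      s ^ 2 = (∫ x, |u x| ^ (qq m)) ^ (2 / qq m) ∧ Adm U ∧ Iq U = 1 ∧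
      (∀ a, ∫ x, om a x * |U x| ^ (qq m) ∂(sig m) = 0) ∧
      (u = fun x => s * TT lam z (fun y => phi y * U y) x) ∧ GE u = s ^ 2 * En U := by
  have hq := two_lt_qq hm
  set q := qq m with hqd
  set N := ∫ x, |u x| ^ q with hNd
  have hfc : Continuous (fun x => |u x| ^ q) := cont_rpow hm hu.continuous
  have hfs : HasCompactSupport (fun x => |u x| ^ q) := by
    refine hc.comp_left (g := fun t : ℝ => |t| ^ q) ?_
    simp [Real.zero_rpow (by linarith : q ≠ 0)]
  obtain ⟨lam, z, hl, hcen⟩ := centering hfc hfs (fun x => by positivity) hN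
  set s := N ^ (1 / q) with hs
  have hsp : 0 < s := by positivity
  have hsq : s ^ q = N := by
    rw [hs, ← Real.rpow_mul hN.le, one_div, inv_mul_cancel₀ (by linarith), Real.rpow_one]
  set v := TT lam⁻¹ (-(lam • z)) u with hv
  have hvu : TT lam z v = u := TT_inv hl z u
  have hvc : ContDiff ℝ 1 v := TT_contDiff _ hu
  have hvs : HasCompactSupport v := TT_compact (by positivity) _ hc
  set U : X m → ℝ := fun y => s⁻¹ * (v y * (phi y)⁻¹) with hU
  have hphi : ContDiff ℝ 1 (fun y : X m => (phi y)⁻¹) :=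
    contDiff_phi.inv fun y => (phi_pos y).ne'
  have hUc : ContDiff ℝ 1 U := contDiff_const.mul (hvc.mul hphi)
  have hUs : HasCompactSupport U := by
    have : HasCompactSupport (fun y => v y * (phi y)⁻¹) := hvs.mul_right
    exact this.mul_left
  have hUa := Adm.of_compact hUc hUs
  have hphU : ∀ y, phi y * U y = s⁻¹ * v y := by
    intro y; simp only [hU]; have := (phi_pos y).ne'; field_simp
  have huq : ∀ x, |u x| ^ q = lam ^ (m + 2) * |v (lam • (x - z))| ^ q := by
    intro x
    rw [← hvu]; unfold TT
    rw [abs_mul, Real.mul_rpow (abs_nonneg _) (abs_nonneg _), abs_of_pos (by positivity), hqd,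
      lam_qq hm hl]
  have hUq : ∀ x, rho x ^ (m + 2) * |U x| ^ q = (s ^ q)⁻¹ * |v x| ^ q := by
    intro x
    have e0 : phi x * |U x| = |phi x * U x| := by rw [abs_mul (phi x), abs_of_pos (phi_pos x)]
    rw [← phi_qq hm, ← hqd, ← Real.mul_rpow (phi_pos x).le (abs_nonneg _), e0, hphU, abs_mul, Real.mul_rpow (abs_nonneg _) (abs_nonneg _),
      abs_of_pos (by positivity : 0 < s⁻¹), Real.inv_rpow hsp.le]
  have hIv : ∫ x, |v x| ^ q = N := by
    rw [← cov hl z (fun y => |v y| ^ q), ← integral_const_mul, hNd]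
    exact integral_congr_ae (Eventually.of_forall fun x => (huq x).symm)
  refine ⟨s, lam, z, U, hsp, hl, ?_, hUa, ?_, ?_, ?_, ?_⟩
  · rw [hs, ← Real.rpow_natCast, ← Real.rpow_mul hN.le]; congr 1; push_cast; ring
  · unfold Iq
    rw [integral_sig]
    rw [← hqd]
    simp only [hUq]
    rw [integral_const_mul, hIv, hsq]
    field_simp
  · intro a
    rw [integral_sig]
    have e : ∀ x, rho x ^ (m + 2) * (om a x * |U x| ^ q) = (s ^ q)⁻¹ * (om a x * |v x| ^ q) := by
      intro x
      rw [mul_left_comm, hUq]; ring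
    simp only [e]
    rw [integral_const_mul, ← cov hl z (fun y => om a y * |v y| ^ q), ← integral_const_mul]
    have h3 : ∫ x, lam ^ (m + 2) * (om a (lam • (x - z)) * |v (lam • (x - z))| ^ q) = 0 := by
      rw [← hcen a]
      refine integral_congr_ae (Eventually.of_forall fun x => ?_)
      simp only [huq]; ring
    rw [h3, mul_zero]
  · simp only [hphU]
    nth_rewrite 1 [← hvu]
    ext x
    unfold TT
    field_simp
  · have h1 : GE u = GE v := by
      nth_rewrite 1 [← hvu]
      exact GE_TT hl z (hvc.differentiable one_ne_zero)
    have h2 := conf hm hUa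
    simp only [hphU] at h2
    rw [GE_const_mul (hvc.differentiable one_ne_zero)] at h2
    rw [h1, ← h2]
    field_simp

lemma SS_pos (hm : 1 ≤ m) : 0 < SS m := by
  have := kap_pos hm
  have : 0 < (sig m).real Set.univ := sig_pos
  unfold SS; positivity

lemma En_nonneg (hm : 1 ≤ m) (U : X m → ℝ) : 0 ≤ En U := by
  have h1 := D_self_nonneg U
  have h2 := kap_pos hm
  have h3 : 0 ≤ ∫ x, U x ^ 2 ∂(sig m) := integral_nonneg fun x => sq_nonneg _
  unfold En; positivity

/-- The sharp Sobolev inequality. -/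
lemma sharp (hm : 1 ≤ m) {U : X m → ℝ} (hU : Adm U) : SS m * Iq U ^ (2 / qq m) ≤ En U := by
  have hq := two_lt_qq hm
  obtain ⟨S₀, hS0, hsob⟩ := sob_weak hm
  set E : Set ℝ := {T | 0 < T ∧ T ≤ SS m ∧ ∀ V : X m → ℝ, Adm V → T * Iq V ^ (2 / qq m) ≤ En V}
    with hE
  have hSSp := SS_pos hm
  have hmem : min S₀ (SS m) ∈ E := by
    refine ⟨by positivity, min_le_right _ _, fun V hV => le_trans ?_ (hsob V hV)⟩
    have := Iq_nonneg V
    gcongr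
    exact min_le_left _ _
  have hbd : BddAbove E := ⟨SS m, fun T hT => hT.2.1⟩
  set T := sSup E with hTd
  have hTp : 0 < T := lt_of_lt_of_le hmem.1 (le_csSup hbd hmem)
  have hTle : T ≤ SS m := csSup_le ⟨_, hmem⟩ fun T hT => hT.2.1
  have hTs : ∀ V : X m → ℝ, Adm V → T * Iq V ^ (2 / qq m) ≤ En V := by
    intro V hV
    rcases (Real.rpow_nonneg (Iq_nonneg V) (2 / qq m)).eq_or_lt with h | h
    · rw [← h, mul_zero]; exact En_nonneg hm V
    · rw [← le_div_iff₀ h]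
      refine csSup_le ⟨_, hmem⟩ fun T' hT' => ?_
      rw [le_div_iff₀ h]
      exact hT'.2.2 V hV
  rcases hTle.eq_or_lt with h | h
  · rw [← h]; exact hTs U hU
  exfalso
  obtain ⟨ε₁, δ, he, hδ, hQ⟩ := Qlem hm hTp hTs
  set ε := min ε₁ (SS m - T) with hε
  have hεp : 0 < ε := lt_min he (by linarith)
  have hnot : ¬ ∀ V : X m → ℝ, ContDiff ℝ 1 V → HasCompactSupport V →
      (T + ε) * Iq V ^ (2 / qq m) ≤ En V := by
    intro hall
    have : T + ε ∈ E := ⟨by positivity, by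
      have := min_le_right ε₁ (SS m - T); rw [← hε] at this; linarith, fun V hV => sob_ext hm hall hV⟩
    have := le_csSup hbd this
    linarith
  push Not at hnot
  obtain ⟨V, hV, hVs, hlt⟩ := hnot
  have hVa := Adm.of_compact hV hVs
  have hI0 : 0 < Iq V := by
    rcases (Iq_nonneg V).eq_or_lt with h0 | h0
    · rw [← h0, Real.zero_rpow (by positivity), mul_zero] at hlt
      exact absurd (En_nonneg hm V) (not_le.2 hlt)
    · exact h0
  have hu : ContDiff ℝ 1 (fun y => phi y * V y) := contDiff_phi.mul hV
  have hus : HasCompactSupport (fun y => phi y * V y) := hVs.mul_left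
  have hIe := Iq_eq hm V
  obtain ⟨s, lam, z, U', hs, hl, hs2, hU'a, hU'I, hU'c, -, hGE⟩ := center_lem hm hu hus (by
    rw [hIe]; exact hI0)
  rw [hIe] at hs2
  rw [conf hm hVa] at hGE
  rw [hGE, ← hs2, mul_comm (T + ε)] at hlt
  have hlt2 : En U' < T + ε := lt_of_mul_lt_mul_left hlt (sq_nonneg s)
  have h1 : ε ≤ ε₁ := min_le_left _ _
  have h2 : ε ≤ SS m - T := min_le_right _ _
  obtain ⟨c, hcc⟩ := hQ U' hU'a hU'I hU'c (by linarith)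
  have := mul_nonneg hδ.le (En_nonneg hm fun x => U' x - c)
  linarith

lemma bubble_eq {lam : ℝ} (hl : 0 < lam) (z : X m) (k : ℝ) (x : X m) :
    k * TT lam z phi x = (k * lam ^ ((m : ℝ) / 2) * 2 ^ ((m : ℝ) / 2))
      * (1 + lam ^ 2 * ‖x - z‖ ^ 2) ^ (-((m : ℝ) / 2)) := by
  unfold TT phi rho
  rw [norm_smul, Real.norm_eq_abs, abs_of_pos hl, mul_pow, Real.div_rpow (by norm_num)
    (by positivity), Real.rpow_neg (by positivity)]
  ring

/-- The main estimate. -/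
theorem main_est (hm : 1 ≤ m) : ∃ C : ℝ, 0 < C ∧ ∀ u : X m → ℝ, ContDiff ℝ 1 u →
    HasCompactSupport u → ∃ (c lam : ℝ) (z : X m), 0 < lam ∧
    C * ∫ x, ∑ i, (pd i u x
        - pd i (fun y => c * (1 + lam ^ 2 * ‖y - z‖ ^ 2) ^ (-((m : ℝ) / 2))) x) ^ 2
      ≤ GE u - SS m * (∫ x, |u x| ^ (qq m)) ^ (2 / qq m) := by
  have hq := two_lt_qq hm
  have hSSp := SS_pos hm
  obtain ⟨ε₁, δ, he, hδ, hQ⟩ := Qlem hm hSSp (fun V hV => sharp hm hV)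
  have hd : 0 < SS m / ε₁ + 1 := by positivity
  have hd1 : 1 / (SS m / ε₁ + 1) ≤ 1 := by
    rw [div_le_one hd]; have : 0 < SS m / ε₁ := by positivity
    linarith
  refine ⟨min δ (1 / (SS m / ε₁ + 1)), by positivity, fun u hu hc => ?_⟩
  set C := min δ (1 / (SS m / ε₁ + 1)) with hC
  have hC0 : 0 < C := by positivity
  have hCδ : C ≤ δ := min_le_left _ _
  have hC1 : C ≤ 1 / (SS m / ε₁ + 1) := min_le_right _ _
  have hzero : ∀ x : X m, ∀ i, pd i (fun y : X m => 0 * (1 + (1:ℝ) ^ 2 * ‖y - 0‖ ^ 2)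
      ^ (-((m : ℝ) / 2))) x = 0 := by
    intro x i
    simp only [zero_mul]
    exact pd_const i 0 x
  have hNn : 0 ≤ ∫ x, |u x| ^ (qq m) := integral_nonneg fun x => by positivity
  have hGEn : 0 ≤ GE u := integral_nonneg fun x => Finset.sum_nonneg fun i _ => sq_nonneg _
  have hz0 : ∫ x, ∑ i, (pd i u x - pd i (fun y => 0 * (1 + (1:ℝ) ^ 2 * ‖y - 0‖ ^ 2)
      ^ (-((m : ℝ) / 2))) x) ^ 2 = GE u := by
    simp only [hzero]
    simp only [sub_zero]; rfl
  rcases hNn.eq_or_lt with h0 | h0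
  · refine ⟨0, 1, 0, one_pos, ?_⟩
    rw [hz0, ← h0, Real.zero_rpow (by positivity), mul_zero, sub_zero]
    nlinarith
  obtain ⟨s, lam, z, U, hs, hl, hs2, hUa, hUI, hUc, hue, hGE⟩ := center_lem hm hu hc h0
  rw [← hs2, hGE]
  rcases le_or_gt (En U - SS m) ε₁ with h1 | h1
  · obtain ⟨c, hcc⟩ := hQ U hUa hUI hUc h1
    refine ⟨(s * c) * lam ^ ((m : ℝ) / 2) * 2 ^ ((m : ℝ) / 2), lam, z, hl, ?_⟩
    simp only [← bubble_eq hl z]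
    have hdv : Differentiable ℝ (fun x => (s * c) * TT lam z phi x) :=
      (contDiff_const.mul (TT_contDiff z contDiff_phi)).differentiable one_ne_zero
    have hdu : Differentiable ℝ u := hu.differentiable one_ne_zero
    have e1 : ∫ x, ∑ i, (pd i u x - pd i (fun y => s * c * TT lam z phi y) x) ^ 2
        = GE (fun x => u x - s * c * TT lam z phi x) := by
      unfold GE
      simp only [fun i x => pd_sub i (hdu x) (hdv x)]
    have e2 : (fun x => u x - s * c * TT lam z phi x)
        = fun x => s * TT lam z (fun y => phi y * (U y - c)) x := by
      rw [hue]; ext x; unfold TT; ring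
    have hUc' : Adm (fun y => U y - c) := hUa.sub (Adm.const c)
    have hcd : ContDiff ℝ 1 (fun y => phi y * (U y - c)) := contDiff_phi.mul hUc'.cd
    rw [e1, e2, GE_const_mul ((TT_contDiff z hcd).differentiable one_ne_zero),
      GE_TT hl z (hcd.differentiable one_ne_zero), conf hm hUc']
    have h2 : C * En (fun y => U y - c) ≤ En U - SS m :=
      (mul_le_mul_of_nonneg_right hCδ (En_nonneg hm _)).trans hcc
    have h3 := mul_le_mul_of_nonneg_left h2 (sq_nonneg s)
    linarith
  · refine ⟨0, 1, 0, one_pos, ?_⟩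
    rw [hz0, hGE]
    have h2 : C * En U ≤ En U - SS m := by
      calc C * En U ≤ 1 / (SS m / ε₁ + 1) * En U := by
            gcongr; exact En_nonneg hm U
        _ ≤ _ := by
          rw [one_div, ← div_eq_inv_mul, div_le_iff₀ hd]
          have : SS m ≤ SS m / ε₁ * (En U - SS m) := by
            rw [div_mul_eq_mul_div, le_div_iff₀ he]; gcongr
          nlinarith
    have h3 := mul_le_mul_of_nonneg_left h2 (sq_nonneg s)
    linarith

end BE

namespace BE

open MeasureTheory Filter Topology

variable {m : ℕ}

lemma gam_t {r : ℝ} (hr : 0 < r) :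
    ∫ t in Set.Ioi (0 : ℝ), t ^ (m + 1) * Real.exp (-(r * t)) = (1 / r) ^ (m + 2) * Real.Gamma (m + 2) := by
  have h := Real.integral_rpow_mul_exp_neg_mul_Ioi (a := (m : ℝ) + 2) (by positivity) hr
  have e : ((m : ℝ) + 2 - 1) = ((m + 1 : ℕ) : ℝ) := by push_cast; ring
  have e2 : ((m : ℝ) + 2) = ((m + 2 : ℕ) : ℝ) := by push_cast; ring
  rw [e] at h
  simp only [Real.rpow_natCast] at h
  rw [h]
  congr 1
  rw [e2, Real.rpow_natCast]

lemma vol_key : Real.Gamma (m + 2) * ∫ x : X m, (1 / (1 + ‖x‖ ^ 2)) ^ (m + 2)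
    = π ^ (((m : ℝ) + 2) / 2) * Real.Gamma (((m : ℝ) + 2) / 2) := by
  have hG : 0 < Real.Gamma ((m : ℝ) + 2) := Real.Gamma_pos_of_pos (by positivity)
  set F : X m → ℝ → ℝ := fun x t => t ^ (m + 1) * Real.exp (-((1 + ‖x‖ ^ 2) * t)) with hF
  have hx : ∀ x : X m, ∫ t in Set.Ioi (0 : ℝ), F x t
      = (1 / (1 + ‖x‖ ^ 2)) ^ (m + 2) * Real.Gamma (m + 2) := fun x => gam_t (by positivity)
  have hcont : Continuous (Function.uncurry F) := by
    simp only [hF, Function.uncurry_def]; fun_prop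
  have hrho : Integrable (fun x : X m => (1 / (1 + ‖x‖ ^ 2)) ^ (m + 2)) := by
    have h := (integrable_rho_pow (m := m) (m + 2) (by omega)).const_mul ((1 / 2 : ℝ) ^ (m + 2))
    refine h.congr (Eventually.of_forall fun x => ?_)
    simp only [rho]
    rw [← mul_pow]; congr 1; ring
  have hInt0 : Integrable (Function.uncurry F)
      ((volume : Measure (X m)).prod (volume.restrict (Set.Ioi (0 : ℝ)))) := by
    rw [integrable_prod_iff hcont.aestronglyMeasurable]
    constructor
    · refine Eventually.of_forall fun x => ?_
      have : ∫ t in Set.Ioi (0 : ℝ), F x t ≠ 0 := by rw [hx]; positivity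
      exact not_imp_comm.1 integral_undef this
    · refine (hrho.mul_const (Real.Gamma (m + 2))).congr (Eventually.of_forall fun x => ?_)
      simp only
      rw [← hx]
      refine setIntegral_congr_fun measurableSet_Ioi fun t ht => ?_
      have ht' : 0 < t := ht
      simp only [Function.uncurry, hF, Real.norm_eq_abs]
      rw [abs_of_nonneg (by positivity)]
  have hsw := integral_integral_swap hInt0
  simp only [hx] at hsw
  rw [integral_mul_const, mul_comm] at hsw
  rw [hsw]
  have h2 : ∀ t ∈ Set.Ioi (0 : ℝ), ∫ x : X m, F x t
      = π ^ (((m : ℝ) + 2) / 2) * (t ^ (((m : ℝ) + 2) / 2 - 1) * Real.exp (-(1 * t))) := by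
    intro t ht
    have ht' : 0 < t := ht
    have e : ∀ x : X m, F x t = (t ^ (m + 1) * Real.exp (-(1 * t))) * Real.exp (-t * ‖x‖ ^ 2) := by
      intro x
      simp only [hF]
      rw [mul_assoc, ← Real.exp_add]
      congr 2; ring
    simp only [e]
    rw [integral_const_mul, GaussianFourier.integral_rexp_neg_mul_sq_norm ht']
    have hf : (Module.finrank ℝ (X m) : ℝ) = m + 2 := by simp
    rw [hf, Real.div_rpow Real.pi_pos.le ht'.le]
    have e3 : t ^ (m + 1) = t ^ (((m : ℝ) + 2) / 2 - 1) * t ^ (((m : ℝ) + 2) / 2) := by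
      rw [← Real.rpow_add ht', ← Real.rpow_natCast]
      congr 1; push_cast; ring
    rw [e3]
    have := Real.rpow_pos_of_pos ht' (((m : ℝ) + 2) / 2)
    field_simp
  rw [setIntegral_congr_fun measurableSet_Ioi h2, integral_const_mul,
    Real.integral_rpow_mul_exp_neg_mul_Ioi (by positivity) one_pos]
  simp

lemma vol : (sig m).real Set.univ
    = 2 * π ^ (((m : ℝ) + 3) / 2) / Real.Gamma (((m : ℝ) + 3) / 2) := by
  have h1 : (sig m).real Set.univ = 2 ^ (m + 2) * ∫ x : X m, (1 / (1 + ‖x‖ ^ 2)) ^ (m + 2) := by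
    have h := integral_sig (m := m) (fun _ => 1)
    rw [integral_const, smul_eq_mul, mul_one] at h
    rw [h, ← integral_const_mul]
    refine integral_congr_ae (Eventually.of_forall fun x => ?_)
    simp only [rho, mul_one]
    rw [← mul_pow]; congr 1; ring
  have hk := vol_key (m := m)
  have hd := Real.Gamma_mul_Gamma_add_half (((m : ℝ) + 2) / 2)
  have e1 : ((m : ℝ) + 2) / 2 + 1 / 2 = ((m : ℝ) + 3) / 2 := by ring
  have e2 : 2 * (((m : ℝ) + 2) / 2) = (m : ℝ) + 2 := by ring
  rw [e1, e2] at hd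
  have hG : 0 < Real.Gamma ((m : ℝ) + 2) := Real.Gamma_pos_of_pos (by positivity)
  have hG3 : 0 < Real.Gamma (((m : ℝ) + 3) / 2) := Real.Gamma_pos_of_pos (by positivity)
  rw [h1, eq_div_iff hG3.ne']
  refine mul_left_cancel₀ hG.ne' ?_
  have e3 : (2 : ℝ) ^ (m + 2) * 2 ^ (1 - ((m : ℝ) + 2)) = 2 := by
    rw [← Real.rpow_natCast, ← Real.rpow_add two_pos]
    push_cast
    have : (m : ℝ) + 2 + (1 - (m + 2)) = 1 := by ring
    rw [this, Real.rpow_one]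
  have e4 : π ^ (((m : ℝ) + 3) / 2) = π ^ (((m : ℝ) + 2) / 2) * √π := by
    rw [Real.sqrt_eq_rpow, ← Real.rpow_add Real.pi_pos]; congr 1; ring
  set I := ∫ x : X m, (1 / (1 + ‖x‖ ^ 2)) ^ (m + 2)
  calc _ = 2 ^ (m + 2) * (Real.Gamma (m + 2) * I) * Real.Gamma (((m : ℝ) + 3) / 2) := by ring
    _ = 2 ^ (m + 2) * π ^ (((m : ℝ) + 2) / 2)
        * (Real.Gamma (((m : ℝ) + 2) / 2) * Real.Gamma (((m : ℝ) + 3) / 2)) := by rw [hk]; ring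
    _ = ((2 : ℝ) ^ (m + 2) * 2 ^ (1 - ((m : ℝ) + 2))) * Real.Gamma (m + 2)
        * (π ^ (((m : ℝ) + 2) / 2) * √π) := by rw [hd]; ring
    _ = _ := by rw [e3, e4]; ring

end BE

theorem bianchi_egnell_stability
    (n : ℕ) (hn : 3 ≤ n) :
    ∃ C > (0 : ℝ), ∀ u : EuclideanSpace ℝ (Fin n) → ℝ,
      ContDiff ℝ (⊤ : ℕ∞) u → HasCompactSupport u →
      (∫ x, ∑ i, (fderiv ℝ u x (EuclideanSpace.single i 1)) ^ 2)
          - (((n : ℝ) * ((n : ℝ) - 2) / 4)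
              * (2 * π ^ (((n : ℝ) + 1) / 2) / Real.Gamma (((n : ℝ) + 1) / 2))
                  ^ ((2 : ℝ) / n))
            * (∫ x, |u x| ^ ((2 * n : ℝ) / ((n : ℝ) - 2)))
                ^ (((n : ℝ) - 2) / n)
        ≥ C * sInf { r : ℝ |
            ∃ (c lam : ℝ) (x₀ : EuclideanSpace ℝ (Fin n)), 0 < lam ∧
              r = ∫ x, ∑ i,
                (fderiv ℝ u x (EuclideanSpace.single i 1)
                  - fderiv ℝ
                      (fun y => c * (1 + lam ^ 2 * ‖y - x₀‖ ^ 2)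
                          ^ (-(((n : ℝ) - 2) / 2))) x
                      (EuclideanSpace.single i 1)) ^ 2 } := by
  obtain ⟨m, rfl⟩ : ∃ m, n = m + 2 := ⟨n - 2, by omega⟩
  have hm : 1 ≤ m := by omega
  have hm0 : (m : ℝ) ≠ 0 := by
    have : (1 : ℝ) ≤ m := by exact_mod_cast hm
    linarith
  have hm2 : (m : ℝ) + 2 ≠ 0 := by positivity
  obtain ⟨C, hC, hmain⟩ := BE.main_est hm
  refine ⟨C, hC, fun u hu hc => ?_⟩
  obtain ⟨c, lam, z, hl, h⟩ := hmain u (hu.of_le (by exact_mod_cast le_top)) hc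
  have e1 : ((m + 2 : ℕ) : ℝ) - 2 = m := by push_cast; ring
  have e2 : (((m + 2 : ℕ) : ℝ) + 1) / 2 = ((m : ℝ) + 3) / 2 := by push_cast; ring
  have e3 : (2 * ((m + 2 : ℕ) : ℝ)) / (m : ℝ) = BE.qq m := by unfold BE.qq; push_cast; ring
  have e4 : (m : ℝ) / ((m + 2 : ℕ) : ℝ) = 2 / BE.qq m := by
    unfold BE.qq; push_cast; field_simp
  have e5 : (2 : ℝ) / ((m + 2 : ℕ) : ℝ) = 1 - 2 / BE.qq m := by
    unfold BE.qq; push_cast; field_simp; ring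
  have e6 : ((m + 2 : ℕ) : ℝ) * m / 4 = BE.kap m := by unfold BE.kap; push_cast; ring
  rw [e1, e2, e3, e4, e5, e6, ← BE.vol]
  refine le_trans ?_ h
  refine mul_le_mul_of_nonneg_left (csInf_le ⟨0, ?_⟩ ⟨c, lam, z, hl, rfl⟩) hC.le
  rintro r ⟨c', lam', z', -, rfl⟩
  exact MeasureTheory.integral_nonneg fun x => Finset.sum_nonneg fun i _ => sq_nonneg _
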